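/- Case B2: Let l1, l2 be distinct odd primes with l1 ≡ 3 (mod 4) and l1 > 3, let r1, r2 ≥ 1, and let N = l1^{r1} l2^{r2}. Assume the multiplicative order of p modulo l1^{r1} is φ(l1^{r1})/2, the multiplicative order of p modulo l2^{r2} is φ(l2^{r2}), and f = φ(N)/2. Set h1 = h(Q(√-l1)). If the Legendre symbol (l2/l1) = 1 then G(χ) = p^{f/2}. If (l2/l1) = -1 then there exist integers a, b such that 4p^{h1} = a² + l1 b², a ≡ -2 p^{(l1-1+2h1)/4} (mod l1), and G(χ) = p^{f/2 - h1} ((a + b √-l1)/2)². -/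

import Mathlib

open Complex Polynomial IntermediateField

/-- The complex primitive `p`-th root of unity `exp(2πi/p)`. -/
noncomputable def zetaP (p : ℕ) : ℂ := Complex.exp (2 * Real.pi * Complex.I / p)

/-- The Gauss sum `G(χ^λ) = ∑_{x ∈ F, x ≠ 0} χ^λ(x) ζ_p^{T(x)}`, where
`T` is the trace map from `F` down to `ZMod p`. -/
noncomputable def gaussSumN (p : ℕ) {F : Type} [Field F] [Fintype F] [Algebra (ZMod p) F]
    (χ : MulChar F ℂ) (lam : ℕ) : ℂ :=
  letI : DecidableEq F := Classical.decEq F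
  ∑ x ∈ Finset.univ.filter (fun x : F => x ≠ 0),
    (χ ^ lam) x * zetaP p ^ (Algebra.trace (ZMod p) F x).val

/-- `√-m = i√m ∈ ℂ`. -/
noncomputable def sqrtNeg (m : ℕ) : ℂ := Real.sqrt m * Complex.I

theorem sqrtNeg_sq (m : ℕ) : sqrtNeg m ^ 2 = -(m : ℂ) := by
  have h : ((Real.sqrt m : ℝ) : ℂ) ^ 2 = ((m : ℝ) : ℂ) := by
    rw [← Complex.ofReal_pow, Real.sq_sqrt (by positivity)]
  simp only [sqrtNeg, mul_pow, Complex.I_sq, h]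
  push_cast
  ring

theorem isIntegral_sqrtNeg (m : ℕ) : IsIntegral ℚ (sqrtNeg m) := by
  refine ⟨X ^ 2 + C (m : ℚ), monic_X_pow_add_C _ (by norm_num), ?_⟩
  simp [sqrtNeg_sq]

/-- The class number `h(ℚ(√-m))` of the quadratic field `ℚ(√-m) ⊆ ℂ`. -/
noncomputable def classNumSqrtNeg (m : ℕ) : ℕ :=
  haveI : FiniteDimensional ℚ ℚ⟮sqrtNeg m⟯ :=
    IntermediateField.adjoin.finiteDimensional (isIntegral_sqrtNeg m)
  haveI : CharZero ℚ⟮sqrtNeg m⟯ :=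
    charZero_of_injective_algebraMap (algebraMap ℚ ℚ⟮sqrtNeg m⟯).injective
  haveI : NumberField ℚ⟮sqrtNeg m⟯ := ⟨⟩
  NumberField.classNumber ℚ⟮sqrtNeg m⟯

/-- `√p* = √p` if `p ≡ 1 (mod 4)` and `i√p` if `p ≡ 3 (mod 4)`. -/
noncomputable def sqrtPStar (p : ℕ) : ℂ :=
  if p % 4 = 1 then (Real.sqrt p : ℂ) else (Real.sqrt p : ℂ) * Complex.I

/-!
Since `p` has index two modulo `N` and is a square modulo `l₁`, the subgroup it generates is the
kernel of the quadratic character modulo `l₁`. It fixes `G(χ)`, which is therefore an integer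
`(t + w √-l₁) / 2` of `ℚ(√-l₁)`, of norm `p ^ f`. At a place above `p`, Stickelberger's theorem
gives `N v(G(χ))` as a sum of residues modulo `N` over a coset of `⟨p⟩`. That sum is a first moment
of the quadratic character, which the class number formula turns into `h₁`, and the outcome is that
the exponent of `p` in `G(χ)` is `f / 2 ± h₁ (1 - (l₂ / l₁)) / 2`. On the other hand the `h₁`-th
power of a prime above `p` is generated by some `α = (a + b √-l₁) / 2` with `4 p ^ h₁ = a² + l₁ b²`.
Comparing valuations at both conjugate places shows that `G(χ)` is `± p ^ (f / 2)` or
`± p ^ (f / 2 - h₁) α²`. The sign is read off modulo a place above `l₁`, where `χ` becomes congruent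
to a character of order a power of `l₂`, whose Gauss sum is `p ^ (f / 2)` because some power of `p`
is `-1` modulo `l₂ ^ r₂`. The congruence for `a` holds after replacing `α` by `-α` if necessary,
because `α²` is unchanged.
-/

/-! ### Places above a rational prime -/

section ValuationSubring

variable {K : Type*} [Field K]

theorem exists_valuationSubring_natCast_lt_one [CharZero K] {p : ℕ} (hp : p ≠ 1) :
    ∃ A : ValuationSubring K, A.valuation (p : K) < 1 := by
  let S : Subring K := (Int.castRingHom K).range
  have hspan : Ideal.span {(p : S)} ≠ ⊤ := by
    rw [Ne, Ideal.span_singleton_eq_top]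
    rintro hunit
    obtain ⟨⟨_, n, rfl⟩, hn⟩ := hunit.exists_right_inv
    have hpn : (p : ℤ) * n = 1 := by
      have := congrArg Subtype.val hn
      simp only [Subring.coe_mul, Subring.coe_natCast, Subring.coe_one, eq_intCast] at this
      exact_mod_cast this
    exact hp (by exact_mod_cast Int.eq_one_of_mul_eq_one_right (Int.natCast_nonneg p) hpn)
  obtain ⟨A, -, hA⟩ := Ideal.image_subset_nonunits_valuationSubring (Ideal.span {(p : S)}) hspan
  have hpA : ((p : S) : K) ∈ A.nonunits :=
    hA ⟨(p : S), Ideal.mem_span_singleton_self _, rfl⟩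
  exact ⟨A, by simpa [ValuationSubring.mem_nonunits_iff] using hpA⟩

variable (A : ValuationSubring K)

theorem valuation_le_one_of_isIntegral {z : K} (hz : IsIntegral ℤ z) : A.valuation z ≤ 1 := by
  rw [A.valuation_le_one_iff]
  obtain ⟨y, rfl⟩ := IsIntegrallyClosed.isIntegral_iff.mp (hz.tower_top : IsIntegral A z)
  exact y.2

theorem valuation_intCast_le_one (n : ℤ) : A.valuation (n : K) ≤ 1 :=
  valuation_le_one_of_isIntegral A (isIntegral_algebraMap (R := ℤ) (x := n))

theorem valuation_intCast_eq_one_of_isCoprime {m n : ℤ} (hm : A.valuation (m : K) < 1)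
    (hmn : IsCoprime m n) : A.valuation (n : K) = 1 := by
  refine (valuation_intCast_le_one A n).antisymm (le_of_not_gt fun hn ↦ ?_)
  obtain ⟨a, b, hab⟩ := hmn
  have hlt : A.valuation ((a : K) * m + b * n) < 1 := by
    refine Valuation.map_add_lt _ ?_ ?_ <;> rw [map_mul]
    · exact mul_lt_one_of_nonneg_of_lt_one_right (valuation_intCast_le_one A a) zero_le hm
    · exact mul_lt_one_of_nonneg_of_lt_one_right (valuation_intCast_le_one A b) zero_le hn
  rw [show (a : K) * m + b * n = 1 by exact_mod_cast congrArg (Int.cast : ℤ → K) hab,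
    map_one] at hlt
  exact lt_irrefl _ hlt

theorem valuation_intCast_eq_one_of_not_dvd {p : ℕ} (hp : p.Prime)
    (hA : A.valuation (p : K) < 1) {n : ℤ} (hn : ¬ (p : ℤ) ∣ n) : A.valuation (n : K) = 1 :=
  valuation_intCast_eq_one_of_isCoprime A (m := p) (by exact_mod_cast hA)
    ((Prime.coprime_iff_not_dvd (Nat.prime_iff_prime_int.mp hp)).mpr hn)

theorem valuation_natCast_pos [CharZero K] {n : ℕ} (hn : n ≠ 0) : 0 < A.valuation (n : K) :=
  (Valuation.pos_iff _).mpr (Nat.cast_ne_zero.mpr hn)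

theorem pow_dvd_of_valuation_intCast_le [CharZero K] {p : ℕ} (hp : p.Prime)
    (hA : A.valuation (p : K) < 1) {t : ℤ} {m : ℕ}
    (h : A.valuation (t : K) ≤ A.valuation (p : K) ^ m) : (p : ℤ) ^ m ∣ t := by
  by_cases ht : t = 0
  · simp [ht]
  obtain ⟨c, htc, hc⟩ := (FiniteMultiplicity.of_prime_left
    (Nat.prime_iff_prime_int.mp hp) ht).exists_eq_pow_mul_and_not_dvd
  generalize multiplicity (p : ℤ) t = k at htc
  have hv : A.valuation (t : K) = A.valuation (p : K) ^ k := by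
    rw [htc]
    push_cast
    rw [map_mul, map_pow, valuation_intCast_eq_one_of_not_dvd A hp hA hc, mul_one]
  rw [hv, pow_le_pow_iff_right_of_lt_one₀ (valuation_natCast_pos A hp.ne_zero) hA] at h
  exact htc ▸ (pow_dvd_pow _ h).mul_right _

theorem valuation_eq_one_of_pow_eq_one {z : K} {n : ℕ} (hn : n ≠ 0) (h : z ^ n = 1) :
    A.valuation z = 1 :=
  (pow_eq_one_iff.mp (by rw [← map_pow, h, map_one])).resolve_right hn

theorem charP_residueField_of_valuation_lt_one {p : ℕ} (hp : p.Prime)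
    (hA : A.valuation (p : K) < 1) : CharP (IsLocalRing.ResidueField A) p := by
  refine (CharP.charP_iff_prime_eq_zero hp).mpr ?_
  rw [← map_natCast (IsLocalRing.residue A), IsLocalRing.residue_eq_zero_iff,
    A.valuation_lt_one_iff]
  simpa using hA

theorem valuation_sub_one_lt_one_of_pow_prime_pow_eq_one {l : ℕ} (hl : l.Prime)
    (hA : A.valuation (l : K) < 1) {z : K} {k : ℕ} (h : z ^ l ^ k = 1) :
    A.valuation (z - 1) < 1 := by
  have : Fact l.Prime := ⟨hl⟩
  have := charP_residueField_of_valuation_lt_one A hl hA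
  have hz : z ∈ A := (A.valuation_le_one_iff z).mp
    (valuation_eq_one_of_pow_eq_one A (pow_ne_zero _ hl.ne_zero) h).le
  have hpow : (⟨z, hz⟩ : A) ^ l ^ k = 1 := Subtype.ext (by simpa using h)
  have hres : IsLocalRing.residue A (⟨z, hz⟩ - 1) ^ l ^ k = 0 := by
    rw [map_sub, map_one, sub_pow_char_pow, ← map_pow, hpow, map_one, one_pow, sub_self]
  have hmem := eq_zero_of_pow_eq_zero hres
  rw [IsLocalRing.residue_eq_zero_iff, A.valuation_lt_one_iff] at hmem
  simpa using hmem

end ValuationSubring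

/-! ### Gauss sums and the trace character -/

section GaussSum

variable {R R' : Type*} [CommRing R] [CommRing R']

theorem isIntegral_mulChar_apply [Finite R] (χ : MulChar R R') (x : R) : IsIntegral ℤ (χ x) := by
  by_cases hx : IsUnit x
  · obtain ⟨u, rfl⟩ := hx
    have hpow : χ u ^ Nat.card Rˣ = 1 := by
      rw [← map_pow, ← Units.val_pow_eq_pow_val, pow_card_eq_one', Units.val_one, map_one]
    exact .of_pow Nat.card_pos (hpow ▸ isIntegral_one)
  · exact χ.map_nonunit hx ▸ isIntegral_zero

theorem isIntegral_addChar_apply [Finite R] (ψ : AddChar R R') (x : R) : IsIntegral ℤ (ψ x) := by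
  have hpow : ψ x ^ Nat.card R = 1 := by
    rw [← AddChar.map_nsmul_eq_pow, card_nsmul_eq_zero', AddChar.map_zero_eq_one]
  exact .of_pow Nat.card_pos (hpow ▸ isIntegral_one)

variable [Fintype R]

theorem isIntegral_gaussSum (χ : MulChar R R') (ψ : AddChar R R') :
    IsIntegral ℤ (gaussSum χ ψ) :=
  IsIntegral.sum _ fun x _ ↦ (isIntegral_mulChar_apply χ x).mul (isIntegral_addChar_apply ψ x)

theorem map_gaussSum {R'' : Type*} [CommRing R''] (f : R' →+* R'') (χ : MulChar R R')
    (ψ : AddChar R R') :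
    f (gaussSum χ ψ) = gaussSum (χ.ringHomComp f) (f.toMonoidHom.compAddChar ψ) := by
  simp [gaussSum]

theorem isIntegral_jacobiSum (χ φ : MulChar R R') : IsIntegral ℤ (jacobiSum χ φ) :=
  IsIntegral.sum _ fun x _ ↦ (isIntegral_mulChar_apply χ x).mul (isIntegral_mulChar_apply φ _)

theorem gaussSum_mul_gaussSum_inv {F : Type*} [Field F] [Fintype F] [IsDomain R']
    {χ : MulChar F R'} (hχ : χ ≠ 1) {ψ : AddChar F R'} (hψ : ψ.IsPrimitive) :
    gaussSum χ ψ * gaussSum χ⁻¹ ψ = χ (-1) * Fintype.card F := by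
  rw [← mul_gaussSum_inv_eq_gaussSum χ⁻¹ ψ, MulChar.inv_apply', inv_neg_one, mul_left_comm,
    gaussSum_mul_gaussSum_eq_card hχ hψ]

end GaussSum

section TraceAddChar

variable (p : ℕ) [Fact p.Prime] (F : Type*) [Field F] [Algebra (ZMod p) F]

/-- The additive character `x ↦ ζ_p ^ T(x)` of a finite field of characteristic `p`, where `T` is
the trace down to the prime field. -/
noncomputable def traceAddChar : AddChar F ℂ :=
  ZMod.stdAddChar.compAddMonoidHom (Algebra.trace (ZMod p) F).toAddMonoidHom

variable {F}

theorem traceAddChar_apply (x : F) :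
    traceAddChar p F x = ZMod.stdAddChar (Algebra.trace (ZMod p) F x) := rfl

theorem traceAddChar_eq_zetaP_pow (x : F) :
    traceAddChar p F x = zetaP p ^ (Algebra.trace (ZMod p) F x).val := by
  rw [traceAddChar_apply, zetaP, ← Complex.exp_nat_mul]
  conv_lhs => rw [← ZMod.natCast_zmod_val (Algebra.trace (ZMod p) F x), ← Int.cast_natCast]
  rw [ZMod.stdAddChar_coe, Int.cast_natCast]
  ring_nf

theorem traceAddChar_ne_one [Finite F] : traceAddChar p F ≠ 1 := by
  rw [AddChar.ne_one_iff]
  obtain ⟨x, hx⟩ := Algebra.trace_surjective (ZMod p) F 1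
  refine ⟨x, ?_⟩
  rw [traceAddChar_apply, hx, ← AddChar.map_zero_eq_one (ZMod.stdAddChar (N := p))]
  exact ZMod.injective_stdAddChar.ne one_ne_zero

theorem isPrimitive_traceAddChar [Finite F] : (traceAddChar p F).IsPrimitive :=
  .of_ne_one (traceAddChar_ne_one p)

theorem traceAddChar_pow_prime [Finite F] (x : F) :
    traceAddChar p F (x ^ p) = traceAddChar p F x := by
  have htrace : Algebra.trace (ZMod p) F (x ^ p) = Algebra.trace (ZMod p) F x := by
    simpa [FiniteField.coe_frobeniusAlgEquivOfAlgebraic, ZMod.card] using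
      Algebra.trace_eq_of_algEquiv (FiniteField.frobeniusAlgEquivOfAlgebraic (ZMod p) F) x
  rw [traceAddChar_apply, htrace, traceAddChar_apply]

variable [Fintype F]

theorem gaussSumN_eq_gaussSum {F : Type} [Field F] [Fintype F] [Algebra (ZMod p) F]
    (χ : MulChar F ℂ) (n : ℕ) : gaussSumN p χ n = gaussSum (χ ^ n) (traceAddChar p F) := by
  classical
  rw [gaussSumN, gaussSum, Finset.sum_filter]
  refine Finset.sum_congr rfl fun x _ ↦ ?_
  rw [traceAddChar_eq_zetaP_pow]
  split_ifs with hx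
  · rfl
  · rw [not_ne_iff.mp hx, MulChar.map_zero, zero_mul]

variable {p} {R : Type*} [CommRing R] {ψ : AddChar F R} (hψ : ∀ x, ψ (x ^ p) = ψ x)
  (χ : MulChar F R)

include hψ

theorem gaussSum_pow_prime : gaussSum (χ ^ p) ψ = gaussSum χ ψ := by
  have := charP_of_injective_algebraMap (algebraMap (ZMod p) F).injective p
  rw [gaussSum, gaussSum,
    ← Equiv.sum_comp (frobeniusEquiv F p).toEquiv (fun x ↦ χ x * ψ x)]
  refine Finset.sum_congr rfl fun x _ ↦ ?_
  simp only [RingEquiv.toEquiv_eq_coe, EquivLike.coe_coe, frobeniusEquiv_apply, frobenius_def,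
    hψ, map_pow, MulChar.pow_apply' _ (Fact.out : p.Prime).ne_zero]

theorem gaussSum_pow_prime_pow (i : ℕ) : gaussSum (χ ^ p ^ i) ψ = gaussSum χ ψ := by
  induction i with
  | zero => rw [pow_zero, pow_one]
  | succ i ih => rw [pow_succ, pow_mul, gaussSum_pow_prime hψ, ih]

end TraceAddChar

/-! ### Stickelberger's theorem -/

section Digits

theorem sub_one_mul_sum_div_pow_add_sum_digits {b f k : ℕ} (hb : 1 < b) (hk : k < b ^ f) :
    (b - 1) * ∑ i ∈ Finset.range f, k / b ^ (i + 1) + (b.digits k).sum = k := by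
  rcases eq_or_ne k 0 with rfl | hk0
  · simp
  have hlog : Nat.log b k + 1 ≤ f := Nat.log_lt_of_lt_pow hk0 hk
  rw [← Finset.sum_subset (Finset.range_mono hlog),
    Nat.sub_one_mul_sum_log_div_pow_eq_sub_sum_digits, Nat.sub_add_cancel (Nat.digit_sum_le b k)]
  intro i _ hi
  exact Nat.div_eq_of_lt (Nat.lt_pow_of_log_lt hb (by rw [Finset.mem_range] at hi; omega))

theorem sum_digits_add_sum_digits_sub {b f k : ℕ} (hb : 1 < b) (hk : k < b ^ f) :
    (b.digits k).sum + (b.digits (b ^ f - (k + 1))).sum = f * (b - 1) := by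
  have hdiv : ∀ i ∈ Finset.range f,
      (b ^ f - (k + 1)) / b ^ (i + 1) + k / b ^ (i + 1) + 1 = b ^ (f - 1 - i) := by
    intro i hi
    have hsplit : b ^ f = b ^ (i + 1) * b ^ (f - 1 - i) := by
      rw [← pow_add]; congr 1; have := Finset.mem_range.mp hi; omega
    have hlt := Nat.div_lt_of_lt_mul (hsplit ▸ hk)
    rw [hsplit, Nat.mul_sub_div _ _ _ (hsplit ▸ hk)]
    omega
  have hsum := Finset.sum_congr rfl hdiv
  rw [Finset.sum_range_reflect (fun i ↦ b ^ i) f, Finset.sum_add_distrib, Finset.sum_add_distrib,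
    Finset.sum_const, Finset.card_range, smul_eq_mul, mul_one] at hsum
  have hgeom := geom_sum_mul_of_one_le hb.le f
  have h₁ := sub_one_mul_sum_div_pow_add_sum_digits hb hk
  have h₂ := sub_one_mul_sum_div_pow_add_sum_digits (k := b ^ f - (k + 1)) hb (f := f) (by omega)
  rw [← hsum, add_mul, add_mul] at hgeom
  linarith [Nat.sub_add_cancel hk, Nat.sub_add_cancel (Nat.one_le_of_lt hk)]

theorem mul_div_mul_sub_one {M P k : ℕ} (hk : k + 1 < M * P) :
    M * k / (M * P - 1) = k / P := by
  have hP : 0 < P := Nat.pos_of_mul_pos_left (by omega : 0 < M * P)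
  obtain ⟨Q, hQ⟩ : ∃ Q, M * P = Q + 1 := ⟨M * P - 1, by omega⟩
  have hdM : k / P + 1 ≤ M := Nat.div_lt_of_lt_mul (by rw [mul_comm]; omega)
  have hle : k / P * P ≤ k := Nat.div_mul_le_self k P
  have hlt : k < (k / P + 1) * P := Nat.lt_mul_of_div_lt (Nat.lt_succ_self _) hP
  generalize k / P = d at *
  rw [hQ, Nat.add_sub_cancel]
  refine Nat.div_eq_of_lt_le (by nlinarith) ?_
  rcases hdM.lt_or_eq with _ | rfl <;> nlinarith

theorem sub_one_mul_sum_pow_mul_mod {b f k : ℕ} (hb : 1 < b) (hk : k + 1 < b ^ f) :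
    (b - 1) * ∑ i ∈ Finset.range f, b ^ i * k % (b ^ f - 1) =
      (b ^ f - 1) * (b.digits k).sum := by
  have hdivmod : ∀ j ∈ Finset.range f,
      (b ^ f - 1) * (k / b ^ (j + 1)) + b ^ (f - 1 - j) * k % (b ^ f - 1) =
        b ^ (f - 1 - j) * k := by
    intro j hj
    have hsplit : b ^ f = b ^ (f - 1 - j) * b ^ (j + 1) := by
      rw [← pow_add]; congr 1; have := Finset.mem_range.mp hj; omega
    conv_rhs => rw [← Nat.div_add_mod (b ^ (f - 1 - j) * k) (b ^ f - 1)]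
    rw [hsplit, mul_div_mul_sub_one (hsplit ▸ hk)]
  have hsum := Finset.sum_congr rfl hdivmod
  rw [Finset.sum_add_distrib, Finset.sum_range_reflect (fun i ↦ b ^ i * k % (b ^ f - 1)) f,
    Finset.sum_range_reflect (fun i ↦ b ^ i * k) f, ← Finset.mul_sum, ← Finset.sum_mul] at hsum
  have hdigits := sub_one_mul_sum_div_pow_add_sum_digits hb ((Nat.lt_succ_self k).trans hk)
  have hgeom := geom_sum_mul_of_one_le hb.le f
  refine Nat.add_left_cancel
    (n := (b ^ f - 1) * ((b - 1) * ∑ i ∈ Finset.range f, k / b ^ (i + 1))) ?_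
  calc _ = (b - 1) * ((b ^ f - 1) * ∑ i ∈ Finset.range f, k / b ^ (i + 1) +
        ∑ i ∈ Finset.range f, b ^ i * k % (b ^ f - 1)) := by ring
    _ = (b ^ f - 1) * k := by rw [hsum, ← hgeom]; ring
    _ = _ := by rw [← mul_add, hdigits]

theorem sum_digits_base_mul {b : ℕ} (hb : 1 < b) (k : ℕ) :
    (b.digits (b * k)).sum = (b.digits k).sum := by
  rcases Nat.eq_zero_or_pos k with rfl | hk
  · simp
  · rw [Nat.digits_base_mul hb hk, List.sum_cons, zero_add]

theorem sum_digits_succ_of_not_dvd {b k : ℕ} (hb : 1 < b) (h : ¬ b ∣ k + 1) :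
    (b.digits (k + 1)).sum = (b.digits k).sum + 1 := by
  rcases Nat.eq_zero_or_pos k with rfl | hk
  · simp [Nat.digits_of_lt b 1 one_ne_zero hb]
  have hdiv : (k + 1) / b = k / b := Nat.succ_div_of_not_dvd h
  have hmod : (k + 1) % b = k % b + 1 := by
    have h₁ := Nat.div_add_mod (k + 1) b
    have h₂ := Nat.div_add_mod k b
    rw [hdiv] at h₁
    omega
  rw [Nat.digits_def' hb k.succ_pos, Nat.digits_def' hb hk, hdiv, hmod, List.sum_cons,
    List.sum_cons, add_right_comm]

end Digits

section Teichmuller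

variable {R k : Type*} [CommRing R] [Field k] {F : Type*} [Field F] [Fintype F]

theorem orderOf_eq_of_forall_map_eq_inv (r : R →+* k) (ι : F →+* k) {φ : MulChar F R}
    (hφ : ∀ x, r (φ x) = (ι x)⁻¹) : orderOf φ = Fintype.card F - 1 := by
  classical
  obtain ⟨g, hg⟩ := IsCyclic.exists_generator (α := Fˣ)
  rw [← Fintype.card_units]
  refine Nat.dvd_antisymm (orderOf_dvd_of_pow_eq_one φ.pow_card_eq_one) ?_
  rw [← Nat.card_eq_fintype_card, ← orderOf_eq_card_of_forall_mem_zpowers hg]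
  refine orderOf_dvd_of_pow_eq_one (Units.ext (ι.injective (inv_injective ?_)))
  rw [Units.val_pow_eq_pow_val, map_pow, ← inv_pow, ← hφ, ← map_pow, ← MulChar.pow_apply_coe,
    pow_orderOf_eq_one, MulChar.one_apply_coe, Units.val_one, map_one, map_one, inv_one]

variable [IsDomain R] (r : R →+* k)

theorem X_pow_sub_one_eq_prod_X_sub_C_map {n : ℕ} (hn : 0 < n) {ζ : R}
    (hζ : IsPrimitiveRoot ζ n) :
    (X ^ n - 1 : k[X]) = ∏ z ∈ nthRootsFinset n (1 : R), (X - C (r z)) := by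
  simpa [Polynomial.map_prod] using congrArg (Polynomial.map r) (X_pow_sub_one_eq_prod hn hζ)

theorem exists_pow_eq_one_and_map_eq {n : ℕ} (hn : 0 < n) {ζ : R} (hζ : IsPrimitiveRoot ζ n)
    {y : k} (hy : y ^ n = 1) : ∃ z : R, z ^ n = 1 ∧ r z = y := by
  have heval := congrArg (Polynomial.eval y) (X_pow_sub_one_eq_prod_X_sub_C_map r hn hζ)
  simp only [eval_prod, eval_sub, eval_pow, eval_X, eval_one, eval_C, hy, sub_self] at heval
  obtain ⟨z, hz, hzy⟩ := Finset.prod_eq_zero_iff.mp heval.symm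
  exact ⟨z, (mem_nthRootsFinset hn 1).mp hz, (sub_eq_zero.mp hzy).symm⟩

include r in
theorem nonempty_ringHom_of_isPrimitiveRoot (p : ℕ) [Fact p.Prime] [CharP k p]
    [Algebra (ZMod p) F] {ζ : R} (hζ : IsPrimitiveRoot ζ (Fintype.card F - 1)) :
    Nonempty (F →+* k) := by
  have hcard : 1 < Fintype.card F := Fintype.one_lt_card
  let _ : Algebra (ZMod p) k := ZMod.algebra k p
  have hsplit : ((X ^ Fintype.card F - X : (ZMod p)[X]).map (algebraMap (ZMod p) k)).Splits := by
    have hfactor : (X ^ Fintype.card F - X : (ZMod p)[X]).map (algebraMap (ZMod p) k) =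
        X * ∏ z ∈ nthRootsFinset (Fintype.card F - 1) (1 : R), (X - C (r z)) := by
      rw [← X_pow_sub_one_eq_prod_X_sub_C_map r (by omega) hζ, mul_sub, ← pow_succ',
        Nat.sub_add_cancel hcard.le]
      simp
    rw [hfactor]
    exact Splits.X.mul (.prod fun z _ ↦ .X_sub_C _)
  have := FiniteField.isSplittingField_sub F (ZMod p)
  exact ⟨(IsSplittingField.lift F _ hsplit).toRingHom⟩

theorem exists_mulChar_map_eq (ι : F →+* k) {ζ : R} (hζ : IsPrimitiveRoot ζ (Fintype.card F - 1)) :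
    ∃ ω : MulChar F R, ∀ x, r (ω x) = ι x := by
  classical
  have hcard : 1 < Fintype.card F := Fintype.one_lt_card
  obtain ⟨g, hg⟩ := IsCyclic.exists_generator (α := Fˣ)
  obtain ⟨z, hz, hzg⟩ := exists_pow_eq_one_and_map_eq r (by omega) hζ (y := ι g)
    (by rw [← map_pow, FiniteField.pow_card_sub_one_eq_one _ g.ne_zero, map_one])
  obtain ⟨μ, rfl⟩ : IsUnit z := .of_pow_eq_one hz (by omega)
  have hμ : μ ∈ rootsOfUnity (Fintype.card Fˣ) R := by
    rw [mem_rootsOfUnity', Fintype.card_units, hz]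
  refine ⟨MulChar.ofRootOfUnity hμ hg, fun x ↦ ?_⟩
  rcases eq_or_ne x 0 with rfl | hx
  · rw [MulChar.map_zero, map_zero, map_zero]
  obtain ⟨n, hn⟩ : ∃ n : ℕ, g ^ n = Units.mk0 x hx :=
    mem_powers_iff_mem_zpowers.mpr (hg (Units.mk0 x hx))
  rw [← Units.val_mk0 hx, ← hn, Units.val_pow_eq_pow_val, map_pow, map_pow,
    MulChar.ofRootOfUnity_spec, hzg, map_pow]

end Teichmuller

section Stickelberger

variable (p : ℕ) [Fact p.Prime] {F : Type*} [Field F] [Fintype F] [Algebra (ZMod p) F]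

theorem sum_inv_mul_algebraMap_trace :
    ∑ x : F, x⁻¹ * algebraMap (ZMod p) F (Algebra.trace (ZMod p) F x) = -1 := by
  have hp : p.Prime := Fact.out
  have hcard : Fintype.card F = p ^ Module.finrank (ZMod p) F := by
    rw [Module.card_eq_pow_finrank (K := ZMod p), ZMod.card]
  have hpow : ∀ i ∈ Finset.range (Module.finrank (ZMod p) F), i ≠ 0 →
      ∑ x : F, x⁻¹ * x ^ p ^ i = 0 := by
    intro i hi hi0
    have hlt : p ^ i < Fintype.card F :=
      hcard ▸ Nat.pow_lt_pow_right hp.one_lt (Finset.mem_range.mp hi)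
    have hone : 1 < p ^ i := Nat.one_lt_pow hi0 hp.one_lt
    rw [← FiniteField.sum_pow_lt_card_sub_one F (p ^ i - 1) (by omega)]
    refine Finset.sum_congr rfl fun x _ ↦ ?_
    rcases eq_or_ne x 0 with rfl | hx
    · rw [inv_zero, zero_mul, zero_pow (by omega)]
    · rw [pow_sub₀ x hx hone.le, pow_one, mul_comm]
  have hone : ∑ x : F, x⁻¹ * x ^ p ^ 0 = -1 := by
    classical
    have hsum : ∑ x : F, x⁻¹ * x ^ p ^ 0 = ∑ x : F, ((1 : F) - if x = 0 then 1 else 0) := by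
      refine Finset.sum_congr rfl fun x _ ↦ ?_
      rw [pow_zero, pow_one]
      split_ifs with hx <;> simp [hx]
    rw [hsum, Finset.sum_sub_distrib, Finset.sum_ite_eq' Finset.univ, if_pos (Finset.mem_univ _)]
    simp
  simp only [FiniteField.algebraMap_trace_eq_sum_pow, Nat.card_zmod, Finset.mul_sum]
  rw [Finset.sum_comm, Finset.sum_eq_single_of_mem 0 (by simpa using Module.finrank_pos) hpow,
    hone]

theorem exists_gaussSum_eq_sub_one_mul {R k : Type*} [CommRing R] [IsDomain R] [Field k]
    (r : R →+* k) (ι : F →+* k) {ζ : R} (hr : r ζ = 1) {φ : MulChar F R} (hφ : φ ≠ 1)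
    (hφι : ∀ x, r (φ x) = (ι x)⁻¹) {ψ : AddChar F R}
    (hψ : ∀ x, ψ x = ζ ^ (Algebra.trace (ZMod p) F x).val) :
    ∃ s : R, gaussSum φ ψ = (ζ - 1) * s ∧ r s = -1 := by
  refine ⟨∑ x, φ x * ∑ i ∈ Finset.range (Algebra.trace (ZMod p) F x).val, ζ ^ i, ?_, ?_⟩
  · calc gaussSum φ ψ = ∑ x, φ x * (ψ x - 1) := by
          simp only [gaussSum, mul_sub, mul_one, Finset.sum_sub_distrib,
            MulChar.sum_eq_zero_of_ne_one hφ, sub_zero]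
      _ = _ := by
          rw [Finset.mul_sum]
          refine Finset.sum_congr rfl fun x _ ↦ ?_
          rw [hψ, mul_left_comm, mul_geom_sum]
  · have hterm (x : F) :
        r (φ x * ∑ i ∈ Finset.range (Algebra.trace (ZMod p) F x).val, ζ ^ i) =
          ι (x⁻¹ * algebraMap (ZMod p) F (Algebra.trace (ZMod p) F x)) := by
      have hval (t : ZMod p) : algebraMap (ZMod p) F t = (t.val : F) := by
        rw [← map_natCast (algebraMap (ZMod p) F), ZMod.natCast_zmod_val]
      rw [hval, map_mul, map_mul, map_inv₀, hφι, map_natCast, map_sum]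
      simp only [map_pow, hr, one_pow, Finset.sum_const, Finset.card_range, nsmul_one]
    rw [map_sum, Finset.sum_congr rfl fun x _ ↦ hterm x, ← map_sum,
      sum_inv_mul_algebraMap_trace, map_neg, map_one]

end Stickelberger

section Stickelberger

theorem exists_pow_eq_of_orderOf_eq {F : Type*} [Field F] [Fintype F] {φ : MulChar F ℂ}
    (hord : orderOf φ = Fintype.card F - 1) (χ : MulChar F ℂ) :
    ∃ k < Fintype.card F - 1, φ ^ k = χ := by
  classical
  have hcard : orderOf φ = Nat.card (MulChar F ℂ) := by
    rw [MulChar.card_eq_card_units_of_hasEnoughRootsOfUnity, Nat.card_eq_fintype_card,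
      Fintype.card_units, hord]
  have hχ : χ ∈ Subgroup.zpowers φ := by
    rw [Subgroup.eq_top_of_card_eq _ ((Nat.card_zpowers φ).trans hcard)]
    trivial
  rw [← hord]
  simpa using mem_zpowers_iff_mem_range_orderOf.mp hχ

variable (p : ℕ) [Fact p.Prime] {F : Type*} [Field F] [Fintype F] [Algebra (ZMod p) F]

variable {p} in
theorem associated_sub_one_pow_natCast {R : Type*} [CommRing R] [IsDomain R] {ζ : R}
    (hζ : IsPrimitiveRoot ζ p) : Associated ((ζ - 1) ^ (p - 1)) (p : R) := by
  have hp : p.Prime := Fact.out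
  obtain ⟨n, rfl⟩ : ∃ n, p = n + 1 := ⟨p - 1, (Nat.sub_add_cancel hp.pos).symm⟩
  have hconst : (ζ - 1) ^ n = ∏ _i ∈ Finset.range n, (ζ - 1) := by
    rw [Finset.prod_const, Finset.card_range]
  rw [Nat.add_sub_cancel, Nat.cast_add_one, ← hζ.prod_one_sub_pow_eq_order, hconst]
  refine Associated.prod _ _ _ fun i hi ↦ ?_
  have hcop : (i + 1).Coprime (n + 1) :=
    (Nat.coprime_of_lt_prime i.succ_ne_zero (by rw [Finset.mem_range] at hi; omega) hp).symm
  rw [← neg_sub (ζ ^ (i + 1))]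
  exact (hζ.associated_sub_one_pow_sub_one_of_coprime hcop).neg_right

theorem zetaP_isPrimitiveRoot : IsPrimitiveRoot (zetaP p) p :=
  Complex.isPrimitiveRoot_exp p (Fact.out : p.Prime).ne_zero

variable {p} {A : ValuationSubring ℂ} (hA : A.valuation (p : ℂ) < 1)

theorem valuation_zetaP_eq_one (A : ValuationSubring ℂ) : A.valuation (zetaP p) = 1 :=
  valuation_eq_one_of_pow_eq_one A (Fact.out : p.Prime).ne_zero (zetaP_isPrimitiveRoot p).pow_eq_one

include hA in
theorem valuation_zetaP_sub_one_lt_one : A.valuation (zetaP p - 1) < 1 :=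
  valuation_sub_one_lt_one_of_pow_prime_pow_eq_one A Fact.out hA (k := 1)
    (by rw [pow_one, (zetaP_isPrimitiveRoot p).pow_eq_one])

theorem valuation_zetaP_sub_one_pow (A : ValuationSubring ℂ) :
    A.valuation (zetaP p - 1) ^ (p - 1) = A.valuation (p : ℂ) := by
  have hmem : zetaP p ∈ A := (A.valuation_le_one_iff _).mp (valuation_zetaP_eq_one A).le
  have hζ : IsPrimitiveRoot (⟨zetaP p, hmem⟩ : A) p :=
    .of_map_of_injective (f := A.subtype) (zetaP_isPrimitiveRoot p) Subtype.val_injective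
  obtain ⟨u, hu⟩ := associated_sub_one_pow_natCast hζ
  have := congrArg (A.valuation ∘ A.subtype) hu
  simpa [A.valuation_unit] using this

include hA in
theorem exists_mulChar_valuation_gaussSum_eq (hF : 2 < Fintype.card F) :
    ∃ φ : MulChar F ℂ, orderOf φ = Fintype.card F - 1 ∧
      A.valuation (gaussSum φ (traceAddChar p F)) = A.valuation (zetaP p - 1) := by
  have := charP_residueField_of_valuation_lt_one A Fact.out hA
  have hmem {z : ℂ} (hz : A.valuation z = 1) : z ∈ A := (A.valuation_le_one_iff z).mp hz.le
  let ζ : A := ⟨zetaP p, hmem (valuation_zetaP_eq_one A)⟩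
  have hη := Complex.isPrimitiveRoot_exp (Fintype.card F - 1) (by omega)
  have hη' : IsPrimitiveRoot (⟨_, hmem (valuation_eq_one_of_pow_eq_one A (by omega)
      hη.pow_eq_one)⟩ : A) (Fintype.card F - 1) :=
    .of_map_of_injective (f := A.subtype) hη Subtype.val_injective
  obtain ⟨ι⟩ := nonempty_ringHom_of_isPrimitiveRoot (IsLocalRing.residue A) p hη'
  obtain ⟨ω, hω⟩ := exists_mulChar_map_eq (IsLocalRing.residue A) ι hη'
  have hω' : ∀ x, IsLocalRing.residue A (ω⁻¹ x) = (ι x)⁻¹ := fun x ↦ by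
    rw [MulChar.inv_apply', hω, map_inv₀]
  have hord := orderOf_eq_of_forall_map_eq_inv _ ι hω'
  have hω1 : ω⁻¹ ≠ 1 := fun h ↦ by rw [h, orderOf_one] at hord; omega
  have hζ : IsLocalRing.residue A ζ = 1 := by
    rw [← sub_eq_zero, ← map_one (IsLocalRing.residue A), ← map_sub,
      IsLocalRing.residue_eq_zero_iff, A.valuation_lt_one_iff]
    exact valuation_zetaP_sub_one_lt_one hA
  have hζp : ζ ^ p = 1 := Subtype.ext (zetaP_isPrimitiveRoot p).pow_eq_one
  obtain ⟨ψ, hψ⟩ : ∃ ψ : AddChar F A, ∀ x, ψ x = ζ ^ (Algebra.trace (ZMod p) F x).val :=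
    ⟨(AddChar.zmodChar p hζp).compAddMonoidHom (Algebra.trace (ZMod p) F).toAddMonoidHom,
      fun x ↦ AddChar.zmodChar_apply hζp _⟩
  obtain ⟨s, hs, hres⟩ := exists_gaussSum_eq_sub_one_mul p _ ι hζ hω1 hω' hψ
  have hsu : IsUnit s := by
    rw [← IsLocalRing.residue_ne_zero_iff_isUnit, hres]
    exact neg_ne_zero.mpr one_ne_zero
  refine ⟨ω⁻¹.ringHomComp A.subtype, ?_, ?_⟩
  · rw [← hord]
    exact orderOf_injective (MulChar.ringHomCompHom A.subtype)
      (MulChar.injective_ringHomComp A.subtype_injective) _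
  · have hψ' : traceAddChar p F = A.subtype.toMonoidHom.compAddChar ψ := by
      ext x
      simp [hψ, traceAddChar_eq_zetaP_pow, ζ]
    rw [hψ', ← map_gaussSum, hs]
    simp [ζ, (A.valuation_eq_one_iff s).mp hsu]

theorem valuation_zetaP_sub_one_pow_le_valuation_gaussSum {φ : MulChar F ℂ}
    (hord : orderOf φ = Fintype.card F - 1)
    (hφ : A.valuation (gaussSum φ (traceAddChar p F)) = A.valuation (zetaP p - 1)) {k : ℕ}
    (hk : k < Fintype.card F - 1) :
    A.valuation (zetaP p - 1) ^ (p.digits k).sum ≤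
      A.valuation (gaussSum (φ ^ k) (traceAddChar p F)) := by
  have hp : p.Prime := Fact.out
  induction k using Nat.strong_induction_on with
  | _ k ih =>
  rcases eq_or_ne k 0 with rfl | hk0
  · simp [gaussSum_one_left (traceAddChar_ne_one p)]
  by_cases hpk : p ∣ k
  · obtain ⟨m, rfl⟩ := hpk
    have hlt : m < p * m := lt_mul_of_one_lt_left (by lia) hp.one_lt
    rw [sum_digits_base_mul hp.one_lt, mul_comm p m, pow_mul, 
      gaussSum_pow_prime (traceAddChar_pow_prime p)]
    exact ih m hlt (hlt.trans hk)
  · obtain ⟨m, rfl⟩ : ∃ m, k = m + 1 := ⟨k - 1, by omega⟩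
    have hne : φ ^ m * φ ≠ 1 := by
      rw [← pow_succ]
      exact pow_ne_one_of_lt_orderOf m.succ_ne_zero (hord ▸ hk)
    have hjacobi := congrArg A.valuation (jacobiSum_mul_nontrivial hne (traceAddChar p F))
    rw [map_mul, map_mul, hφ, ← pow_succ] at hjacobi
    rw [sum_digits_succ_of_not_dvd hp.one_lt hpk, pow_succ]
    calc _ ≤ A.valuation (gaussSum (φ ^ m) (traceAddChar p F)) * A.valuation (zetaP p - 1) := by
          gcongr
          exact ih m (by omega) (by omega)
      _ = _ := hjacobi.symm
      _ ≤ _ := mul_le_of_le_one_right' (valuation_le_one_of_isIntegral A (isIntegral_jacobiSum _ _))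

theorem valuation_gaussSum_pow_eq {φ : MulChar F ℂ} (hord : orderOf φ = Fintype.card F - 1)
    (hφ : A.valuation (gaussSum φ (traceAddChar p F)) = A.valuation (zetaP p - 1)) {k : ℕ}
    (hk0 : 0 < k) (hk : k < Fintype.card F - 1) :
    A.valuation (gaussSum (φ ^ k) (traceAddChar p F)) =
      A.valuation (zetaP p - 1) ^ (p.digits k).sum := by
  have hp : p.Prime := Fact.out
  have hcard : Fintype.card F = p ^ Module.finrank (ZMod p) F := by
    rw [Module.card_eq_pow_finrank (K := ZMod p), ZMod.card]
  have hle := valuation_zetaP_sub_one_pow_le_valuation_gaussSum hord hφ hk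
  have hle' := valuation_zetaP_sub_one_pow_le_valuation_gaussSum hord hφ
    (k := Fintype.card F - 1 - k) (by omega)
  have hinv : (φ ^ k)⁻¹ = φ ^ (Fintype.card F - 1 - k) :=
    inv_eq_of_mul_eq_one_right (by
      rw [← pow_add, Nat.add_sub_cancel' hk.le, ← hord, pow_orderOf_eq_one])
  have hprod := congrArg A.valuation (gaussSum_mul_gaussSum_inv
    (pow_ne_one_of_lt_orderOf hk0.ne' (hord ▸ hk)) (isPrimitive_traceAddChar p (F := F)))
  have hχ : A.valuation ((φ ^ k) (-1)) = 1 :=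
    valuation_eq_one_of_pow_eq_one A two_ne_zero (by rw [← map_pow, neg_one_sq, map_one])
  have hdigits := sum_digits_add_sum_digits_sub hp.one_lt
    (hcard ▸ (by omega : k < Fintype.card F))
  rw [← hcard, add_comm k 1, ← Nat.sub_sub] at hdigits
  rw [map_mul, map_mul, hχ, one_mul, hinv, hcard, Nat.cast_pow, map_pow, ← hcard,
    ← valuation_zetaP_sub_one_pow A, ← pow_mul, mul_comm (p - 1), ← hdigits, pow_add] at hprod
  have hpos : 0 < A.valuation (zetaP p - 1) :=
    (Valuation.pos_iff _).mpr (sub_ne_zero.mpr ((zetaP_isPrimitiveRoot p).ne_one hp.one_lt))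
  refine hle.antisymm' ?_
  rw [← mul_le_mul_iff_left₀ ((pow_pos hpos _).trans_le hle'), hprod]
  gcongr

include hA in
/-- Stickelberger's theorem, in the form of the slope of a Gauss sum at a place above `p`. The
coprime multiplier `c` depends on the place. -/
theorem exists_coprime_valuation_gaussSum_pow_eq {χ : MulChar F ℂ} (hχ : 2 < orderOf χ) {f : ℕ}
    (hcard : Fintype.card F = p ^ f) :
    ∃ c : ℕ, c.Coprime (orderOf χ) ∧ A.valuation (gaussSum χ (traceAddChar p F)) ^ orderOf χ =
      A.valuation (p : ℂ) ^ ∑ i ∈ Finset.range f, p ^ i * c % orderOf χ := by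
  have hp : p.Prime := Fact.out
  have hF : orderOf χ ∣ Fintype.card F - 1 := by
    classical
    rw [← Fintype.card_units]
    exact orderOf_dvd_of_pow_eq_one χ.pow_card_eq_one
  have hF1 : 0 < Fintype.card F - 1 := Nat.sub_pos_of_lt Fintype.one_lt_card
  have hle := Nat.le_of_dvd hF1 hF
  obtain ⟨φ, hord, hφ⟩ := exists_mulChar_valuation_gaussSum_eq (F := F) hA (by omega)
  obtain ⟨k, hk, rfl⟩ := exists_pow_eq_of_orderOf_eq hord χ
  rcases Nat.eq_zero_or_pos k with rfl | hk0
  · simp at hχ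
  set d := Nat.gcd (Fintype.card F - 1) k
  have hd : 0 < d := Nat.gcd_pos_of_pos_right _ hk0
  have horder : Fintype.card F - 1 = d * orderOf (φ ^ k) := by
    rw [orderOf_pow' _ hk0.ne', hord, Nat.mul_div_cancel' (Nat.gcd_dvd_left _ _)]
  obtain ⟨c, hc⟩ : d ∣ k := Nat.gcd_dvd_right _ _
  refine ⟨c, ?_, ?_⟩
  · have hcop := Nat.coprime_div_gcd_div_gcd hd
    rwa [Nat.div_eq_of_eq_mul_right hd horder, Nat.div_eq_of_eq_mul_right hd hc,
      Nat.coprime_comm] at hcop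
  have hsum := sub_one_mul_sum_pow_mul_mod hp.one_lt (f := f) (k := k) (by omega)
  simp only [← hcard, horder] at hsum
  have hterm (i : ℕ) : p ^ i * k % (d * orderOf (φ ^ k)) = d * (p ^ i * c % orderOf (φ ^ k)) := by
    rw [← Nat.mul_mod_mul_left, mul_left_comm, ← hc]
  simp only [hterm, ← Finset.mul_sum] at hsum
  have hslope : (p - 1) * ∑ i ∈ Finset.range f, p ^ i * c % orderOf (φ ^ k) =
      (p.digits k).sum * orderOf (φ ^ k) := by
    refine Nat.eq_of_mul_eq_mul_left hd ?_
    linarith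
  rw [valuation_gaussSum_pow_eq hord hφ hk0 hk, ← pow_mul, ← hslope, pow_mul,
    valuation_zetaP_sub_one_pow]

end Stickelberger

/-! ### First moment of the Legendre symbol -/

section LegendreSymbol

variable (l : ℕ) [Fact l.Prime]

theorem sum_range_legendreSym (hl : l ≠ 2) : ∑ a ∈ Finset.range l, legendreSym l a = 0 := by
  rw [← quadraticChar_sum_zero (F := ZMod l) (by rwa [ZMod.ringChar_zmod_n])]
  refine Finset.sum_nbij' (fun a ↦ (a : ZMod l)) ZMod.val ?_ ?_ ?_ ?_ ?_
  · exact fun _ _ ↦ Finset.mem_univ _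
  · exact fun x _ ↦ Finset.mem_range.mpr x.val_lt
  · exact fun a ha ↦ ZMod.val_cast_of_lt (Finset.mem_range.mp ha)
  · exact fun x _ ↦ ZMod.natCast_zmod_val x
  · exact fun a _ ↦ by rw [legendreSym, Int.cast_natCast]

/-- The first moment `∑ (a / l) a`, over `0 ≤ a < l`, of the Legendre symbol modulo `l`: it is `l`
times the generalized Bernoulli number `B_{1,χ}` of that symbol. -/
def legendreMoment : ℤ := ∑ a ∈ Finset.range l, legendreSym l a * a

theorem sum_range_mul_legendreSym_mul (hl : l ≠ 2) (t : ℕ) :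
    ∑ a ∈ Finset.range (l * t), legendreSym l a * a = t * legendreMoment l := by
  induction t with
  | zero => simp
  | succ t ih =>
    have hshift (r : ℕ) : legendreSym l (l * t + r : ℕ) = legendreSym l r := by
      simp [legendreSym]
    simp only [mul_add_one, Finset.sum_range_add, ih, hshift]
    push_cast
    simp only [mul_add, Finset.sum_add_distrib, ← Finset.sum_mul, sum_range_legendreSym l hl,
      zero_mul, zero_add, legendreMoment, add_one_mul]

variable {l}

theorem sum_filter_dvd_legendreSym_mul {q : ℕ} (hl : l ≠ 2) (hq : 0 < q) (t : ℕ) :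
    ∑ a ∈ (Finset.range (q * (l * t))).filter (q ∣ ·), legendreSym l a * a =
      legendreSym l q * q * (t * legendreMoment l) := by
  rw [← sum_range_mul_legendreSym_mul l hl, Finset.mul_sum]
  refine (Finset.sum_nbij' (q * ·) (· / q) ?_ ?_ ?_ ?_ ?_).symm
  · intro b hb
    simp only [Finset.mem_range, Finset.mem_filter] at hb ⊢
    exact ⟨Nat.mul_lt_mul_of_pos_left hb hq, dvd_mul_right _ _⟩
  · intro a ha
    simp only [Finset.mem_range, Finset.mem_filter] at ha ⊢
    exact Nat.div_lt_of_lt_mul ha.1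
  · intro b _
    exact Nat.mul_div_cancel_left b hq
  · intro a ha
    exact Nat.mul_div_cancel' (Finset.mem_filter.mp ha).2
  · intro b _
    rw [Nat.cast_mul, legendreSym.mul]
    ring

theorem mul_sum_filter_coprime_legendreSym_mul (hl : l ≠ 2) {q r s : ℕ} (hq : q.Prime) (hr : r ≠ 0)
    (hs : s ≠ 0) :
    l * ∑ a ∈ (Finset.range (l ^ r * q ^ s)).filter (·.Coprime (l ^ r * q ^ s)),
        legendreSym l a * a =
      (l ^ r * q ^ s : ℕ) * legendreMoment l * (1 - legendreSym l q) := by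
  have hlp : l.Prime := Fact.out
  have hcop (a : ℕ) : a.Coprime (l ^ r * q ^ s) ↔ ¬ l ∣ a ∧ ¬ q ∣ a := by
    rw [Nat.coprime_mul_iff_right, Nat.coprime_pow_right_iff hr.bot_lt,
      Nat.coprime_pow_right_iff hs.bot_lt, Nat.coprime_comm, hlp.coprime_iff_not_dvd,
      Nat.coprime_comm, hq.coprime_iff_not_dvd]
  obtain ⟨r, rfl⟩ := Nat.exists_eq_succ_of_ne_zero hr
  obtain ⟨s, rfl⟩ := Nat.exists_eq_succ_of_ne_zero hs
  set N := l ^ (r + 1) * q ^ (s + 1) with hN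
  have hNl : N = l * (l ^ r * q ^ (s + 1)) := by ring
  have hNq : N = q * (l * (l ^ r * q ^ s)) := by ring
  have hdrop : ∑ a ∈ (Finset.range N).filter (·.Coprime N), legendreSym l a * a =
      ∑ a ∈ (Finset.range N).filter (¬ q ∣ ·), legendreSym l a * a := by
    refine Finset.sum_subset (Finset.monotone_filter_right _ fun a _ ha ↦ ((hcop a).mp ha).2)
      fun a ha ha' ↦ ?_
    simp only [Finset.mem_filter, hcop] at ha ha'
    have hla : l ∣ a := by tauto
    rw [(legendreSym.eq_zero_iff l a).mpr (by simpa [ZMod.natCast_eq_zero_iff] using hla), zero_mul]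
  have hsplit := Finset.sum_filter_add_sum_filter_not (Finset.range N) (q ∣ ·)
    (fun a ↦ legendreSym l a * (a : ℤ))
  conv at hsplit => enter [1, 1]; rw [hNq]
  conv at hsplit => enter [2]; rw [hNl]
  rw [sum_filter_dvd_legendreSym_mul hl hq.pos, sum_range_mul_legendreSym_mul l hl] at hsplit
  rw [hdrop, ← sub_eq_of_eq_add' hsplit.symm, hN]
  push_cast
  ring

theorem legendreSym_eq_one_of_odd_pow_eq_one {a : ℤ} {k : ℕ} (hk : Odd k)
    (h : (a : ZMod l) ^ k = 1) : legendreSym l a = 1 := by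
  have ha : (a : ZMod l) ≠ 0 := by
    rintro ha
    rw [ha, zero_pow hk.pos.ne'] at h
    exact zero_ne_one h
  have hpow : legendreSym l a ^ k = 1 := by rw [legendreSym, ← map_pow, h, map_one]
  refine (legendreSym.eq_one_or_neg_one l ha).resolve_right fun hneg ↦ ?_
  rw [hneg, hk.neg_one_pow] at hpow
  norm_num at hpow

theorem legendreSym_neg_one_of_mod_four_eq_three (hl : l % 4 = 3) : legendreSym l (-1) = -1 := by
  rw [legendreSym.at_neg_one (by omega), ZMod.χ₄_nat_three_mod_four hl]

theorem odd_totient_prime_pow_div_two (hl : l % 4 = 3) {r : ℕ} (hr : r ≠ 0) :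
    Odd ((l ^ r).totient / 2) := by
  rw [Nat.totient_prime_pow Fact.out hr.bot_lt, Nat.mul_div_assoc _ (by omega)]
  exact (Nat.odd_iff.mpr (by omega : l % 2 = 1)).pow.mul (Nat.odd_iff.mpr (by omega))

theorem legendreSym_eq_one_of_orderOf_eq (hl : l % 4 = 3) {a r : ℕ} (hr : r ≠ 0)
    (h : orderOf (a : ZMod (l ^ r)) = (l ^ r).totient / 2) : legendreSym l a = 1 := by
  refine legendreSym_eq_one_of_odd_pow_eq_one (odd_totient_prime_pow_div_two hl hr) ?_
  have hpow := congrArg (ZMod.castHom (dvd_pow_self l hr) (ZMod l))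
    (pow_orderOf_eq_one (a : ZMod (l ^ r)))
  rw [h, map_pow, map_natCast, map_one] at hpow
  exact_mod_cast hpow

theorem odd_of_legendreMoment_eq_mul (hl : l % 4 = 3) {b : ℤ} (hb : legendreMoment l = l * b) :
    Odd b := by
  have hmod (a : ℕ) (ha : a ∈ Finset.range l) : legendreSym l a * a ≡ a [ZMOD 2] := by
    rcases eq_or_ne a 0 with rfl | ha0
    · simp [Int.ModEq]
    · have hla : ((a : ℤ) : ZMod l) ≠ 0 := by
        rw [Int.cast_natCast, Ne, ZMod.natCast_eq_zero_iff]
        exact Nat.not_dvd_of_pos_of_lt ha0.bot_lt (Finset.mem_range.mp ha)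
      rcases legendreSym.eq_one_or_neg_one l hla with h | h
      · rw [h, one_mul]
      · rw [h]
        exact Int.modEq_iff_dvd.mpr ⟨a, by ring⟩
  have hsum : l * b ≡ ∑ a ∈ Finset.range l, (a : ℤ) [ZMOD 2] := by
    rw [← hb]
    exact Int.ModEq.sum hmod
  obtain ⟨k, hk⟩ : ∃ k : ℕ, l = 4 * k + 3 := ⟨l / 4, by omega⟩
  have hodd : Odd (∑ a ∈ Finset.range l, a) := by
    have hgauss : ∑ a ∈ Finset.range l, a = (4 * k + 3) * (2 * k + 1) := by
      rw [Finset.sum_range_id, hk, Nat.add_sub_assoc (by omega),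
        show 4 * k + (3 - 1) = 2 * (2 * k + 1) by ring, mul_left_comm,
        Nat.mul_div_cancel_left _ two_pos]
    rw [hgauss, Nat.odd_mul]
    exact ⟨⟨2 * k + 1, by ring⟩, ⟨k, rfl⟩⟩
  have hlb : Odd (l * b) := by
    rw [Int.odd_iff, hsum, ← Nat.cast_sum, ← Int.odd_iff]
    exact_mod_cast hodd
  exact (Int.odd_mul.mp hlb).2

variable (l) (R : Type*) [CommRing R]

/-- The Legendre symbol modulo `l` as a multiplicative character with values in `R`. -/
def legendreChar : MulChar (ZMod l) R :=
  (quadraticChar (ZMod l)).ringHomComp (Int.castRingHom R)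

theorem legendreChar_intCast (a : ℤ) : legendreChar l R a = legendreSym l a := rfl

theorem legendreChar_natCast (a : ℕ) : legendreChar l R a = legendreSym l a := by
  rw [← legendreChar_intCast, Int.cast_natCast]

theorem isQuadratic_legendreChar : (legendreChar l R).IsQuadratic :=
  (quadraticChar_isQuadratic (ZMod l)).comp _

theorem ringHomComp_legendreChar {R' : Type*} [CommRing R'] (σ : R →+* R') :
    (legendreChar l R).ringHomComp σ = legendreChar l R' := by
  ext
  simp [legendreChar]

theorem legendreChar_ne_one [CharZero R] (hl : l ≠ 2) : legendreChar l R ≠ 1 :=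
  (MulChar.ringHomComp_ne_one_iff Int.cast_injective).mpr
    (quadraticChar_ne_one (by rwa [ZMod.ringChar_zmod_n]))

theorem legendreChar_neg_one (hl : l % 4 = 3) : legendreChar l R (-1) = -1 := by
  have h := legendreChar_intCast l R (-1)
  rw [legendreSym_neg_one_of_mod_four_eq_three hl] at h
  exact_mod_cast h

end LegendreSymbol

/-! ### Sums over cosets of a subgroup of index two -/

section IndexTwo

theorem zpowers_eq_ker_of_two_mul_orderOf_eq_card {G : Type*} [Group G] [Finite G] {θ : G →* ℤˣ}
    {u g : G} (hu : θ u = 1) (hord : 2 * orderOf u = Nat.card G) (hg : θ g = -1) :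
    Subgroup.zpowers u = θ.ker := by
  have hrange : θ.range = ⊤ := by
    rw [MonoidHom.range_eq_top]
    intro ε
    rcases Int.units_eq_one_or ε with rfl | rfl
    exacts [⟨1, map_one θ⟩, ⟨g, hg⟩]
  refine Subgroup.eq_of_le_of_card_ge (by rwa [Subgroup.zpowers_le]) ?_
  have hcard := θ.ker.card_mul_index
  rw [Subgroup.index_ker, hrange, Subgroup.card_top, Nat.card_eq_fintype_card (α := ℤˣ),
    Fintype.card_units_int] at hcard
  rw [Nat.card_zpowers]
  omega

theorem two_mul_sum_range_orderOf {G : Type*} [Group G] [Fintype G] {θ : G →* ℤˣ} {u : G}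
    (hu : Subgroup.zpowers u = θ.ker) (c : G) (g : G → ℤ) :
    2 * ∑ i ∈ Finset.range (orderOf u), g (u ^ i * c) = ∑ x, g x + θ c * ∑ x, (θ x : ℤ) * g x := by
  classical
  have hmem (x : G) : x ∈ Subgroup.zpowers u ↔ θ x = 1 := by rw [hu, MonoidHom.mem_ker]
  have hcycle : ∑ i ∈ Finset.range (orderOf u), g (u ^ i * c) =
      ∑ x with θ x = 1, g (x * c) := by
    rw [← Finset.sum_image (f := fun x ↦ g (x * c))
      fun i hi j hj ↦ pow_injOn_Iio_orderOf (by simpa using hi) (by simpa using hj)]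
    refine Finset.sum_congr (Finset.ext fun x ↦ ?_) fun _ _ ↦ rfl
    rw [← mem_zpowers_iff_mem_range_orderOf, hmem, Finset.mem_filter_univ]
  have htwo (x : G) : 2 * (if θ x = 1 then g (x * c) else 0) = g (x * c) + θ x * g (x * c) := by
    rcases Int.units_eq_one_or (θ x) with h | h
    · simp [h, two_mul]
    · simp [h]
  have hsq : (θ c : ℤ) * θ c = 1 := by
    rw [← Units.val_mul, Int.units_mul_self, Units.val_one]
  rw [hcycle, Finset.sum_filter, Finset.mul_sum, ← Equiv.sum_comp (Equiv.mulRight c) g,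
    ← Equiv.sum_comp (Equiv.mulRight c) (fun x ↦ (θ x : ℤ) * g x), Finset.mul_sum,
    ← Finset.sum_add_distrib]
  refine Finset.sum_congr rfl fun x _ ↦ ?_
  rw [htwo, Equiv.coe_mulRight, map_mul, Units.val_mul]
  linear_combination (-(θ x * g (x * c))) * hsq

end IndexTwo

section LegendreUnits

variable {l N : ℕ} [Fact l.Prime]

/-- The Legendre symbol modulo a prime `l`, as a character of the units modulo a multiple `N` of
`l`. -/
def legendreUnits (h : l ∣ N) : (ZMod N)ˣ →* ℤˣ :=
  (quadraticChar (ZMod l)).toUnitHom.comp (ZMod.unitsMap h)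

theorem legendreUnits_unitOfCoprime (h : l ∣ N) {a : ℕ} (ha : a.Coprime N) :
    (legendreUnits h (ZMod.unitOfCoprime a ha) : ℤ) = legendreSym l a := by
  simp [legendreUnits, legendreSym, ZMod.unitsMap]

theorem legendreUnits_neg_one (h : l ∣ N) (hl : l % 4 = 3) : legendreUnits h (-1) = -1 := by
  ext
  simpa [legendreUnits, legendreSym, ZMod.unitsMap] using
    legendreSym_neg_one_of_mod_four_eq_three hl

theorem sum_units_natVal [NeZero N] {M : Type*} [AddCommMonoid M] (g : ℕ → M) :
    ∑ x : (ZMod N)ˣ, g (x : ZMod N).val = ∑ a ∈ (Finset.range N).filter (·.Coprime N), g a := by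
  refine Finset.sum_nbij (fun x : (ZMod N)ˣ ↦ (x : ZMod N).val) ?_ ?_ ?_ fun _ _ ↦ rfl
  · intro x _
    exact Finset.mem_filter.mpr
      ⟨Finset.mem_range.mpr (ZMod.val_lt _), ZMod.val_coe_unit_coprime x⟩
  · exact fun x _ y _ hxy ↦ Units.ext (ZMod.val_injective N hxy)
  · intro a ha
    rw [Finset.mem_coe, Finset.mem_filter, Finset.mem_range] at ha
    exact ⟨ZMod.unitOfCoprime a ha.2, Finset.mem_coe.mpr (Finset.mem_univ _), by
      simp [ZMod.val_cast_of_lt ha.1]⟩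

theorem two_mul_sum_units_val (hN : 1 < N) [NeZero N] :
    2 * ∑ x : (ZMod N)ˣ, (x : ZMod N).val = N * N.totient := by
  have : Fact (1 < N) := ⟨hN⟩
  have hneg (x : (ZMod N)ˣ) : (x : ZMod N).val + (((-x : (ZMod N)ˣ)) : ZMod N).val = N := by
    rw [Units.val_neg, ZMod.neg_val, if_neg x.ne_zero, Nat.add_sub_cancel' (ZMod.val_lt _).le]
  rw [two_mul]
  nth_rewrite 2 [← Equiv.sum_comp (Equiv.neg (ZMod N)ˣ)]
  simp only [Equiv.neg_apply, ← Finset.sum_add_distrib, hneg, Finset.sum_const, Finset.card_univ,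
    ZMod.card_units_eq_totient, smul_eq_mul, mul_comm]

variable {p : ℕ} (hl : l % 4 = 3) (hlN : l ∣ N) (hpN : p.Coprime N)
  (hord : 2 * orderOf (p : ZMod N) = N.totient) (hp : legendreSym l p = 1)

include hl hord hp in
theorem zpowers_unitOfCoprime_eq_ker_legendreUnits [NeZero N] :
    Subgroup.zpowers (ZMod.unitOfCoprime p hpN) = (legendreUnits hlN).ker := by
  refine zpowers_eq_ker_of_two_mul_orderOf_eq_card ?_ ?_ (legendreUnits_neg_one hlN hl)
  · ext
    rw [legendreUnits_unitOfCoprime, hp, Units.val_one]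
  · rw [← orderOf_units, ZMod.coe_unitOfCoprime, hord, Nat.card_eq_fintype_card,
      ZMod.card_units_eq_totient]

include hl hlN hpN hord hp in
theorem exists_pow_modEq_of_legendreSym_eq_one {c : ℕ} [NeZero N] (hc : c.Coprime N)
    (hcl : legendreSym l c = 1) : ∃ i, p ^ i ≡ c [MOD N] := by
  have hmem : ZMod.unitOfCoprime c hc ∈ Subgroup.zpowers (ZMod.unitOfCoprime p hpN) := by
    rw [zpowers_unitOfCoprime_eq_ker_legendreUnits hl hlN hpN hord hp, MonoidHom.mem_ker]
    ext
    rw [legendreUnits_unitOfCoprime, hcl, Units.val_one]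
  obtain ⟨i, hi⟩ := (Submonoid.mem_powers_iff _ _).mp (mem_powers_iff_mem_zpowers.mpr hmem)
  refine ⟨i, (ZMod.natCast_eq_natCast_iff _ _ N).mp ?_⟩
  simpa using congrArg Units.val hi

include hl hlN hpN hord hp in
theorem two_mul_sum_range_orderOf_pow_mul_mod {c : ℕ} [NeZero N] (hN : 1 < N) (hc : c.Coprime N) :
    2 * ∑ i ∈ Finset.range (orderOf (p : ZMod N)), ((p ^ i * c % N : ℕ) : ℤ) =
      N * orderOf (p : ZMod N) + legendreSym l c *
        ∑ a ∈ (Finset.range N).filter (·.Coprime N), legendreSym l a * a := by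
  set u := ZMod.unitOfCoprime p hpN
  have horder : orderOf (p : ZMod N) = orderOf u := by
    rw [← orderOf_units, ZMod.coe_unitOfCoprime]
  have hval (i : ℕ) :
      p ^ i * c % N = ((u ^ i * ZMod.unitOfCoprime c hc : (ZMod N)ˣ) : ZMod N).val := by
    rw [Units.val_mul, Units.val_pow_eq_pow_val, ZMod.coe_unitOfCoprime, ZMod.coe_unitOfCoprime,
      ← Nat.cast_pow, ← Nat.cast_mul, ZMod.val_natCast]
  have hlegendre (x : (ZMod N)ˣ) : (legendreUnits hlN x : ℤ) = legendreSym l (x : ZMod N).val := by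
    rw [← legendreUnits_unitOfCoprime hlN (ZMod.val_coe_unit_coprime x)]
    congr
    ext
    simp
  have hsum := two_mul_sum_units_val hN
  rw [← hord, horder, mul_left_comm] at hsum
  simp only [horder, hval]
  have hker := zpowers_unitOfCoprime_eq_ker_legendreUnits hl hlN hpN hord hp
  rw [two_mul_sum_range_orderOf hker _ fun x ↦ ((x : ZMod N).val : ℤ),
    legendreUnits_unitOfCoprime, ← sum_units_natVal fun a ↦ legendreSym l a * (a : ℤ)]
  simp only [hlegendre]
  congr 1
  exact_mod_cast Nat.eq_of_mul_eq_mul_left two_pos hsum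

end LegendreUnits

/-! ### Gauss sums in an imaginary quadratic field -/

section Galois

theorem exists_intCast_eq_of_forall_algEquiv_eq {K : Type*} [Field K] [Algebra ℚ K] [IsGalois ℚ K]
    {z : K} (hz : IsIntegral ℤ z) (h : ∀ σ : K ≃ₐ[ℚ] K, σ z = z) : ∃ n : ℤ, z = n := by
  obtain ⟨r, rfl⟩ := IntermediateField.mem_bot.mp ((InfiniteGalois.mem_bot_iff_fixed z).mpr h)
  rw [isIntegral_algebraMap_iff (algebraMap ℚ K).injective] at hz
  obtain ⟨n, rfl⟩ := IsIntegrallyClosed.isIntegral_iff.mp hz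
  exact ⟨n, by simp⟩

theorem exists_eq_add_mul_div_two_of_mul_eq {K : Type*} [Field K] [CharZero K] {l : ℕ}
    (hl : l.Prime) {s x y : K} {n t v : ℤ} (hs : s ^ 2 = -(l : K)) (hxy : x * y = n)
    (ht : x + y = t) (hv : (y - x) * s = v) :
    ∃ w : ℤ, x = (t + w * s) / 2 ∧ y = (t - w * s) / 2 ∧ t ^ 2 + l * w ^ 2 = 4 * n := by
  have hl0 : (l : ℤ) ≠ 0 := Int.natCast_ne_zero.mpr hl.ne_zero
  have hs0 : s ≠ 0 := by
    rintro rfl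
    exact hl.ne_zero (by exact_mod_cast neg_eq_zero.mp (hs.symm.trans (zero_pow two_ne_zero)))
  have hvt : v ^ 2 = -l * (t ^ 2 - 4 * n) := by
    have : (v : K) ^ 2 = -l * (t ^ 2 - 4 * n) := by
      rw [← hv, ← ht, ← hxy, mul_pow, hs]
      ring
    exact_mod_cast this
  obtain ⟨w, rfl⟩ : (l : ℤ) ∣ v :=
    (Nat.prime_iff_prime_int.mp hl).dvd_of_dvd_pow (hvt ▸ (dvd_neg.mpr dvd_rfl).mul_right _)
  have hsub : x - y = w * s := by
    apply mul_right_cancel₀ hs0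
    push_cast at hv
    linear_combination -hv - w * hs
  refine ⟨w, ?_, ?_, mul_left_cancel₀ hl0 (by linear_combination hvt)⟩
  · linear_combination (ht + hsub) / 2
  · linear_combination (ht - hsub) / 2

theorem exists_eq_add_mul_div_two {K : Type*} [Field K] [Algebra ℚ K] [IsGalois ℚ K] {l : ℕ}
    (hl : l.Prime) {s x y : K} {n : ℤ} (hs : s ^ 2 = -(l : K)) (hx : IsIntegral ℤ x)
    (hy : IsIntegral ℤ y) (hxy : x * y = n)
    (hσ : ∀ σ : K ≃ₐ[ℚ] K,
      (σ s = s ∧ σ x = x ∧ σ y = y) ∨ (σ s = -s ∧ σ x = y ∧ σ y = x)) :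
    ∃ t w : ℤ, x = (t + w * s) / 2 ∧ y = (t - w * s) / 2 ∧ t ^ 2 + l * w ^ 2 = 4 * n := by
  have : CharZero K := algebraRat.charZero K
  have hsi : IsIntegral ℤ s := .of_pow two_pos (hs ▸ (isIntegral_natCast l).neg)
  obtain ⟨t, ht⟩ := exists_intCast_eq_of_forall_algEquiv_eq (hx.add hy) fun σ ↦ by
    rcases hσ σ with ⟨-, h1, h2⟩ | ⟨-, h1, h2⟩ <;> rw [map_add, h1, h2]
    rw [add_comm]
  obtain ⟨v, hv⟩ := exists_intCast_eq_of_forall_algEquiv_eq ((hy.sub hx).mul hsi) fun σ ↦ by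
    rcases hσ σ with ⟨h0, h1, h2⟩ | ⟨h0, h1, h2⟩ <;> rw [map_mul, map_sub, h0, h1, h2]
    ring
  exact ⟨t, exists_eq_add_mul_div_two_of_mul_eq hl hs hxy ht hv⟩

theorem exists_coprime_forall_map_eq_pow {K : Type*} [CommRing K] [IsDomain K] {M : ℕ} [NeZero M]
    {ζ : K} (hζ : IsPrimitiveRoot ζ M) {σ : K →+* K} (hσ : Function.Injective σ) :
    ∃ a : ℕ, a.Coprime M ∧ ∀ z, z ^ M = 1 → σ z = z ^ a := by
  obtain ⟨a, -, haM, ha⟩ := hζ.isPrimitiveRoot_iff.mp (hζ.map_of_injective hσ)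
  refine ⟨a, haM, fun z hz ↦ ?_⟩
  obtain ⟨i, -, rfl⟩ := hζ.eq_pow_of_pow_eq_one hz
  rw [map_pow, ← ha, ← pow_mul, ← pow_mul, mul_comm]

theorem mulShift_natCast_apply {R R' : Type*} [CommRing R] [CommMonoid R'] (ψ : AddChar R R')
    (a : ℕ) (x : R) : ψ.mulShift a x = ψ x ^ a := by
  rw [AddChar.mulShift_apply, ← AddChar.map_nsmul_eq_pow, nsmul_eq_mul]

theorem map_gaussSum_eq_gaussSum_pow_mulShift {R K : Type*} [CommRing R] [Fintype R] [CommRing K]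
    {χ : MulChar R K} {ψ : AddChar R K} {σ : K →+* K} {M a : ℕ}
    (hσ : ∀ z, z ^ M = 1 → σ z = z ^ a) (hχ : χ ^ M = 1) (hψ : ∀ x, ψ x ^ M = 1) :
    σ (gaussSum χ ψ) = gaussSum (χ ^ a) (ψ.mulShift a) := by
  have hχσ : χ.ringHomComp σ = χ ^ a := by
    ext u
    rw [MulChar.ringHomComp_apply, MulChar.pow_apply_coe]
    exact hσ _ (by rw [← MulChar.pow_apply_coe, hχ, MulChar.one_apply_coe])
  have hψσ : σ.toMonoidHom.compAddChar ψ = ψ.mulShift a := by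
    ext x
    rw [mulShift_natCast_apply]
    exact hσ _ (hψ x)
  rw [map_gaussSum, hχσ, hψσ]

theorem map_eq_legendreSym_mul_of_sq_eq_neg {K : Type*} [Field K] [CharZero K] {l : ℕ}
    [Fact l.Prime] (hl : l % 4 = 3) {s ζ : K} (hs : s ^ 2 = -(l : K)) (hζ : IsPrimitiveRoot ζ l)
    {σ : K →+* K} {a : ℕ} (hσ : σ ζ = ζ ^ a) (ha : (a : ZMod l) ≠ 0) :
    σ s = legendreSym l a * s := by
  set φ := legendreChar l K
  set ψ : AddChar (ZMod l) K := AddChar.zmodChar l hζ.pow_eq_one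
  have hψ : ψ.IsPrimitive := AddChar.zmodChar_primitive_of_primitive_root l hζ
  have hφ : φ.IsQuadratic := isQuadratic_legendreChar l K
  have hψσ : σ.toMonoidHom.compAddChar ψ = ψ.mulShift a := by
    ext x
    rw [mulShift_natCast_apply]
    change σ (ζ ^ x.val) = (ζ ^ x.val) ^ a
    rw [map_pow, hσ, pow_right_comm]
  have hτ : σ (gaussSum φ ψ) = legendreSym l a * gaussSum φ ψ := by
    have hshift := gaussSum_mulShift_eq φ ψ (Units.mk0 (a : ZMod l) ha)
    rw [Units.val_mk0, hφ.inv] at hshift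
    rw [map_gaussSum, ringHomComp_legendreChar, hψσ, hshift, legendreChar_natCast]
  have hsq : s ^ 2 = gaussSum φ ψ ^ 2 := by
    rw [hs, gaussSum_sq (legendreChar_ne_one l K (by omega)) hφ hψ, ZMod.card,
      legendreChar_neg_one l K hl, neg_one_mul]
  rcases sq_eq_sq_iff_eq_or_eq_neg.mp hsq with rfl | rfl
  · exact hτ
  · rw [map_neg, hτ, mul_neg]

section GaussSumForm

variable {l N p f : ℕ} [Fact l.Prime] [NeZero N] [Fact p.Prime] (hl : l % 4 = 3) (hlN : l ∣ N)
  (hpN : p.Coprime N) (hord : 2 * orderOf (p : ZMod N) = N.totient) (hp : legendreSym l p = 1)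
  {F : Type*} [Field F] [Fintype F] [Algebra (ZMod p) F]

section

variable {K : Type*} [CommRing K] {χ : MulChar F K} {ψ : AddChar F K}

theorem gaussSum_mulShift_natCast_eq_self {a : ℕ} (hap : a.Coprime p)
    (hχ : ∀ b : ZMod p, b ≠ 0 → χ (algebraMap (ZMod p) F b) = 1) :
    gaussSum χ (ψ.mulShift a) = gaussSum χ ψ := by
  have ha : (a : ZMod p) ≠ 0 := by
    rw [Ne, ZMod.natCast_eq_zero_iff, ← (Fact.out : p.Prime).coprime_iff_not_dvd]
    exact hap.symm
  have haF : algebraMap (ZMod p) F a ≠ 0 := (_root_.map_ne_zero _).mpr ha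
  have hshift := gaussSum_mulShift_eq χ ψ (Units.mk0 _ haF)
  rwa [Units.val_mk0, MulChar.inv_apply', ← map_inv₀, hχ _ (inv_ne_zero ha), one_mul,
    map_natCast] at hshift

variable (hψ : ∀ x, ψ (x ^ p) = ψ x) (hχ : χ ^ N = 1) {a : ℕ} (haN : a.Coprime N)

include hl hlN hpN hord hp hψ hχ haN

theorem gaussSum_pow_eq_of_legendreSym_eq_one (ha : legendreSym l a = 1) :
    gaussSum (χ ^ a) ψ = gaussSum χ ψ := by
  obtain ⟨i, hi⟩ := exists_pow_modEq_of_legendreSym_eq_one hl hlN hpN hord hp haN ha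
  rw [pow_eq_pow_iff_modEq.mpr ((hi.of_dvd (orderOf_dvd_of_pow_eq_one hχ)).symm),
    gaussSum_pow_prime_pow hψ]

theorem gaussSum_pow_eq_of_legendreSym_eq_neg_one (ha : legendreSym l a = -1) :
    gaussSum (χ ^ a) ψ = gaussSum χ⁻¹ ψ := by
  have hN : 1 ≤ N := NeZero.one_le
  have hlN' : ((N - 1 : ℕ) : ZMod l) = -1 := by
    rw [Nat.cast_sub hN, (ZMod.natCast_eq_zero_iff N l).mpr hlN, Nat.cast_one, zero_sub]
  have hneg : legendreSym l ((N - 1) * a : ℕ) = 1 := by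
    have hcast : (((N - 1 : ℕ) : ℤ) : ZMod l) = ((-1 : ℤ) : ZMod l) := by
      rw [Int.cast_natCast, hlN', Int.cast_neg, Int.cast_one]
    rw [Nat.cast_mul, legendreSym.mul, ha, legendreSym, hcast, ← legendreSym,
      legendreSym_neg_one_of_mod_four_eq_three hl]
    rfl
  have hcop : ((N - 1) * a).Coprime N :=
    ((Nat.coprime_self_sub_left hN).mpr (Nat.coprime_one_left N)).mul_left haN
  have hinv : χ ^ a = χ⁻¹ ^ ((N - 1) * a) := by
    have h : χ⁻¹ ^ (N - 1) = χ := by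
      rw [inv_pow, inv_eq_iff_mul_eq_one, pow_sub_one_mul (by omega), hχ]
    rw [pow_mul, h]
  rw [hinv, gaussSum_pow_eq_of_legendreSym_eq_one hl hlN hpN hord hp hψ
    (by rw [inv_pow, hχ, inv_one]) hcop hneg]

end

section

variable {K : Type*} [Field K] {χ : MulChar F K} {ψ : AddChar F K}
  (hψ : ∀ x, ψ (x ^ p) = ψ x) (hχ : χ ^ N = 1)
  (hχp : ∀ b : ZMod p, b ≠ 0 → χ (algebraMap (ZMod p) F b) = 1)

include hl hlN hpN hord hp hψ hχ hχp

theorem map_gaussSum_eq_gaussSum_or_gaussSum_inv {σ : K →+* K} {a : ℕ} (ha : a.Coprime (N * p))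
    (hσ : ∀ z, z ^ (N * p) = 1 → σ z = z ^ a) :
    (legendreSym l a = 1 → σ (gaussSum χ ψ) = gaussSum χ ψ) ∧
      (legendreSym l a = -1 → σ (gaussSum χ ψ) = gaussSum χ⁻¹ ψ) := by
  have hψp (x : F) : ψ x ^ (N * p) = 1 := by
    rw [mul_comm, pow_mul, ← AddChar.map_nsmul_eq_pow, nsmul_eq_mul,
      ← map_natCast (algebraMap (ZMod p) F), CharP.cast_eq_zero, map_zero, zero_mul,
      AddChar.map_zero_eq_one, one_pow]
  have hχa (b : ZMod p) (hb : b ≠ 0) : (χ ^ a) (algebraMap (ZMod p) F b) = 1 := by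
    have hb' : algebraMap (ZMod p) F b ≠ 0 := (_root_.map_ne_zero _).mpr hb
    simpa [hχp b hb] using MulChar.pow_apply_coe χ a (Units.mk0 _ hb')
  have hmap : σ (gaussSum χ ψ) = gaussSum (χ ^ a) ψ := by
    rw [map_gaussSum_eq_gaussSum_pow_mulShift hσ (by rw [pow_mul, hχ, one_pow]) hψp,
      gaussSum_mulShift_natCast_eq_self ha.coprime_mul_left_right hχa]
  have haN := ha.coprime_mul_right_right
  exact ⟨fun h ↦ hmap.trans
      (gaussSum_pow_eq_of_legendreSym_eq_one hl hlN hpN hord hp hψ hχ haN h),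
    fun h ↦ hmap.trans
      (gaussSum_pow_eq_of_legendreSym_eq_neg_one hl hlN hpN hord hp hψ hχ haN h)⟩

theorem map_sqrt_gaussSum_eq_or [CharZero K] {s ζ : K} (hs : s ^ 2 = -(l : K))
    (hζ : IsPrimitiveRoot ζ (N * p)) (σ : K →+* K) :
    (σ s = s ∧ σ (gaussSum χ ψ) = gaussSum χ ψ ∧ σ (gaussSum χ⁻¹ ψ) = gaussSum χ⁻¹ ψ) ∨
      (σ s = -s ∧ σ (gaussSum χ ψ) = gaussSum χ⁻¹ ψ ∧ σ (gaussSum χ⁻¹ ψ) = gaussSum χ ψ) := by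
  have := NeZero.mk (Fact.out : p.Prime).ne_zero
  obtain ⟨a, ha, hσ⟩ := exists_coprime_forall_map_eq_pow hζ σ.injective
  have hal : (a : ZMod l) ≠ 0 := by
    rw [Ne, ZMod.natCast_eq_zero_iff, ← (Fact.out : l.Prime).coprime_iff_not_dvd]
    exact (ha.coprime_dvd_right (hlN.mul_right p)).symm
  obtain ⟨d, hd⟩ := hlN.mul_right p
  have hζl : IsPrimitiveRoot (ζ ^ d) l := hζ.pow (Nat.pos_of_neZero _) (hd.trans (mul_comm _ _))
  have hσs : σ s = legendreSym l a * s :=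
    map_eq_legendreSym_mul_of_sq_eq_neg hl hs hζl
      (hσ _ (by rw [hd, pow_mul, hζl.pow_eq_one, one_pow])) hal
  have hG := map_gaussSum_eq_gaussSum_or_gaussSum_inv hl hlN hpN hord hp hψ hχ hχp ha hσ
  have hG' := map_gaussSum_eq_gaussSum_or_gaussSum_inv hl hlN hpN hord hp hψ (χ := χ⁻¹)
    (by rw [inv_pow, hχ, inv_one])
    (fun b hb ↦ by rw [MulChar.inv_apply', ← map_inv₀, hχp _ (inv_ne_zero hb)]) ha hσ
  rcases legendreSym.eq_one_or_neg_one l (a := a) (by exact_mod_cast hal) with h | h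
  · exact .inl ⟨by simpa [h] using hσs, hG.1 h, hG'.1 h⟩
  · exact .inr ⟨by simpa [h] using hσs, hG.2 h, by simpa using hG'.2 h⟩

end

end GaussSumForm

section Lift

theorem exists_mulChar_ringHomComp_eq {R K L : Type*} [CommMonoid R] [CommRing K] [CommRing L]
    {ι : K →+* L} (hι : Function.Injective ι) {χ : MulChar R L} (h : ∀ x, χ x ∈ ι.range) :
    ∃ χ' : MulChar R K, χ'.ringHomComp ι = χ := by
  choose g hg using h
  refine ⟨⟨⟨⟨g, hι ?_⟩, fun x y ↦ hι ?_⟩, fun x hx ↦ hι ?_⟩, MulChar.ext' hg⟩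
  · rw [hg, map_one, map_one]
  · rw [map_mul, hg, hg, hg, map_mul]
  · rw [hg, map_zero, χ.map_nonunit hx]

theorem exists_addChar_compAddChar_eq {A K L : Type*} [AddMonoid A] [CommRing K] [CommRing L]
    {ι : K →+* L} (hι : Function.Injective ι) {ψ : AddChar A L} (h : ∀ x, ψ x ∈ ι.range) :
    ∃ ψ' : AddChar A K, ι.toMonoidHom.compAddChar ψ' = ψ := by
  choose g hg using h
  refine ⟨{ toFun := g, map_zero_eq_one' := hι ?_, map_add_eq_mul' := fun x y ↦ hι ?_ },
    DFunLike.ext _ _ hg⟩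
  · rw [hg, map_one, AddChar.map_zero_eq_one]
  · rw [map_mul, hg, hg, hg, AddChar.map_add_eq_mul]

end Lift

-- `Algebra ℚ` is found through the division ring structure, not through the intermediate field.
theorem isGalois_rat_algebraicClosure : IsGalois ℚ (algebraicClosure ℚ ℂ) := by
  convert @IsAlgClosure.isGalois ℚ (algebraicClosure ℚ ℂ) _ _ (algebraicClosure ℚ ℂ).algebra'
    (algebraicClosure.isAlgClosure ℚ ℂ) _
  exact Subsingleton.elim _ _

theorem exists_gaussSum_eq_add_mul_sqrtNeg_div_two {l N p f : ℕ} [Fact l.Prime] [NeZero N]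
    [Fact p.Prime] (hl : l % 4 = 3) (hlN : l ∣ N) (hpN : p.Coprime N)
    (hord : 2 * orderOf (p : ZMod N) = N.totient) (hp : legendreSym l p = 1)
    {F : Type*} [Field F] [Fintype F] [Algebra (ZMod p) F] (hcard : Fintype.card F = p ^ f)
    {χ : MulChar F ℂ} (hχ : orderOf χ = N)
    (hχp : ∀ b : ZMod p, b ≠ 0 → χ (algebraMap (ZMod p) F b) = 1) :
    ∃ t w : ℤ, gaussSum χ (traceAddChar p F) = (t + w * sqrtNeg l) / 2 ∧
      gaussSum χ⁻¹ (traceAddChar p F) = (t - w * sqrtNeg l) / 2 ∧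
      t ^ 2 + l * w ^ 2 = 4 * (p : ℤ) ^ f := by
  have := isGalois_rat_algebraicClosure
  set ι : algebraicClosure ℚ ℂ →+* ℂ := (algebraicClosure ℚ ℂ).val.toRingHom
  have hι : Function.Injective ι := ι.injective
  have hrange {z : ℂ} (hz : IsIntegral ℚ z) : z ∈ ι.range :=
    ⟨⟨z, mem_algebraicClosure_iff'.mpr hz⟩, rfl⟩
  have hNp : N * p ≠ 0 := mul_ne_zero (NeZero.ne N) (Fact.out : p.Prime).ne_zero
  have hχ1 : χ ≠ 1 := by
    rintro rfl
    rw [orderOf_one] at hχ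
    exact (Fact.out : l.Prime).one_lt.ne' (Nat.dvd_one.mp (hχ ▸ hlN))
  have hodd : χ (-1) = 1 := by simpa using hχp (-1) (neg_ne_zero.mpr one_ne_zero)
  have hGG := gaussSum_mul_gaussSum_inv hχ1 (isPrimitive_traceAddChar p (F := F))
  have hprim := Complex.isPrimitiveRoot_exp _ hNp
  obtain ⟨ζ, hζ⟩ := hrange (hprim.isIntegral (Nat.pos_of_ne_zero hNp)).tower_top
  obtain ⟨s, hs⟩ := hrange (isIntegral_sqrtNeg l)
  obtain ⟨χ, rfl⟩ := exists_mulChar_ringHomComp_eq hι fun x ↦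
    hrange (isIntegral_mulChar_apply χ x).tower_top
  obtain ⟨ψ, hψ⟩ := exists_addChar_compAddChar_eq hι fun x ↦
    hrange (isIntegral_addChar_apply (traceAddChar p F) x).tower_top
  rw [← hψ, hodd, one_mul, hcard, MulChar.ringHomComp_inv, ← map_gaussSum, ← map_gaussSum,
    ← map_mul, Nat.cast_pow, ← map_natCast ι, ← map_pow] at hGG
  have hχN : χ ^ N = 1 := by
    rw [← MulChar.ringHomComp_eq_one_iff hι, ← MulChar.ringHomComp_pow, ← hχ, pow_orderOf_eq_one]
  have hs2 : s ^ 2 = -(l : algebraicClosure ℚ ℂ) := hι (by simp [hs, sqrtNeg_sq])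
  obtain ⟨t, w, hG, hG', htw⟩ := exists_eq_add_mul_div_two (n := (p : ℤ) ^ f) Fact.out hs2
    (isIntegral_gaussSum χ ψ) (isIntegral_gaussSum χ⁻¹ ψ)
    (by exact_mod_cast hι hGG) fun σ ↦
      map_sqrt_gaussSum_eq_or hl hlN hpN hord hp
        (fun x ↦ hι ((DFunLike.congr_fun hψ _).trans
          ((traceAddChar_pow_prime p x).trans (DFunLike.congr_fun hψ x).symm)))
        hχN (fun b hb ↦ hι ((hχp b hb).trans (map_one ι).symm))
        hs2 (.of_map_of_injective (hζ ▸ hprim) hι) σ.toRingHom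
  refine ⟨t, w, ?_, ?_, htw⟩
  · rw [← hψ, ← map_gaussSum, hG]
    simp [hs, map_ofNat ι 2]
  · rw [← hψ, MulChar.ringHomComp_inv, ← map_gaussSum, hG']
    simp [hs, map_ofNat ι 2]

end Galois

/-! ### The Gauss sum modulo `l` -/

section OrderModPrimePower

theorem pow_dvd_sub_one_or_pow_dvd_add_one {l r : ℕ} (hl : l.Prime) (hl2 : l ≠ 2) {y : ℤ}
    (h : (l : ℤ) ^ r ∣ y ^ 2 - 1) : (l : ℤ) ^ r ∣ y - 1 ∨ (l : ℤ) ^ r ∣ y + 1 := by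
  have hlp := Nat.prime_iff_prime_int.mp hl
  rw [show y ^ 2 - 1 = (y - 1) * (y + 1) by ring] at h
  by_cases hsub : (l : ℤ) ∣ y - 1
  · refine .inl (((hlp.coprime_iff_not_dvd.mpr fun hadd ↦ hl2 ?_).pow_left).dvd_of_dvd_mul_right h)
    have h2 : (l : ℤ) ∣ (2 : ℕ) := by simpa [← one_add_one_eq_two] using dvd_sub hadd hsub
    exact (Nat.prime_dvd_prime_iff_eq hl Nat.prime_two).mp (by exact_mod_cast h2)
  · exact .inr ((hlp.coprime_iff_not_dvd.mpr hsub).pow_left.dvd_of_dvd_mul_left h)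

theorem natCast_pow_eq_one_iff_dvd_sub {a n k : ℕ} :
    (a : ZMod n) ^ k = 1 ↔ (n : ℤ) ∣ (a : ℤ) ^ k - 1 := by
  rw [← ZMod.intCast_zmod_eq_zero_iff_dvd, Int.cast_sub, sub_eq_zero]
  push_cast
  rfl

theorem pow_dvd_pow_half_orderOf_add_one {a l r u : ℕ} (hl : l.Prime) (hl2 : l ≠ 2) (hu : 0 < u)
    (h : orderOf (a : ZMod (l ^ r)) = 2 * u) : l ^ r ∣ a ^ u + 1 := by
  have hsq : (l : ℤ) ^ r ∣ ((a : ℤ) ^ u) ^ 2 - 1 := by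
    rw [← pow_mul, ← Nat.cast_pow, ← natCast_pow_eq_one_iff_dvd_sub, mul_comm, ← h,
      pow_orderOf_eq_one]
  rcases pow_dvd_sub_one_or_pow_dvd_add_one hl hl2 hsq with hsub | hadd
  · rw [← Nat.cast_pow, ← natCast_pow_eq_one_iff_dvd_sub] at hsub
    have := Nat.le_of_dvd hu (orderOf_dvd_of_pow_eq_one hsub)
    omega
  · exact_mod_cast hadd

theorem orderOf_natCast_dvd_pow_of_dvd_sub_one {a l r : ℕ} (h : (l : ℤ) ∣ a - 1) :
    orderOf (a : ZMod (l ^ (r + 1))) ∣ l ^ r := by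
  rw [orderOf_dvd_iff_pow_eq_one, natCast_pow_eq_one_iff_dvd_sub, Nat.cast_pow]
  simpa using dvd_sub_pow_of_dvd_sub h r

theorem exists_two_mul_eq_and_pow_dvd_pow_add_one {a l q r s : ℕ} [Fact l.Prime] (hq : q.Prime)
    (hlq : l ≠ q) (hl4 : l % 4 = 3) (hq2 : q ≠ 2) (hr : r ≠ 0) (hs : s ≠ 0)
    (h : orderOf (a : ZMod (q ^ s)) = (q ^ s).totient) :
    ∃ g, 2 * g = (l ^ r * q ^ s).totient / 2 ∧ q ^ s ∣ a ^ g + 1 := by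
  have h2l : 2 < l ^ r := (show 2 < l by omega).trans_le (Nat.le_self_pow hr l)
  have h2 : 2 < q ^ s := (hq.two_le.lt_of_ne hq2.symm).trans_le (Nat.le_self_pow hs q)
  have hk := odd_totient_prime_pow_div_two hl4 hr
  have hlk := Nat.two_mul_div_two_of_even (Nat.totient_even h2l)
  obtain ⟨u, hu⟩ := (Nat.totient_even h2).two_dvd
  have hu0 : 0 < u := by
    have := Nat.totient_pos.mpr (two_pos.trans h2)
    omega
  refine ⟨u * ((l ^ r).totient / 2), ?_, ?_⟩
  · rw [Nat.totient_mul (((Nat.coprime_primes Fact.out hq).mpr hlq).pow r s), hu,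
      mul_left_comm (l ^ r).totient, Nat.mul_div_cancel_left _ two_pos, mul_left_comm, hlk,
      mul_comm]
  · rw [pow_mul]
    refine (pow_dvd_pow_half_orderOf_add_one hq hq2 hu0 (h.trans hu)).trans ?_
    simpa using Odd.nat_add_dvd_pow_add_pow (a ^ u) 1 hk

theorem coprime_sub_one_of_orderOf_eq {a l r c : ℕ} (hl : l.Prime) (ha : a ≠ 0) (hr : r ≠ 0)
    (hc : 1 < c) (h : orderOf (a : ZMod (l ^ r)) = l ^ (r - 1) * c) : (l ^ r).Coprime (a - 1) := by
  refine ((Nat.Prime.coprime_iff_not_dvd hl).mpr fun hdvd ↦ hc.ne' ?_).pow_left r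
  obtain ⟨r, rfl⟩ := Nat.exists_eq_succ_of_ne_zero hr
  have hdvd' : (l : ℤ) ∣ a - 1 := by
    have := Int.natCast_dvd_natCast.mpr hdvd
    rwa [Nat.cast_sub (Nat.one_le_iff_ne_zero.mpr ha), Nat.cast_one] at this
  have hord := h ▸ orderOf_natCast_dvd_pow_of_dvd_sub_one (r := r) hdvd'
  exact Nat.dvd_one.mp (Nat.dvd_of_mul_dvd_mul_left (pow_pos hl.pos r) (by simpa using hord))

end OrderModPrimePower

section Sign

theorem mulChar_apply_pow_eq_one {R R' : Type*} [CommMonoid R] [CommMonoidWithZero R']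
    {χ : MulChar R R'} {n : ℕ} (hχ : χ ^ n = 1) {x : R} (hx : IsUnit x) : χ x ^ n = 1 := by
  obtain ⟨u, rfl⟩ := hx
  rw [← MulChar.pow_apply_coe, hχ, MulChar.one_apply_coe]

variable {p : ℕ} [Fact p.Prime] {F : Type*} [Field F] [Algebra (ZMod p) F]

theorem mulChar_algebraMap_eq_one {R : Type*} [CommMonoidWithZero R] {χ : MulChar F R} {n : ℕ}
    (hχ : χ ^ n = 1) (hn : n.Coprime (p - 1)) {b : ZMod p} (hb : b ≠ 0) :
    χ (algebraMap (ZMod p) F b) = 1 := by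
  have hp : χ (algebraMap (ZMod p) F b) ^ (p - 1) = 1 := by
    rw [← map_pow, ← map_pow, ZMod.pow_card_sub_one_eq_one hb, map_one, map_one]
  have hN := mulChar_apply_pow_eq_one hχ (hb.isUnit.map (algebraMap (ZMod p) F))
  simpa [hn.gcd_eq_one] using pow_gcd_eq_one.mpr ⟨hN, hp⟩

variable [Fintype F]

theorem valuation_gaussSum_mul_sub_lt_one {K : Type*} [Field K] (A : ValuationSubring K) {l k : ℕ}
    (hl : l.Prime) (hA : A.valuation (l : K) < 1) (χ : MulChar F K) {φ : MulChar F K}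
    (hφ : φ ^ l ^ k = 1) (ψ : AddChar F K) :
    A.valuation (gaussSum (χ * φ) ψ - gaussSum χ ψ) < 1 := by
  rw [gaussSum, gaussSum, ← Finset.sum_sub_distrib]
  refine A.valuation.map_sum_lt one_ne_zero fun x _ ↦ ?_
  by_cases hx : x = 0
  · simp only [hx, MulChar.map_zero, zero_mul, sub_self, map_zero, zero_lt_one]
  have hle := valuation_le_one_of_isIntegral A
    ((isIntegral_mulChar_apply χ x).mul (isIntegral_addChar_apply ψ x))
  rw [MulChar.mul_apply, show χ x * φ x * ψ x - χ x * ψ x = χ x * ψ x * (φ x - 1) by ring, map_mul]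
  exact (mul_le_of_le_one_left' hle).trans_lt (valuation_sub_one_lt_one_of_pow_prime_pow_eq_one A hl
    hA (mulChar_apply_pow_eq_one hφ (isUnit_iff_ne_zero.mpr hx)))

theorem gaussSum_sq_eq_card_of_dvd {m g : ℕ} (hm : Odd m) (hdvd : m ∣ p ^ g + 1)
    {χ : MulChar F ℂ} (hχ : χ ^ m = 1) (hχ1 : χ ≠ 1) :
    gaussSum χ (traceAddChar p F) ^ 2 = Fintype.card F := by
  have hinv : χ⁻¹ = χ ^ p ^ g := by
    rw [inv_eq_iff_mul_eq_one, ← pow_succ', ← orderOf_dvd_iff_pow_eq_one]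
    exact (orderOf_dvd_of_pow_eq_one hχ).trans hdvd
  have hneg : χ (-1) = 1 := by
    have hsq : χ (-1) ^ 2 = 1 := by rw [← map_pow, neg_one_sq, map_one]
    have hpow := mulChar_apply_pow_eq_one hχ isUnit_neg_one
    simpa [hm.coprime_two_left.symm.gcd_eq_one] using pow_gcd_eq_one.mpr ⟨hpow, hsq⟩
  have h := gaussSum_mul_gaussSum_inv hχ1 (isPrimitive_traceAddChar p (F := F))
  rwa [hinv, gaussSum_pow_prime_pow (traceAddChar_pow_prime p), hneg, one_mul, ← sq] at h

theorem gaussSum_eq_pow_of_prime_pow_dvd {q s g : ℕ} (hq : q.Prime) (hq2 : q ≠ 2)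
    (hdvd : q ^ s ∣ p ^ g + 1) (hcard : Fintype.card F = p ^ (2 * g)) {χ : MulChar F ℂ}
    (hχ : χ ^ q ^ s = 1) (hχ1 : χ ≠ 1) : gaussSum χ (traceAddChar p F) = (p : ℂ) ^ g := by
  have hsq : gaussSum χ (traceAddChar p F) ^ 2 = ((p : ℂ) ^ g) ^ 2 := by
    rw [gaussSum_sq_eq_card_of_dvd ((hq.odd_of_ne_two hq2).pow) hdvd hχ hχ1, hcard, Nat.cast_pow,
      mul_comm, pow_mul]
  refine (sq_eq_sq_iff_eq_or_eq_neg.mp hsq).resolve_right fun hneg ↦ ?_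
  obtain ⟨A, hA⟩ := exists_valuationSubring_natCast_lt_one (K := ℂ) hq.ne_one
  have hG := valuation_gaussSum_mul_sub_lt_one A hq hA 1 hχ (traceAddChar p F)
  rw [one_mul, gaussSum_one_left (traceAddChar_ne_one p), hneg] at hG
  have hs : s ≠ 0 := by
    rintro rfl
    exact hχ1 (by simpa using hχ)
  obtain ⟨c, hc⟩ := (dvd_pow_self q hs).trans hdvd
  have hpg : A.valuation ((p : ℂ) ^ g + 1) < 1 := by
    have : (p : ℂ) ^ g + 1 = q * ((c : ℤ) : ℂ) := by exact_mod_cast hc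
    rw [this, map_mul]
    exact (mul_le_of_le_one_right' (valuation_intCast_le_one A c)).trans_lt hA
  have htwo := A.valuation.map_add_lt hG hpg
  rw [show -(p : ℂ) ^ g - -1 + ((p : ℂ) ^ g + 1) = (2 : ℤ) by push_cast; ring,
    valuation_intCast_eq_one_of_not_dvd A hq hA] at htwo
  · exact htwo.false
  · intro h2
    exact hq2 ((Nat.prime_dvd_prime_iff_eq hq Nat.prime_two).mp (by exact_mod_cast h2))

theorem valuation_gaussSum_sub_pow_lt_one {l q r s g : ℕ} (hl : l.Prime) (hq : q.Prime)
    (hlq : l ≠ q) (hq2 : q ≠ 2) (hs : s ≠ 0) (hdvd : q ^ s ∣ p ^ g + 1)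
    (hcard : Fintype.card F = p ^ (2 * g)) {χ : MulChar F ℂ} (hχ : orderOf χ = l ^ r * q ^ s)
    {A : ValuationSubring ℂ} (hA : A.valuation (l : ℂ) < 1) :
    A.valuation (gaussSum χ (traceAddChar p F) - (p : ℂ) ^ g) < 1 := by
  have hcop : (l ^ r).Coprime (q ^ s) := ((Nat.coprime_primes hl hq).mpr hlq).pow r s
  obtain ⟨k, hk1, hk0⟩ := Nat.chineseRemainder hcop (l ^ r - 1) 0
  have hkq : q ^ s ∣ k := Nat.modEq_zero_iff_dvd.mp hk0
  have hkl : l ^ r ∣ k + 1 := by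
    have := hk1.add_right 1
    rw [Nat.sub_add_cancel (Nat.one_le_pow _ _ hl.pos)] at this
    exact Nat.modEq_zero_iff_dvd.mp (this.trans (Nat.modEq_zero_iff_dvd.mpr dvd_rfl))
  have hqpow : (χ ^ (k + 1)) ^ q ^ s = 1 := by
    rw [← pow_mul, ← orderOf_dvd_iff_pow_eq_one, hχ]
    exact Nat.mul_dvd_mul_right hkl _
  have hlpow : (χ ^ k) ^ l ^ r = 1 := by
    rw [← pow_mul, ← orderOf_dvd_iff_pow_eq_one, hχ, mul_comm]
    exact Nat.mul_dvd_mul_right hkq _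
  have hne : χ ^ (k + 1) ≠ 1 := by
    rw [Ne, ← orderOf_dvd_iff_pow_eq_one, hχ]
    intro h
    have := (Nat.dvd_add_right hkq).mp ((dvd_mul_left _ _).trans h)
    exact (Nat.one_lt_pow hs hq.one_lt).ne' (Nat.dvd_one.mp this)
  have hG := valuation_gaussSum_mul_sub_lt_one A hl hA χ hlpow (traceAddChar p F)
  rwa [← pow_succ', gaussSum_eq_pow_of_prime_pow_dvd hq hq2 hdvd hcard hqpow hne,
    A.valuation.map_sub_swap] at hG

end Sign

/-! ### The class number formula for `ℚ(√-l)` -/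

section LFunctionAtOne

open Filter Topology HurwitzZeta

theorem rpow_neg_sub_rpow_neg_le {u v s : ℝ} (hu : 0 < u) (huv : u ≤ v) (hs : 1 ≤ s) :
    u ^ (-s) - v ^ (-s) ≤ s * (v - u) * u ^ (-s - 1) := by
  have hv := hu.trans_le huv
  have hbernoulli : 1 + s * (u / v - 1) ≤ (u / v) ^ s := by
    have := div_pos hu hv
    simpa using one_add_mul_self_le_rpow_one_add (show -1 ≤ u / v - 1 by linarith) hs
  calc u ^ (-s) - v ^ (-s) = u ^ (-s) * (1 - (u / v) ^ s) := by
        have := Real.rpow_pos_of_pos hu s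
        rw [Real.rpow_neg hu.le, Real.rpow_neg hv.le, Real.div_rpow hu.le hv.le]
        field_simp
    _ ≤ u ^ (-s) * (s * (v - u) / v) := by
        gcongr
        calc 1 - (u / v) ^ s ≤ -(s * (u / v - 1)) := by linarith
          _ = s * (v - u) / v := by field_simp; ring
    _ ≤ u ^ (-s) * (s * (v - u) / u) := by
        have : 0 ≤ v - u := sub_nonneg.mpr huv
        gcongr
    _ = s * (v - u) * u ^ (-s - 1) := by
        rw [Real.rpow_sub_one hu.ne']
        ring

theorem rpow_neg_le_rpow_neg_add_rpow_neg {u s a b : ℝ} (hu : 0 < u) (ha : a ≤ s) (hb : s ≤ b) :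
    u ^ (-s) ≤ u ^ (-a) + u ^ (-b) := by
  rcases le_total 1 u with h | h
  · exact (Real.rpow_le_rpow_of_exponent_le h (neg_le_neg ha)).trans
      (le_add_of_nonneg_right (Real.rpow_nonneg hu.le _))
  · exact (Real.rpow_le_rpow_of_exponent_ge hu h (neg_le_neg hb)).trans
      (le_add_of_nonneg_left (Real.rpow_nonneg hu.le _))

theorem summable_natCast_add_rpow_neg {a s : ℝ} (ha : 0 < a) (hs : 1 < s) :
    Summable fun n : ℕ ↦ (n + a) ^ (-s) := by
  refine ((Real.summable_one_div_nat_add_rpow a s).mpr hs).congr fun n ↦ ?_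
  have : 0 < n + a := by positivity
  rw [abs_of_pos this, Real.rpow_neg this.le, one_div]

theorem tendsto_tsum_natCast_add_rpow_neg_sub {a b : ℝ} (ha : 0 < a) (hab : a ≤ b) :
    Tendsto (fun s : ℝ ↦ ∑' n : ℕ, ((n + a) ^ (-s) - (n + b) ^ (-s))) (𝓝[>] 1)
      (𝓝 (∑' n : ℕ, ((n + a) ^ (-1 : ℝ) - (n + b) ^ (-1 : ℝ)))) := by
  refine tendsto_tsum_of_dominated_convergence
    (bound := fun n : ℕ ↦ 2 * (b - a) * ((n + a) ^ (-2 : ℝ) + (n + a) ^ (-3 : ℝ))) ?_ ?_ ?_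
  · exact ((summable_natCast_add_rpow_neg ha (by norm_num)).add
      (summable_natCast_add_rpow_neg ha (by norm_num))).mul_left _
  · intro n
    have hcont {c : ℝ} (hc : 0 < c) : Continuous fun s : ℝ ↦ (n + c) ^ (-s) :=
      (Real.continuous_const_rpow (by positivity)).comp continuous_neg
    exact (((hcont ha).sub (hcont (ha.trans_le hab))).tendsto 1).mono_left nhdsWithin_le_nhds
  · filter_upwards [Ioc_mem_nhdsGT (one_lt_two (α := ℝ))] with s hs n
    have hna : 0 < n + a := by positivity
    have hle : n + a ≤ n + b := by gcongr
    rw [Real.norm_of_nonneg (sub_nonneg.mpr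
      (Real.rpow_le_rpow_of_nonpos hna hle (by linarith [hs.1])))]
    calc (n + a) ^ (-s) - (n + b) ^ (-s) ≤ s * (n + b - (n + a)) * (n + a) ^ (-s - 1) :=
          rpow_neg_sub_rpow_neg_le hna hle hs.1.le
      _ = s * (b - a) * (n + a) ^ (-(s + 1)) := by ring_nf
      _ ≤ 2 * (b - a) * ((n + a) ^ (-2 : ℝ) + (n + a) ^ (-3 : ℝ)) := by
          have : 0 ≤ b - a := sub_nonneg.mpr hab
          gcongr
          · exact hs.2
          · exact rpow_neg_le_rpow_neg_add_rpow_neg hna (by linarith [hs.1]) (by linarith [hs.2])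

theorem hurwitzZetaOdd_eq_rpow_neg_sub_tsum {x s : ℝ} (hx0 : 0 < x) (hx1 : x < 1) (hs : 1 < s) :
    hurwitzZetaOdd (x : UnitAddCircle) s =
      ((x ^ (-s) - ∑' n : ℕ, ((n + (1 - x)) ^ (-s) - (n + (1 + x)) ^ (-s)) : ℝ) : ℂ) / 2 := by
  have hsum {c : ℝ} (hc : 0 < c) := summable_natCast_add_rpow_neg hc hs
  have hterm {c : ℝ} (hc : 0 < c) (n : ℕ) : 1 / (n + c : ℂ) ^ (s : ℂ) = ((n + c) ^ (-s) : ℝ) := by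
    have : 0 ≤ n + c := by positivity
    rw [Real.rpow_neg this, one_div, Complex.ofReal_inv, Complex.ofReal_cpow this]
    push_cast
    rfl
  have hzeta := (hasSum_nat_hurwitzZetaOdd_of_mem_Icc ⟨hx0.le, hx1.le⟩
    (s := (s : ℂ)) (by simpa using hs)).tsum_eq
  have h1x : 0 < 1 - x := sub_pos.mpr hx1
  have hterms (n : ℕ) : (1 / (n + x : ℂ) ^ (s : ℂ) - 1 / (n + 1 - x : ℂ) ^ (s : ℂ)) / 2 =
      (((n + x) ^ (-s) - (n + (1 - x)) ^ (-s) : ℝ) : ℂ) / 2 := by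
    have hx' : (n + 1 - x : ℂ) = n + ((1 - x : ℝ) : ℂ) := by push_cast; ring
    rw [hx', hterm hx0, hterm h1x, Complex.ofReal_sub]
  rw [← hzeta, tsum_congr hterms, tsum_div_const, ← Complex.ofReal_tsum]
  have hshift : ∑' n : ℕ, (n + x) ^ (-s) = x ^ (-s) + ∑' n : ℕ, (n + (1 + x)) ^ (-s) := by
    rw [(hsum hx0).tsum_eq_zero_add]
    simp [add_assoc]
  rw [(hsum hx0).tsum_sub (hsum h1x), (hsum h1x).tsum_sub (hsum (by positivity)), hshift]
  congr 2
  ring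

theorem hurwitzZetaOdd_one {x : ℝ} (hx0 : 0 < x) (hx1 : x < 1) :
    hurwitzZetaOdd (x : UnitAddCircle) 1 = Real.pi * Complex.cot (Real.pi * x) / 2 := by
  have hcot : Real.pi * Complex.cot (Real.pi * x) = ((x ^ (-1 : ℝ) -
      ∑' n : ℕ, ((n + (1 - x)) ^ (-1 : ℝ) - (n + (1 + x)) ^ (-1 : ℝ)) : ℝ) : ℂ) := by
    have hx : (x : ℂ) ∈ Complex.integerComplement := by
      rintro ⟨m, hm⟩
      have hm' : (m : ℝ) = x := mod_cast hm
      have h0 : 0 < m := by exact_mod_cast hm' ▸ hx0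
      have h1 : m < 1 := by exact_mod_cast hm' ▸ hx1
      lia
    rw [eq_add_of_sub_eq (cot_series_rep' hx)]
    push_cast [Real.rpow_neg_one]
    rw [add_comm, sub_eq_add_neg, ← tsum_neg, one_div]
    congr 2
    ext n
    rw [show (x : ℂ) - (n + 1) = -(n + (1 - x)) by ring, one_div, inv_neg, one_div]
    ring_nf
  have hzeta : Tendsto (fun s : ℝ ↦ hurwitzZetaOdd (x : UnitAddCircle) s) (𝓝[>] 1)
      (𝓝 (hurwitzZetaOdd (x : UnitAddCircle) ((1 : ℝ) : ℂ))) :=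
    (((differentiable_hurwitzZetaOdd _).continuous.comp Complex.continuous_ofReal).tendsto
      1).mono_left nhdsWithin_le_nhds
  have hx : Tendsto (fun s : ℝ ↦ x ^ (-s)) (𝓝[>] 1) (𝓝 (x ^ (-1 : ℝ))) :=
    (((Real.continuous_const_rpow hx0.ne').comp continuous_neg).tendsto 1).mono_left
      nhdsWithin_le_nhds
  have hlim := ((Complex.continuous_ofReal.tendsto _).comp (hx.sub
    (tendsto_tsum_natCast_add_rpow_neg_sub (sub_pos.mpr hx1)
      (show 1 - x ≤ 1 + x by linarith)))).div_const 2
  rw [hcot, ← Complex.ofReal_one]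
  refine tendsto_nhds_unique hzeta (hlim.congr' ?_)
  filter_upwards [self_mem_nhdsWithin] with s hs
  exact (hurwitzZetaOdd_eq_rpow_neg_sub_tsum hx0 hx1 hs).symm

theorem sum_range_natCast_mul_pow {K : Type*} [Field K] {n : ℕ} {z : K} (hz : z ^ n = 1)
    (hz1 : z ≠ 1) : ∑ m ∈ Finset.range n, m * z ^ m = n / (z - 1) := by
  have htel (k : ℕ) : (∑ m ∈ Finset.range k, m * z ^ m) * (z - 1) =
      k * z ^ k - z * ∑ m ∈ Finset.range k, z ^ m := by
    induction k with
    | zero => simp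
    | succ k ih =>
      rw [Finset.sum_range_succ, Finset.sum_range_succ, add_mul, ih]
      push_cast
      ring
  rw [eq_div_iff (sub_ne_zero.mpr hz1), htel, geom_sum_eq hz1, hz]
  simp

theorem cot_pi_mul_val_div {N : ℕ} [NeZero N] {j : ZMod N} (hj : j ≠ 0) :
    Complex.cot (Real.pi * (j.val / N : ℝ)) =
      I + 2 * I / N * ∑ m ∈ Finset.range N, m * ZMod.stdAddChar j ^ m := by
  set z : ℂ := ZMod.stdAddChar j with hz
  have hexp : Complex.exp (2 * Real.pi * I * (j.val / N : ℝ)) = z := by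
    have := ZMod.stdAddChar_coe (N := N) j.val
    rw [Int.cast_natCast, ZMod.natCast_zmod_val] at this
    rw [hz, this]
    push_cast
    ring_nf
  have hz1 : z ≠ 1 := by
    rw [hz, ← AddChar.map_zero_eq_one (ZMod.stdAddChar (N := N))]
    exact ZMod.injective_stdAddChar.ne hj
  have hzN : z ^ N = 1 := by
    rw [hz, ← AddChar.map_nsmul_eq_pow, nsmul_eq_mul, CharP.cast_eq_zero, zero_mul,
      AddChar.map_zero_eq_one]
  rw [sum_range_natCast_mul_pow hzN hz1, Complex.cot_pi_eq_exp_ratio, hexp]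
  have h1 : z - 1 ≠ 0 := sub_ne_zero.mpr hz1
  have h2 : 1 - z ≠ 0 := sub_ne_zero.mpr hz1.symm
  have hN : (N : ℂ) ≠ 0 := NeZero.ne _
  field_simp
  rw [I_sq]
  ring

theorem sum_mulChar_mul_cot {N : ℕ} [NeZero N] {χ : DirichletCharacter ℂ N}
    (hχ : χ.IsPrimitive) (hχ1 : χ ≠ 1) :
    ∑ j : ZMod N, χ j * Complex.cot (Real.pi * (j.val / N : ℝ)) =
      2 * I / N * gaussSum χ ZMod.stdAddChar * ∑ m ∈ Finset.range N, m * χ⁻¹ m := by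
  have hN : N ≠ 1 := by
    rintro rfl
    exact hχ1 χ.level_one
  have hcot (j : ZMod N) : χ j * Complex.cot (Real.pi * (j.val / N : ℝ)) =
      χ j * I + ∑ m ∈ Finset.range N, 2 * I / N * m * (χ j * ZMod.stdAddChar (m * j : ZMod N)) := by
    rcases eq_or_ne j 0 with rfl | hj
    · simp [χ.map_zero' hN]
    · rw [cot_pi_mul_val_div hj, mul_add, Finset.mul_sum, Finset.mul_sum]
      congr 1
      refine Finset.sum_congr rfl fun m _ ↦ ?_
      rw [← nsmul_eq_mul (m : ℕ) j, AddChar.map_nsmul_eq_pow]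
      ring
  have hgauss (m : ℕ) : ∑ j, χ j * ZMod.stdAddChar (m * j : ZMod N) =
      χ⁻¹ m * gaussSum χ ZMod.stdAddChar :=
    gaussSum_mulShift_of_isPrimitive ZMod.stdAddChar hχ m
  simp_rw [hcot, Finset.sum_add_distrib, ← Finset.sum_mul, MulChar.sum_eq_zero_of_ne_one hχ1,
    zero_mul, zero_add]
  rw [Finset.sum_comm, Finset.mul_sum]
  refine Finset.sum_congr rfl fun m _ ↦ ?_
  rw [← Finset.mul_sum, hgauss]
  ring

theorem LFunction_one_eq_of_odd {N : ℕ} [NeZero N] {χ : DirichletCharacter ℂ N}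
    (hχ : χ.IsPrimitive) (hodd : χ.Odd) :
    χ.LFunction 1 =
      Real.pi * I / N ^ 2 * gaussSum χ ZMod.stdAddChar * ∑ m ∈ Finset.range N, m * χ⁻¹ m := by
  have hχ1 : χ ≠ 1 := by
    rintro rfl
    rw [DirichletCharacter.Odd, MulChar.one_apply isUnit_one.neg] at hodd
    norm_num at hodd
  have hN : N ≠ 1 := by
    rintro rfl
    exact hχ1 χ.level_one
  have hzeta (j : ZMod N) : χ j * hurwitzZetaOdd (ZMod.toAddCircle j) 1 =
      Real.pi / 2 * (χ j * Complex.cot (Real.pi * (j.val / N : ℝ))) := by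
    rcases eq_or_ne j 0 with rfl | hj
    · simp [χ.map_zero' hN]
    · have hN0 : (0 : ℝ) < N := Nat.cast_pos.mpr (NeZero.pos N)
      have hj0 : (0 : ℝ) < j.val := Nat.cast_pos.mpr (ZMod.val_pos.mpr hj)
      rw [ZMod.toAddCircle_apply, hurwitzZetaOdd_one (div_pos hj0 hN0)
        ((div_lt_one hN0).mpr (Nat.cast_lt.mpr (ZMod.val_lt j)))]
      ring
  rw [DirichletCharacter.LFunction, ZMod.LFunction_def_odd hodd.to_fun]
  simp_rw [hzeta]
  rw [← Finset.mul_sum, sum_mulChar_mul_cot hχ hχ1, Complex.cpow_neg_one]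
  ring

theorem isPrimitive_legendreChar (l : ℕ) [Fact l.Prime] (hl : l ≠ 2) :
    DirichletCharacter.IsPrimitive (legendreChar l ℂ) := by
  refine ((Nat.dvd_prime Fact.out).mp (DirichletCharacter.conductor_dvd_level _)).resolve_left ?_
  rw [← DirichletCharacter.eq_one_iff_conductor_eq_one]
  exact legendreChar_ne_one l ℂ hl

theorem norm_LFunction_legendreChar_one (l : ℕ) [Fact l.Prime] (hl : l % 4 = 3) :
    ‖DirichletCharacter.LFunction (legendreChar l ℂ) 1‖ =
      Real.pi * |(legendreMoment l : ℝ)| / (l * Real.sqrt l) := by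
  have hodd : DirichletCharacter.Odd (legendreChar l ℂ) := legendreChar_neg_one l ℂ hl
  have hmoment : ∑ m ∈ Finset.range l, m * (legendreChar l ℂ)⁻¹ m = legendreMoment l := by
    rw [(isQuadratic_legendreChar l ℂ).inv, legendreMoment]
    push_cast
    exact Finset.sum_congr rfl fun m _ ↦ by rw [legendreChar_natCast, mul_comm]
  have hgauss : ‖gaussSum (legendreChar l ℂ) ZMod.stdAddChar‖ = Real.sqrt l := by
    have h := congrArg norm (gaussSum_sq (legendreChar_ne_one l ℂ (by lia))
      (isQuadratic_legendreChar l ℂ) (ZMod.isPrimitive_stdAddChar l))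
    rw [legendreChar_neg_one l ℂ hl, ZMod.card, neg_one_mul, norm_neg, norm_pow,
      Complex.norm_natCast] at h
    rw [← h, Real.sqrt_sq (norm_nonneg _)]
  have hsqrt : Real.sqrt l * Real.sqrt l = l := Real.mul_self_sqrt (Nat.cast_nonneg l)
  rw [LFunction_one_eq_of_odd (isPrimitive_legendreChar l (by lia)) hodd, hmoment]
  simp only [norm_mul, norm_div, norm_pow, Complex.norm_natCast, Complex.norm_real, Complex.norm_I,
    Complex.norm_intCast, hgauss, Real.norm_eq_abs, abs_of_pos Real.pi_pos, mul_one]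
  rw [div_mul_eq_mul_div, div_mul_eq_mul_div, div_eq_div_iff]
  · linear_combination Real.pi * |(legendreMoment l : ℝ)| * l * hsqrt
  all_goals
  · have : (0 : ℝ) < l := Nat.cast_pos.mpr (NeZero.pos l)
    positivity

end LFunctionAtOne

section ImagQuadratic

open NumberField

variable {K : Type*} [Field K] {θ : 𝓞 K} {k : ℤ}

/-- `𝓞 K` is `ℤ ⊕ ℤθ` for an element `θ` with `θ² = θ - k`, where `k > 1`. These are the rings of
integers of the imaginary quadratic fields of odd discriminant `1 - 4k` other than `ℚ(√-3)`; the
exclusion of `k = 1` leaves `±1` as the only units. -/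
structure IsImagQuadraticGenerator (θ : 𝓞 K) (k : ℤ) : Prop where
  one_lt : 1 < k
  sq_eq : θ ^ 2 = θ - k
  exists_eq : ∀ x : 𝓞 K, ∃ a b : ℤ, x = a + b * θ

namespace IsImagQuadraticGenerator

theorem sq_two_mul_sub_one (h : IsImagQuadraticGenerator θ k) :
    (2 * θ - 1) ^ 2 = ((1 - 4 * k : ℤ) : 𝓞 K) := by
  push_cast
  linear_combination 4 * h.sq_eq

theorem normForm_nonneg (h : IsImagQuadraticGenerator θ k) (a b : ℤ) :
    0 ≤ a ^ 2 + a * b + k * b ^ 2 := by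
  nlinarith [sq_nonneg (2 * a + b), mul_nonneg (sub_nonneg.mpr h.one_lt.le) (sq_nonneg b)]

theorem eq_zero_of_normForm_le_one (h : IsImagQuadraticGenerator θ k) {a b : ℤ}
    (hab : a ^ 2 + a * b + k * b ^ 2 ≤ 1) : b = 0 := by
  have hb : b ^ 2 < 1 := by
    nlinarith [sq_nonneg (2 * a + b), mul_nonneg (sub_nonneg.mpr h.one_lt) (sq_nonneg b)]
  exact pow_eq_zero_iff two_ne_zero |>.mp (le_antisymm (Int.lt_add_one_iff.mp hb) (sq_nonneg b))

theorem top_le_span (h : IsImagQuadraticGenerator θ k) :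
    ⊤ ≤ Submodule.span ℤ (Set.range ![(1 : 𝓞 K), θ]) := by
  intro x _
  obtain ⟨a, b, rfl⟩ := h.exists_eq x
  rw [Matrix.range_cons, Matrix.range_cons, Matrix.range_empty, Set.union_empty,
    Set.singleton_union, Submodule.mem_span_pair]
  exact ⟨a, b, by simp⟩

variable [NumberField K]

theorem linearIndependent (h : IsImagQuadraticGenerator θ k) :
    LinearIndependent ℤ ![(1 : 𝓞 K), θ] := by
  refine LinearIndependent.pair_iff.mpr fun a b hab ↦ ?_
  have hN : a ^ 2 + a * b + k * b ^ 2 = 0 := by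
    rw [zsmul_eq_mul, zsmul_eq_mul, mul_one] at hab
    have : ((a ^ 2 + a * b + k * b ^ 2 : ℤ) : 𝓞 K) = 0 := by
      push_cast
      linear_combination (a + b - b * θ) * hab + (b : 𝓞 K) ^ 2 * h.sq_eq
    exact_mod_cast this
  obtain rfl := h.eq_zero_of_normForm_le_one (hN.trans_le zero_le_one)
  exact ⟨by simpa using hN, rfl⟩

/-- The basis `(1, θ)` of `𝓞 K` over `ℤ`. -/
noncomputable def basis (h : IsImagQuadraticGenerator θ k) : Module.Basis (Fin 2) ℤ (𝓞 K) :=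
  .mk h.linearIndependent h.top_le_span

theorem basis_zero (h : IsImagQuadraticGenerator θ k) : h.basis 0 = 1 := by simp [basis]

theorem basis_one (h : IsImagQuadraticGenerator θ k) : h.basis 1 = θ := by simp [basis]

theorem basis_repr (h : IsImagQuadraticGenerator θ k) (a b : ℤ) :
    h.basis.repr (a + b * θ) = Finsupp.single 0 a + Finsupp.single 1 b := by
  have : (a + b * θ : 𝓞 K) = a • h.basis 0 + b • h.basis 1 := by
    simp [basis_zero, basis_one]
  rw [this, map_add, map_smul, map_smul, Module.Basis.repr_self, Module.Basis.repr_self]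
  simp

theorem leftMulMatrix_basis (h : IsImagQuadraticGenerator θ k) (a b : ℤ) :
    Algebra.leftMulMatrix h.basis (a + b * θ) = !![a, -(k * b); b, a + b] := by
  have hmul : (a + b * θ) * θ = (-(k * b) : ℤ) + (a + b : ℤ) * θ := by
    push_cast
    linear_combination (b : 𝓞 K) * h.sq_eq
  ext i j
  rw [Algebra.leftMulMatrix_eq_repr_mul]
  fin_cases j
  · fin_cases i <;> simp [basis_zero, basis_repr]
  · fin_cases i <;> simp only [Fin.mk_one, basis_one, hmul, basis_repr] <;> simp

theorem norm_eq (h : IsImagQuadraticGenerator θ k) (a b : ℤ) :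
    Algebra.norm ℤ (a + b * θ : 𝓞 K) = a ^ 2 + a * b + k * b ^ 2 := by
  rw [Algebra.norm_eq_matrix_det h.basis, h.leftMulMatrix_basis, Matrix.det_fin_two_of]
  ring

theorem trace_eq (h : IsImagQuadraticGenerator θ k) (a b : ℤ) :
    Algebra.trace ℤ (𝓞 K) (a + b * θ) = 2 * a + b := by
  rw [Algebra.trace_eq_matrix_trace h.basis, h.leftMulMatrix_basis, Matrix.trace_fin_two_of]
  ring

theorem finrank_int (h : IsImagQuadraticGenerator θ k) : Module.finrank ℤ (𝓞 K) = 2 := by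
  rw [Module.finrank_eq_card_basis h.basis, Fintype.card_fin]

theorem discr_eq (h : IsImagQuadraticGenerator θ k) : discr K = 1 - 4 * k := by
  have h₁ : Algebra.trace ℤ (𝓞 K) 1 = 2 := by simpa using h.trace_eq 1 0
  have hθ : Algebra.trace ℤ (𝓞 K) θ = 1 := by simpa using h.trace_eq 0 1
  have hθθ : Algebra.trace ℤ (𝓞 K) (θ * θ) = 1 - 2 * k := by
    have hsq : θ * θ = (-k : ℤ) + (1 : ℤ) * θ := by
      push_cast
      linear_combination h.sq_eq
    rw [hsq, h.trace_eq]
    ring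
  rw [← discr_eq_discr K h.basis, Algebra.discr_def, Matrix.det_fin_two]
  simp only [Algebra.traceMatrix_apply, Algebra.traceForm_apply, basis_zero, basis_one, one_mul,
    mul_one, h₁, hθ, hθθ]
  ring

theorem eq_one_or_eq_neg_one (h : IsImagQuadraticGenerator θ k) (u : (𝓞 K)ˣ) :
    u = 1 ∨ u = -1 := by
  obtain ⟨a, b, hu⟩ := h.exists_eq u
  have hN : a ^ 2 + a * b + k * b ^ 2 = 1 := by
    rw [← Int.natAbs_of_nonneg (h.normForm_nonneg a b), ← h.norm_eq, ← hu,
      Int.isUnit_iff_natAbs_eq.mp (u.isUnit.map (Algebra.norm ℤ))]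
    rfl
  obtain rfl := h.eq_zero_of_normForm_le_one hN.le
  rcases sq_eq_one_iff.mp (show a ^ 2 = 1 by simpa using hN) with rfl | rfl
  · exact .inl (Units.ext (by simpa using hu))
  · exact .inr (Units.ext (by simpa using hu))

theorem torsionOrder_eq (h : IsImagQuadraticGenerator θ k) : Units.torsionOrder K = 2 := by
  have hne : (1 : (𝓞 K)ˣ) ≠ -1 := fun h1 ↦
    (two_ne_zero : (2 : 𝓞 K) ≠ 0) (by
    linear_combination (by simpa using congrArg Units.val h1 : (1 : 𝓞 K) = -1))
  have htorsion : (Units.torsion K : Set (𝓞 K)ˣ) = {1, -1} := by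
    refine Set.Subset.antisymm (fun u _ ↦ h.eq_one_or_eq_neg_one u) ?_
    rintro u (rfl | rfl)
    · exact one_mem _
    · exact (CommGroup.mem_torsion _).mpr (isOfFinOrder_iff_pow_eq_one.mpr ⟨2, two_pos, by simp⟩)
  rw [Units.torsionOrder, ← SetLike.coe_sort_coe, htorsion, Nat.card_coe_set_eq,
    Set.ncard_pair hne]

theorem nrRealPlaces_eq_zero (h : IsImagQuadraticGenerator θ k) :
    InfinitePlace.nrRealPlaces K = 0 := by
  classical
  refine Fintype.card_eq_zero_iff.mpr ⟨fun ⟨w, hw⟩ ↦ ?_⟩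
  let σ : 𝓞 K →+* ℝ := (InfinitePlace.embedding_of_isReal hw).comp (algebraMap (𝓞 K) K)
  have hσ := congrArg σ h.sq_two_mul_sub_one
  rw [map_pow, map_intCast] at hσ
  have : (0 : ℤ) ≤ 1 - 4 * k := by exact_mod_cast hσ ▸ sq_nonneg (σ (2 * θ - 1))
  linarith [h.one_lt]

theorem nrComplexPlaces_eq_one (h : IsImagQuadraticGenerator θ k) :
    InfinitePlace.nrComplexPlaces K = 1 := by
  have := InfinitePlace.card_add_two_mul_card_eq_rank K
  rw [h.nrRealPlaces_eq_zero, ← RingOfIntegers.rank, h.finrank_int] at this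
  omega

theorem regulator_eq_one (h : IsImagQuadraticGenerator θ k) : Units.regulator K = 1 := by
  classical
  have hrank : Units.rank K = 0 := by
    rw [Units.rank, InfinitePlace.card_eq_nrRealPlaces_add_nrComplexPlaces,
      h.nrRealPlaces_eq_zero, h.nrComplexPlaces_eq_one]
  have : IsEmpty {w : InfinitePlace K // w ≠ Units.dirichletUnitTheorem.w₀} := by
    rw [← (Units.equivFinRank K).isEmpty_congr, hrank]
    infer_instance
  rw [Units.regulator_eq_det', Matrix.det_isEmpty, abs_one]

theorem dedekindZeta_residue_eq (h : IsImagQuadraticGenerator θ k) :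
    dedekindZeta_residue K = Real.pi * classNumber K / √(4 * k - 1) := by
  have hk : (1 : ℝ) < k := by exact_mod_cast h.one_lt
  have habs : |(1 - 4 * k : ℝ)| = 4 * k - 1 := by
    rw [abs_of_nonpos (by linarith)]
    ring
  rw [dedekindZeta_residue_def, h.nrRealPlaces_eq_zero, h.nrComplexPlaces_eq_one,
    h.regulator_eq_one, h.torsionOrder_eq, h.discr_eq]
  push_cast
  rw [habs]
  field_simp

end IsImagQuadraticGenerator

end ImagQuadratic

section IdealCount

open NumberField Ideal Finset.HasAntidiagonal

variable {R : Type*} [CommRing R]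

theorem sup_eq_top_of_isCoprime_intCast {I J : Ideal R} {m n : ℤ} (hmn : IsCoprime m n)
    (hm : (m : R) ∈ I) (hn : (n : R) ∈ J) : I ⊔ J = ⊤ := by
  obtain ⟨a, b, hab⟩ := hmn.map (Int.castRingHom R)
  rw [eq_top_iff_one, ← hab]
  exact Submodule.add_mem_sup (I.mul_mem_left _ hm) (J.mul_mem_left _ hn)

theorem sup_span_mul_sup_span {I : Ideal R} {x y : R} (hxy : x * y ∈ I)
    (h : span {x} ⊔ span {y} = ⊤) : (I ⊔ span {x}) * (I ⊔ span {y}) = I := by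
  refine le_antisymm ?_ ?_
  · rw [Ideal.sup_mul, Ideal.mul_sup (span {x}), span_singleton_mul_span_singleton]
    exact sup_le mul_le_left (sup_le mul_le_right ((span_singleton_le_iff_mem I).mpr hxy))
  · calc I = I * (span {x} ⊔ span {y}) := by rw [h, mul_top]
      _ = span {x} * I ⊔ I * span {y} := by rw [Ideal.mul_sup, mul_comm I (span {x})]
      _ ≤ _ := sup_le (mul_mono le_sup_right le_sup_left) (mul_mono le_sup_left le_sup_right)

variable {K : Type*} [Field K] [NumberField K]

theorem natCast_mem_of_absNorm_eq {I : Ideal (𝓞 K)} {n : ℕ} (h : absNorm I = n) :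
    (n : 𝓞 K) ∈ I :=
  h ▸ absNorm_mem I

theorem isCoprime_of_coprime_absNorm {I J : Ideal (𝓞 K)} (h : (absNorm I).Coprime (absNorm J)) :
    IsCoprime I J :=
  isCoprime_iff_sup_eq.mpr <| sup_eq_top_of_isCoprime_intCast (Nat.isCoprime_iff_coprime.mpr h)
    (by simpa using absNorm_mem I) (by simpa using absNorm_mem J)

theorem absNorm_sup_span_natCast {I : Ideal (𝓞 K)} {m n : ℕ} (hmn : m.Coprime n)
    (hI : absNorm I = m * n) : absNorm (I ⊔ span {(m : 𝓞 K)}) = m := by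
  have hN (j : ℕ) : absNorm (I ⊔ span {(j : 𝓞 K)}) ∣ j ^ Module.finrank ℤ (𝓞 K) :=
    absNorm_span_natCast (S := 𝓞 K) j ▸ absNorm_dvd_absNorm_of_le le_sup_right
  have hprod : absNorm (I ⊔ span {(m : 𝓞 K)}) * absNorm (I ⊔ span {(n : 𝓞 K)}) = m * n := by
    rw [← map_mul, sup_span_mul_sup_span, hI]
    · exact_mod_cast natCast_mem_of_absNorm_eq hI
    · refine sup_eq_top_of_isCoprime_intCast (Nat.isCoprime_iff_coprime.mpr hmn) ?_ ?_ <;> simp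
  have hmcop := (hmn.pow_left _).coprime_dvd_left (hN m)
  have hncop := (hmn.symm.pow_left _).coprime_dvd_left (hN n)
  exact Nat.dvd_antisymm (hmcop.dvd_of_dvd_mul_right (hprod ▸ dvd_mul_right _ _))
    (hncop.symm.dvd_of_dvd_mul_right (hprod ▸ dvd_mul_right m n))

theorem le_of_mul_eq_mul_of_coprime_absNorm {I J I' J' : Ideal (𝓞 K)}
    (h : (absNorm I).Coprime (absNorm J')) (he : I * J = I' * J') : I' ≤ I :=
  le_of_dvd ((isCoprime_of_coprime_absNorm h).dvd_of_dvd_mul_right (he ▸ dvd_mul_right I J))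

variable (K) in
/-- The number of ideals of `𝓞 K` of absolute norm `n`; these are the coefficients of the Dedekind
zeta function of `K`. -/
noncomputable def idealCount (n : ℕ) : ℕ := Nat.card {I : Ideal (𝓞 K) // absNorm I = n}

variable (K) in
theorem idealCount_one : idealCount K 1 = 1 := by
  have : Unique {I : Ideal (𝓞 K) // absNorm I = 1} :=
    ⟨⟨⟨⊤, absNorm_top⟩⟩, fun I ↦ Subtype.ext (absNorm_eq_one_iff.mp I.2)⟩
  exact Nat.card_unique

variable (K) in
theorem idealCount_mul_of_coprime {m n : ℕ} (hmn : m.Coprime n) :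
    idealCount K (m * n) = idealCount K m * idealCount K n := by
  rw [idealCount, idealCount, idealCount, ← Nat.card_prod]
  refine (Nat.card_congr (.ofBijective (fun x : {I : Ideal (𝓞 K) // absNorm I = m} ×
    {I : Ideal (𝓞 K) // absNorm I = n} ↦ ⟨x.1 * x.2, by rw [map_mul, x.1.2, x.2.2]⟩)
      ⟨?_, ?_⟩)).symm
  · rintro ⟨⟨I, hI⟩, ⟨J, hJ⟩⟩ ⟨⟨I', hI'⟩, ⟨J', hJ'⟩⟩ h
    simp only [Subtype.mk.injEq] at h
    have hcomm : J * I = J' * I' := by rw [mul_comm J, h, mul_comm]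
    obtain rfl : I = I' := le_antisymm
      (le_of_mul_eq_mul_of_coprime_absNorm (by rwa [hI', hJ]) h.symm)
      (le_of_mul_eq_mul_of_coprime_absNorm (by rwa [hI, hJ']) h)
    obtain rfl : J = J' := le_antisymm
      (le_of_mul_eq_mul_of_coprime_absNorm (by rw [hJ', hI]; exact hmn.symm) hcomm.symm)
      (le_of_mul_eq_mul_of_coprime_absNorm (by rw [hJ, hI']; exact hmn.symm) hcomm)
    rfl
  · rintro ⟨I, hI⟩
    refine ⟨⟨⟨I ⊔ span {(m : 𝓞 K)}, absNorm_sup_span_natCast hmn hI⟩, ⟨I ⊔ span {(n : 𝓞 K)},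
      absNorm_sup_span_natCast hmn.symm (hI.trans (mul_comm m n))⟩⟩,
      Subtype.ext (sup_span_mul_sup_span ?_ ?_)⟩
    · exact_mod_cast natCast_mem_of_absNorm_eq hI
    · refine sup_eq_top_of_isCoprime_intCast (Nat.isCoprime_iff_coprime.mpr hmn) ?_ ?_ <;> simp

theorem idealCount_eq_card {n : ℕ} {S : Finset (Ideal (𝓞 K))} (h : ∀ I, absNorm I = n ↔ I ∈ S) :
    idealCount K n = S.card :=
  Nat.subtype_card S fun I ↦ (h I).symm

theorem dvd_span_pow_of_absNorm_eq_pow {p n : ℕ} {I : Ideal (𝓞 K)} (h : absNorm I = p ^ n) :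
    I ∣ span {(p : 𝓞 K)} ^ n := by
  rw [dvd_iff_le, span_singleton_pow, span_singleton_le_iff_mem]
  exact_mod_cast natCast_mem_of_absNorm_eq h

theorem prime_of_absNorm_eq_prime {P : Ideal (𝓞 K)} {p : ℕ} (hp : p.Prime)
    (h : absNorm P = p) : Prime P := by
  refine prime_of_isPrime ?_ (isPrime_of_irreducible_absNorm (h ▸ hp))
  rintro rfl
  exact hp.ne_zero (h ▸ absNorm_bot)

theorem left_eq_of_pow_mul_pow_eq {M : Type*} [CommMonoidWithZero M] [IsCancelMulZero M]
    {x y : M} (hx : Prime x) (hxy : ¬ x ∣ y) {i j i' j' : ℕ}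
    (h : x ^ i * y ^ j = x ^ i' * y ^ j') : i = i' := by
  have hmult (i j : ℕ) : emultiplicity x (x ^ i * y ^ j) = i := by
    rw [emultiplicity_mul hx, emultiplicity_pow_self_of_prime hx,
      emultiplicity_eq_zero.mpr fun hdvd ↦ hxy (hx.dvd_of_dvd_pow hdvd), add_zero]
  exact_mod_cast (hmult i j).symm.trans ((congrArg _ h).trans (hmult i' j'))

theorem idealCount_pow_of_mul_eq_span {p : ℕ} (hp : p.Prime) {P Q : Ideal (𝓞 K)}
    (hPQ : P * Q = span {(p : 𝓞 K)}) (hne : P ≠ Q) (hP : absNorm P = p) (hQ : absNorm Q = p)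
    (n : ℕ) : idealCount K (p ^ n) = n + 1 := by
  classical
  have hPprime := prime_of_absNorm_eq_prime hp hP
  have hQprime := prime_of_absNorm_eq_prime hp hQ
  have hnorm (i j : ℕ) : absNorm (P ^ i * Q ^ j) = p ^ (i + j) := by
    rw [map_mul, map_pow, map_pow, hP, hQ, pow_add]
  rw [idealCount_eq_card (S := (antidiagonal n).image fun x ↦ P ^ x.1 * Q ^ x.2),
    Finset.card_image_of_injOn, Finset.Nat.card_antidiagonal]
  · rintro ⟨i, j⟩ hij ⟨i', j'⟩ hij' h
    have hPQ' : ¬ P ∣ Q := fun hd ↦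
      hne (associated_iff_eq.mp ((hPprime.dvd_prime_iff_associated hQprime).mp hd))
    rw [Finset.mem_coe, mem_antidiagonal] at hij hij'
    have := left_eq_of_pow_mul_pow_eq hPprime hPQ' h
    exact Prod.ext this (by omega)
  · intro I
    simp only [Finset.mem_image, mem_antidiagonal, Prod.exists]
    constructor
    · intro hI
      have hdvd := dvd_span_pow_of_absNorm_eq_pow hI
      rw [← hPQ, mul_pow] at hdvd
      obtain ⟨A, B, hA, hB, rfl⟩ := exists_dvd_and_dvd_of_dvd_mul hdvd
      obtain ⟨i, -, hi⟩ := (dvd_prime_pow hPprime n).mp hA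
      obtain ⟨j, -, hj⟩ := (dvd_prime_pow hQprime n).mp hB
      obtain rfl := associated_iff_eq.mp hi
      obtain rfl := associated_iff_eq.mp hj
      exact ⟨i, j, Nat.pow_right_injective hp.two_le ((hnorm i j).symm.trans hI), rfl⟩
    · rintro ⟨i, j, rfl, rfl⟩
      exact hnorm i j

theorem idealCount_pow_of_pow_eq_span {p d e : ℕ} (hp : p.Prime) (he : 0 < e) {P : Ideal (𝓞 K)}
    (hPprime : Prime P) (hPd : P ^ d = span {(p : 𝓞 K)}) (hP : absNorm P = p ^ e) (n : ℕ) :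
    idealCount K (p ^ n) = if e ∣ n then 1 else 0 := by
  classical
  have hnorm (i : ℕ) : absNorm (P ^ i) = p ^ (e * i) := by rw [map_pow, hP, pow_mul]
  have hpow {I : Ideal (𝓞 K)} (hI : absNorm I = p ^ n) : ∃ i, e * i = n ∧ I = P ^ i := by
    have hdvd := dvd_span_pow_of_absNorm_eq_pow hI
    rw [← hPd, ← pow_mul] at hdvd
    obtain ⟨i, -, hi⟩ := (dvd_prime_pow hPprime _).mp hdvd
    obtain rfl := associated_iff_eq.mp hi
    exact ⟨i, Nat.pow_right_injective hp.two_le ((hnorm i).symm.trans hI), rfl⟩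
  split_ifs with hdvd
  · obtain ⟨m, rfl⟩ := hdvd
    rw [idealCount_eq_card (S := {P ^ m}), Finset.card_singleton]
    refine fun I ↦ ⟨fun hI ↦ ?_, fun hI ↦ Finset.mem_singleton.mp hI ▸ hnorm m⟩
    obtain ⟨i, hi, rfl⟩ := hpow hI
    rw [Nat.eq_of_mul_eq_mul_left he hi, Finset.mem_singleton]
  · rw [idealCount_eq_card (S := ∅), Finset.card_empty]
    refine fun I ↦ ⟨fun hI ↦ ?_, fun hI ↦ absurd hI (Finset.notMem_empty I)⟩
    obtain ⟨i, hi, -⟩ := hpow hI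
    exact absurd ⟨i, hi.symm⟩ hdvd

end IdealCount

section Splitting

open NumberField Ideal

theorem exists_dvd_sq_sub_add_iff_isSquare {p : ℕ} [Fact p.Prime] (hp : p ≠ 2) (k : ℤ) :
    (∃ c : ℤ, (p : ℤ) ∣ c ^ 2 - c + k) ↔ IsSquare ((1 - 4 * k : ℤ) : ZMod p) := by
  have : NeZero (2 : ZMod p) := ⟨Ring.two_ne_zero (by rwa [ZMod.ringChar_zmod_n])⟩
  simp only [← ZMod.intCast_zmod_eq_zero_iff_dvd]
  push_cast
  constructor
  · rintro ⟨c, hc⟩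
    exact ⟨2 * c - 1, by linear_combination -4 * hc⟩
  · rintro ⟨y, hy⟩
    obtain ⟨c, hc⟩ := ZMod.intCast_surjective ((1 + y) / 2)
    exact ⟨c, by rw [hc]; field_simp; linear_combination -hy⟩

theorem legendreSym_neg_eq {l p : ℕ} [Fact l.Prime] [Fact p.Prime] (hl : l % 4 = 3)
    (hp : p ≠ 2) : legendreSym p (-l) = legendreSym l p := by
  have hmod : p % 4 = 1 ∨ p % 4 = 3 := by
    have := (Fact.out : p.Prime).eq_two_or_odd
    omega
  rw [neg_eq_neg_one_mul, legendreSym.mul, legendreSym.at_neg_one hp]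
  rcases hmod with h | h
  · rw [ZMod.χ₄_nat_one_mod_four h, one_mul,
      legendreSym.quadratic_reciprocity_one_mod_four h (by omega)]
  · rw [ZMod.χ₄_nat_three_mod_four h, legendreSym.quadratic_reciprocity_three_mod_four h hl]
    ring

theorem legendreSym_two_eq_one_iff {l : ℕ} [Fact l.Prime] {k : ℤ} (hk : (l : ℤ) = 4 * k - 1) :
    legendreSym l 2 = 1 ↔ ∃ c : ℤ, 2 ∣ c ^ 2 - c + k := by
  rw [legendreSym.at_two (by omega), ZMod.χ₈_nat_eq_if_mod_eight]
  have heven (c : ℤ) : 2 ∣ c ^ 2 - c := by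
    rw [sq, ← mul_sub_one]
    exact (Int.even_mul_pred_self c).two_dvd
  constructor
  · intro h
    exact ⟨0, by split_ifs at h <;> omega⟩
  · rintro ⟨c, hc⟩
    have := heven c
    rw [if_neg (by omega), if_pos (by omega)]

theorem legendreSym_eq_one_iff_exists_dvd {l p : ℕ} [Fact l.Prime] [Fact p.Prime] (hpl : p ≠ l)
    {k : ℤ} (hk : (l : ℤ) = 4 * k - 1) :
    legendreSym l p = 1 ↔ ∃ c : ℤ, (p : ℤ) ∣ c ^ 2 - c + k := by
  rcases eq_or_ne p 2 with rfl | hp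
  · exact_mod_cast legendreSym_two_eq_one_iff hk
  · have hne : ((-l : ℤ) : ZMod p) ≠ 0 := by
      rw [Int.cast_neg, neg_ne_zero, Int.cast_natCast, Ne, ZMod.natCast_eq_zero_iff]
      exact fun h ↦ hpl ((Nat.prime_dvd_prime_iff_eq Fact.out Fact.out).mp h)
    rw [← legendreSym_neg_eq (by omega) hp, legendreSym.eq_one_iff p hne,
      exists_dvd_sq_sub_add_iff_isSquare hp, hk]
    ring_nf

/-- The ideal `(p, θ - c)`. When `θ` generates a quadratic ring of integers and `c` is a root modulo
`p` of its minimal polynomial, this is a prime above `p`. -/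
def linearIdeal {R : Type*} [CommRing R] (θ : R) (p : ℕ) (c : ℤ) : Ideal R := span {(p : R), θ - c}

section CommRing

variable {R : Type*} [CommRing R] {θ : R} {p : ℕ} {c k : ℤ}

variable (θ p c) in
theorem natCast_mem_linearIdeal : (p : R) ∈ linearIdeal θ p c := subset_span (by simp)

variable (θ p c) in
theorem sub_mem_linearIdeal : θ - c ∈ linearIdeal θ p c := subset_span (by simp)

theorem linearIdeal_sup_eq_top (hpk : IsCoprime (p : ℤ) (1 - 4 * k))
    (hc : (p : ℤ) ∣ c ^ 2 - c + k) : linearIdeal θ p c ⊔ linearIdeal θ p (1 - c) = ⊤ := by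
  set I := linearIdeal θ p c ⊔ linearIdeal θ p (1 - c)
  obtain ⟨m, hm⟩ := hc
  have hp : (p : R) ∈ I := mem_sup_left (natCast_mem_linearIdeal θ p c)
  have hdiff : ((1 - 2 * c : ℤ) : R) ∈ I := by
    convert I.sub_mem (mem_sup_left (sub_mem_linearIdeal θ p c))
      (mem_sup_right (sub_mem_linearIdeal θ p (1 - c))) using 1
    push_cast
    ring
  have hdisc : ((1 - 4 * k : ℤ) : R) ∈ I := by
    have : 1 - 4 * k = (1 - 2 * c) * (1 - 2 * c) - p * (4 * m) := by linear_combination -4 * hm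
    rw [this, Int.cast_sub, Int.cast_mul, Int.cast_mul, Int.cast_natCast]
    exact I.sub_mem (I.mul_mem_right _ hdiff) (I.mul_mem_right _ hp)
  rw [← sup_idem I]
  exact sup_eq_top_of_isCoprime_intCast hpk (by exact_mod_cast hp) hdisc

theorem linearIdeal_mul_linearIdeal (hθ : θ ^ 2 = θ - k) (hpk : IsCoprime (p : ℤ) (1 - 4 * k))
    (hc : (p : ℤ) ∣ c ^ 2 - c + k) :
    linearIdeal θ p c * linearIdeal θ p (1 - c) = span {(p : R)} := by
  refine le_antisymm ?_ ?_
  · obtain ⟨m, hm⟩ := hc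
    have hmR : (c : R) ^ 2 - c + k = p * m := by exact_mod_cast congrArg (Int.cast : ℤ → R) hm
    rw [linearIdeal, linearIdeal, span_pair_mul_span_pair, span_le]
    rintro x hx
    rw [SetLike.mem_coe, mem_span_singleton]
    rcases hx with rfl | rfl | rfl | rfl
    · exact dvd_mul_right _ _
    · exact dvd_mul_right _ _
    · exact dvd_mul_left _ _
    · exact ⟨-m, by push_cast; linear_combination hθ - hmR⟩
  · have hle (c : ℤ) : span {(p : R)} ≤ linearIdeal θ p c := span_mono (by simp)
    rw [← mul_top (span {(p : R)}), ← linearIdeal_sup_eq_top hpk hc, Ideal.mul_sup,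
      mul_comm (span {(p : R)})]
    exact sup_le (mul_mono le_rfl (hle _)) (mul_mono (hle _) le_rfl)

theorem dvd_of_intCast_mem (hp : p.Prime) {I : Ideal R} (hI : I ≠ ⊤) (hpI : (p : R) ∈ I)
    {n : ℤ} (hn : (n : R) ∈ I) : (p : ℤ) ∣ n := by
  by_contra hdvd
  refine hI ?_
  rw [← sup_idem I]
  exact sup_eq_top_of_isCoprime_intCast
    ((Nat.prime_iff_prime_int.mp hp).coprime_iff_not_dvd.mpr hdvd) (by exact_mod_cast hpI) hn

end CommRing

section NumberField

variable {K : Type*} [Field K] [NumberField K] {θ : 𝓞 K} {k : ℤ} {p : ℕ}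

theorem exists_intCast_sub_mem_of_absNorm_eq_prime (hp : p.Prime) {P : Ideal (𝓞 K)}
    (hP : absNorm P = p) (x : 𝓞 K) : ∃ c : ℤ, x - c ∈ P := by
  have := Fact.mk hp
  have : Nontrivial (𝓞 K ⧸ P) := Ideal.Quotient.nontrivial_iff.mpr fun h ↦
    hp.one_lt.ne (by rw [← hP, h, absNorm_top])
  obtain ⟨c, hc⟩ := AddSubgroup.mem_zmultiples_iff.mp <|
    mem_zmultiples_of_prime_card (G := 𝓞 K ⧸ P) (g' := Ideal.Quotient.mk P x) hP one_ne_zero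
  exact ⟨c, Ideal.Quotient.eq.mp (by simpa [zsmul_eq_mul] using hc.symm)⟩

theorem exists_dvd_sq_sub_add_of_absNorm_eq_prime (hp : p.Prime) (hθ : θ ^ 2 = θ - k)
    {P : Ideal (𝓞 K)} (hP : absNorm P = p) : ∃ c : ℤ, (p : ℤ) ∣ c ^ 2 - c + k := by
  obtain ⟨c, hc⟩ := exists_intCast_sub_mem_of_absNorm_eq_prime hp hP θ
  have hmem : ((c ^ 2 - c + k : ℤ) : 𝓞 K) ∈ P := by
    convert P.mul_mem_left (1 - θ - c) hc using 1
    push_cast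
    linear_combination hθ
  exact ⟨c, dvd_of_intCast_mem hp (fun h ↦ hp.one_lt.ne (by rw [← hP, h, absNorm_top]))
    (natCast_mem_of_absNorm_eq hP) hmem⟩

namespace IsImagQuadraticGenerator

theorem absNorm_span_natCast (h : IsImagQuadraticGenerator θ k) (n : ℕ) :
    absNorm (span {(n : 𝓞 K)}) = n ^ 2 := by
  rw [Ideal.absNorm_span_natCast, h.finrank_int]

theorem not_natCast_dvd_sub (h : IsImagQuadraticGenerator θ k) (hp : p ≠ 1) (c : ℤ) :
    ¬ (p : 𝓞 K) ∣ θ - c := by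
  rintro ⟨x, hx⟩
  obtain ⟨a, b, rfl⟩ := h.exists_eq x
  have hb := LinearIndependent.pair_iff.mp h.linearIndependent (p * a + c) (p * b - 1) (by
    simp only [zsmul_eq_mul]
    push_cast
    linear_combination -hx)
  exact hp (by exact_mod_cast Int.eq_one_of_mul_eq_one_right p.cast_nonneg (sub_eq_zero.mp hb.2))

theorem absNorm_linearIdeal (h : IsImagQuadraticGenerator θ k) (hp : p.Prime)
    (hpk : IsCoprime (p : ℤ) (1 - 4 * k)) {c : ℤ} (hc : (p : ℤ) ∣ c ^ 2 - c + k) :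
    absNorm (linearIdeal θ p c) = p ∧ absNorm (linearIdeal θ p (1 - c)) = p := by
  have hmul := linearIdeal_mul_linearIdeal h.sq_eq hpk hc
  have hnorm : absNorm (linearIdeal θ p c) * absNorm (linearIdeal θ p (1 - c)) = p ^ 2 := by
    rw [← map_mul, hmul, h.absNorm_span_natCast]
  refine (Nat.Prime.mul_eq_prime_sq_iff hp (fun h1 ↦ ?_) fun h1 ↦ ?_).mp hnorm <;>
    rw [absNorm_eq_one_iff] at h1
  · refine h.not_natCast_dvd_sub hp.ne_one (1 - c) (mem_span_singleton.mp ?_)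
    rw [← hmul, h1, top_mul]
    exact sub_mem_linearIdeal θ p (1 - c)
  · refine h.not_natCast_dvd_sub hp.ne_one c (mem_span_singleton.mp ?_)
    rw [← hmul, h1, mul_top]
    exact sub_mem_linearIdeal θ p c

theorem idealCount_pow_of_dvd (h : IsImagQuadraticGenerator θ k) (hp : p.Prime)
    (hpk : IsCoprime (p : ℤ) (1 - 4 * k)) {c : ℤ} (hc : (p : ℤ) ∣ c ^ 2 - c + k) (n : ℕ) :
    idealCount K (p ^ n) = n + 1 := by
  obtain ⟨hP, hP'⟩ := h.absNorm_linearIdeal hp hpk hc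
  refine idealCount_pow_of_mul_eq_span hp (linearIdeal_mul_linearIdeal h.sq_eq hpk hc) ?_ hP hP' n
  intro heq
  have htop := linearIdeal_sup_eq_top (θ := θ) hpk hc
  rw [← heq, sup_idem, ← absNorm_eq_one_iff, hP] at htop
  exact hp.ne_one htop

theorem idealCount_pow_of_not_dvd (h : IsImagQuadraticGenerator θ k) (hp : p.Prime)
    (hc : ∀ c : ℤ, ¬ (p : ℤ) ∣ c ^ 2 - c + k) (n : ℕ) :
    idealCount K (p ^ n) = if 2 ∣ n then 1 else 0 := by
  have hprime : Prime (span {(p : 𝓞 K)}) := by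
    have hne : span {(p : 𝓞 K)} ≠ ⊤ := fun htop ↦ by
      simpa [hp.ne_one] using (h.absNorm_span_natCast p).symm.trans (absNorm_eq_one_iff.mpr htop)
    obtain ⟨P, hPmax, hle⟩ := exists_le_maximal _ hne
    obtain ⟨Q, hQ⟩ := dvd_iff_le.mpr hle
    have hnorm : absNorm P * absNorm Q = p ^ 2 := by
      rw [← map_mul, ← hQ, h.absNorm_span_natCast]
    have hQtop : Q = ⊤ := by
      by_contra hQ1
      obtain ⟨hPp, -⟩ := (Nat.Prime.mul_eq_prime_sq_iff hp
        (fun h1 ↦ hPmax.ne_top (absNorm_eq_one_iff.mp h1))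
        (fun h1 ↦ hQ1 (absNorm_eq_one_iff.mp h1))).mp hnorm
      obtain ⟨c, hdvd⟩ := exists_dvd_sq_sub_add_of_absNorm_eq_prime hp h.sq_eq hPp
      exact hc c hdvd
    rw [hQ, hQtop, mul_top]
    refine prime_of_isPrime (fun h0 ↦ ?_) hPmax.isPrime
    exact pow_ne_zero 2 hp.ne_zero (by rw [← hnorm, h0, absNorm_bot, zero_mul])
  exact idealCount_pow_of_pow_eq_span hp two_pos hprime (pow_one _) (h.absNorm_span_natCast p) n

theorem idealCount_pow_of_eq (h : IsImagQuadraticGenerator θ k) (hp : p.Prime)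
    (hpk : (p : ℤ) = 4 * k - 1) (n : ℕ) : idealCount K (p ^ n) = 1 := by
  have hsq : span {2 * θ - 1} ^ 2 = span {(p : 𝓞 K)} := by
    have : (1 - 4 * k : ℤ) = -(p : ℤ) := by rw [hpk]; ring
    rw [span_singleton_pow, h.sq_two_mul_sub_one, this, Int.cast_neg, span_singleton_neg,
      Int.cast_natCast]
  have hnorm : absNorm (span {2 * θ - 1}) = p := by
    refine Nat.pow_left_injective two_ne_zero ?_
    simpa only [map_pow, h.absNorm_span_natCast] using congrArg absNorm hsq
  rw [idealCount_pow_of_pow_eq_span hp one_pos (prime_of_absNorm_eq_prime hp hnorm) hsq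
    (hnorm.trans (pow_one p).symm), if_pos (one_dvd n)]

end IsImagQuadraticGenerator

end NumberField

end Splitting

section ClassNumberFormula

open NumberField Filter Topology

variable {K : Type*} [Field K] [NumberField K]

theorem isMultiplicative_toArithmeticFunction_idealCount :
    (toArithmeticFunction fun n ↦ (idealCount K n : ℂ)).IsMultiplicative := by
  refine ArithmeticFunction.IsMultiplicative.iff_ne_zero.mpr ⟨?_, fun hm hn hmn ↦ ?_⟩
  · simp [toArithmeticFunction, idealCount_one]
  · simp [toArithmeticFunction, hm, hn, idealCount_mul_of_coprime K hmn]

theorem zetaMul_prime_pow {N p : ℕ} (χ : DirichletCharacter ℂ N) (hp : p.Prime) (n : ℕ) :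
    χ.zetaMul (p ^ n) = ∑ i ∈ Finset.range (n + 1), χ p ^ i := by
  simp only [DirichletCharacter.zetaMul, ArithmeticFunction.coe_zeta_mul_apply,
    Nat.sum_divisors_prime_pow hp]
  refine Finset.sum_congr rfl fun i _ ↦ ?_
  rw [← χ.apply_eq_toArithmeticFunction_apply (pow_ne_zero i hp.ne_zero), Nat.cast_pow, map_pow]

theorem LSeries_zetaMul_eq {N : ℕ} [NeZero N] (χ : DirichletCharacter ℂ N) {s : ℂ}
    (hs : 1 < s.re) : LSeries χ.zetaMul s = riemannZeta s * χ.LFunction s := by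
  have hχ : LSeriesSummable (toArithmeticFunction (χ ·)) s :=
    (LSeriesSummable_congr _ fun h ↦ χ.apply_eq_toArithmeticFunction_apply h).mp
      (χ.LSeriesSummable_of_one_lt_re hs)
  have hζ : LSeriesSummable (fun n ↦ (ArithmeticFunction.zeta : ArithmeticFunction ℂ) n) s :=
    ArithmeticFunction.LSeriesSummable_zeta_iff.mpr hs
  rw [DirichletCharacter.zetaMul, ArithmeticFunction.LSeries_mul' hζ hχ,
    ← ArithmeticFunction.LSeries_zeta_eq_riemannZeta hs, χ.LFunction_eq_LSeries hs]
  congr 1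
  exact LSeries_congr (fun h ↦ (χ.apply_eq_toArithmeticFunction_apply h).symm) s

theorem tendsto_ofReal_nhdsGT_one : Tendsto ((↑) : ℝ → ℂ) (𝓝[>] 1) (𝓝[≠] 1) := by
  refine tendsto_nhdsWithin_iff.mpr ⟨?_, ?_⟩
  · simpa using (continuous_ofReal.tendsto 1).mono_left nhdsWithin_le_nhds
  · filter_upwards [self_mem_nhdsWithin] with s hs
    exact ofReal_ne_one.mpr (Set.mem_Ioi.mp hs).ne'

theorem dedekindZeta_residue_eq_LFunction_one {N : ℕ} [NeZero N] {χ : DirichletCharacter ℂ N}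
    (hχ : χ ≠ 1)
    (h : ∀ s : ℂ, 1 < s.re → dedekindZeta K s = riemannZeta s * χ.LFunction s) :
    (dedekindZeta_residue K : ℂ) = χ.LFunction 1 := by
  have hζ : Tendsto (fun s : ℝ ↦ ((s : ℂ) - 1) * riemannZeta s) (𝓝[>] 1) (𝓝 1) :=
    riemannZeta_residue_one.comp tendsto_ofReal_nhdsGT_one
  have hL : Tendsto (fun s : ℝ ↦ χ.LFunction s) (𝓝[>] 1) (𝓝 (χ.LFunction 1)) :=
    ((DirichletCharacter.differentiable_LFunction hχ).continuous.tendsto 1).comp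
      (tendsto_ofReal_nhdsGT_one.mono_right nhdsWithin_le_nhds)
  have hmul := hζ.mul hL
  rw [one_mul] at hmul
  refine tendsto_nhds_unique (tendsto_sub_one_mul_dedekindZeta_nhdsGT K) (hmul.congr' ?_)
  filter_upwards [self_mem_nhdsWithin] with s hs
  rw [h s hs, mul_assoc]

namespace IsImagQuadraticGenerator

variable {θ : 𝓞 K} {k : ℤ} {l : ℕ} [Fact l.Prime] (h : IsImagQuadraticGenerator θ k)
  (hk : (l : ℤ) = 4 * k - 1)
include h hk

theorem zetaMul_legendreChar_prime_pow {p : ℕ} (hp : p.Prime) (n : ℕ) :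
    DirichletCharacter.zetaMul (legendreChar l ℂ) (p ^ n) = idealCount K (p ^ n) := by
  have := Fact.mk hp
  rw [zetaMul_prime_pow _ hp, legendreChar_natCast]
  rcases eq_or_ne p l with rfl | hpl
  · rw [h.idealCount_pow_of_eq hp hk, (legendreSym.eq_zero_iff p p).mpr (by simp),
      Finset.sum_range_succ']
    simp
  have hpl' : IsCoprime (p : ℤ) (1 - 4 * k) := by
    rw [show 1 - 4 * k = -(l : ℤ) by linarith, IsCoprime.neg_right_iff]
    exact Nat.isCoprime_iff_coprime.mpr ((Nat.coprime_primes hp Fact.out).mpr hpl)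
  have hiff := legendreSym_eq_one_iff_exists_dvd hpl hk
  rcases legendreSym.eq_one_or_neg_one l (a := p) (by
    rw [Int.cast_natCast, Ne, ZMod.natCast_eq_zero_iff]
    exact fun hd ↦ hpl ((Nat.prime_dvd_prime_iff_eq Fact.out hp).mp hd).symm) with hs | hs
  · obtain ⟨c, hc⟩ := hiff.mp hs
    simp [h.idealCount_pow_of_dvd hp hpl' hc, hs]
  · have hc : ∀ c : ℤ, ¬ (p : ℤ) ∣ c ^ 2 - c + k := fun c hc ↦ by
      have := hiff.mpr ⟨c, hc⟩
      omega
    rw [h.idealCount_pow_of_not_dvd hp hc, hs, Int.cast_neg, Int.cast_one, neg_one_geom_sum]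
    rcases Nat.even_or_odd n with hn | hn
    · simp [hn.two_dvd, Nat.not_even_iff_odd.mpr hn.add_one]
    · simp [hn.not_two_dvd_nat, hn.add_one]

theorem dedekindZeta_eq {s : ℂ} (hs : 1 < s.re) :
    dedekindZeta K s =
      riemannZeta s * DirichletCharacter.LFunction (legendreChar l ℂ) s := by
  have hcount : toArithmeticFunction (fun n ↦ (idealCount K n : ℂ)) =
      DirichletCharacter.zetaMul (legendreChar l ℂ) := by
    rw [ArithmeticFunction.IsMultiplicative.eq_iff_eq_on_prime_powers _
      isMultiplicative_toArithmeticFunction_idealCount _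
      (DirichletCharacter.isMultiplicative_zetaMul _)]
    intro p n hp
    simp [h.zetaMul_legendreChar_prime_pow hk hp n, toArithmeticFunction, hp.ne_zero]
  rw [← LSeries_zetaMul_eq _ hs, ← hcount]
  exact LSeries_congr (fun hn ↦ by simp [toArithmeticFunction, hn, idealCount]) s

theorem abs_legendreMoment_eq : |legendreMoment l| = l * (classNumber K : ℤ) := by
  have hl : l % 4 = 3 := by omega
  have hl0 : (0 : ℝ) < l := mod_cast (Fact.out : l.Prime).pos
  have hres := dedekindZeta_residue_eq_LFunction_one
    (legendreChar_ne_one l ℂ (by omega)) fun s hs ↦ h.dedekindZeta_eq hk hs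
  have hnorm := norm_LFunction_legendreChar_one l hl
  have hkl : (4 * k - 1 : ℝ) = l := mod_cast hk.symm
  rw [← hres, h.dedekindZeta_residue_eq, hkl, norm_real, Real.norm_of_nonneg (by positivity),
    div_eq_div_iff (by positivity) (by positivity)] at hnorm
  have hfactor : Real.pi * √(l : ℝ) ≠ 0 := by positivity
  have hmoment : |(legendreMoment l : ℝ)| = l * classNumber K :=
    mul_left_cancel₀ hfactor (by linear_combination -hnorm)
  exact mod_cast hmoment

end IsImagQuadraticGenerator

end ClassNumberFormula

section RingOfIntegersSqrtNeg

open NumberField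

theorem exists_eq_add_mul_sqrtNeg_of_mem_adjoin {m : ℕ} {x : ℂ} (hx : x ∈ ℚ⟮sqrtNeg m⟯) :
    ∃ u v : ℚ, x = u + v * sqrtNeg m := by
  have hx' : x ∈ Algebra.adjoin ℚ {sqrtNeg m} := by
    rwa [← adjoin_simple_toSubalgebra_of_isAlgebraic (isIntegral_sqrtNeg m).isAlgebraic]
  clear hx
  induction hx' using Algebra.adjoin_induction with
  | mem x hx => exact ⟨0, 1, by simp [Set.mem_singleton_iff.mp hx]⟩
  | algebraMap r => exact ⟨r, 0, by simp⟩
  | add x y _ _ hx hy =>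
    obtain ⟨u, v, rfl⟩ := hx
    obtain ⟨u', v', rfl⟩ := hy
    exact ⟨u + u', v + v', by push_cast; ring⟩
  | mul x y _ _ hx hy =>
    obtain ⟨u, v, rfl⟩ := hx
    obtain ⟨u', v', rfl⟩ := hy
    refine ⟨u * u' - m * v * v', u * v' + v * u', ?_⟩
    push_cast
    linear_combination (v * v' : ℂ) * sqrtNeg_sq m

theorem exists_intCast_eq_of_isIntegral_of_eq_ratCast {K : Type*} [Field K] [CharZero K] {x : K}
    {q : ℚ} (hx : IsIntegral ℤ x) (h : x = q) : ∃ n : ℤ, x = n := by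
  subst h
  obtain ⟨n, rfl⟩ := IsIntegrallyClosed.isIntegral_iff.mp
    ((isIntegral_algebraMap_iff (algebraMap ℚ K).injective).mp hx)
  exact ⟨n, by simp⟩

theorem conj_sqrtNeg (m : ℕ) : (starRingEnd ℂ) (sqrtNeg m) = -sqrtNeg m := by
  simp [sqrtNeg]

theorem even_sub_of_sq_add_mul_sq_eq {l : ℕ} (hl : l % 4 = 3) {t w n : ℤ}
    (h : t ^ 2 + l * w ^ 2 = 4 * n) : Even (t - w) := by
  obtain ⟨j, hj⟩ : ∃ j : ℤ, (l : ℤ) = 2 * j - 1 := ⟨(l + 1) / 2, by omega⟩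
  have heven : Even (t ^ 2 - w ^ 2) := by
    refine even_iff_two_dvd.mpr ⟨2 * n - j * w ^ 2, ?_⟩
    linear_combination h - w ^ 2 * hj
  simpa [Int.even_sub, Int.even_pow] using heven

theorem exists_eq_add_mul_one_add_sqrtNeg_div_two {l : ℕ} (hlp : l.Prime) (hl : l % 4 = 3)
    {u v : ℚ} (h : IsIntegral ℤ (u + v * sqrtNeg l)) :
    ∃ a b : ℤ, u + v * sqrtNeg l = a + b * ((1 + sqrtNeg l) / 2) := by
  have hconj : IsIntegral ℤ (u - v * sqrtNeg l) := by
    simpa [conj_sqrtNeg, sub_eq_add_neg] using h.map (starRingEnd ℂ).toIntAlgHom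
  have hs := sqrtNeg_sq l
  have hsi : IsIntegral ℤ (sqrtNeg l) := .of_pow two_pos (hs ▸ (isIntegral_natCast l).neg)
  obtain ⟨n, hn⟩ := exists_intCast_eq_of_isIntegral_of_eq_ratCast (q := u ^ 2 + l * v ^ 2)
    (h.mul hconj) (by push_cast; linear_combination -(v : ℂ) ^ 2 * hs)
  obtain ⟨t, ht⟩ := exists_intCast_eq_of_isIntegral_of_eq_ratCast (q := 2 * u)
    (h.add hconj) (by push_cast; ring)
  obtain ⟨c, hc⟩ := exists_intCast_eq_of_isIntegral_of_eq_ratCast (q := 2 * l * v)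
    ((hconj.sub h).mul hsi) (by push_cast; linear_combination -2 * (v : ℂ) * hs)
  obtain ⟨w, hx, -, htw⟩ := exists_eq_add_mul_div_two_of_mul_eq hlp hs hn ht hc
  obtain ⟨m, hm⟩ := even_iff_two_dvd.mp (even_sub_of_sq_add_mul_sq_eq hl htw)
  refine ⟨m, w, ?_⟩
  rw [hx, show t = 2 * m + w by linarith]
  push_cast
  ring

instance numberField_adjoin_sqrtNeg (m : ℕ) : NumberField ℚ⟮sqrtNeg m⟯ where
  to_charZero := charZero_of_injective_algebraMap (algebraMap ℚ ℚ⟮sqrtNeg m⟯).injective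
  to_finiteDimensional := adjoin.finiteDimensional (isIntegral_sqrtNeg m)

theorem exists_isImagQuadraticGenerator {l : ℕ} {k : ℤ} (hlp : l.Prime) (hk1 : 1 < k)
    (hk : (l : ℤ) = 4 * k - 1) : ∃ (θ : 𝓞 ℚ⟮sqrtNeg l⟯) (φ : 𝓞 ℚ⟮sqrtNeg l⟯ →+* ℂ),
      IsImagQuadraticGenerator θ k ∧ φ θ = (1 + sqrtNeg l) / 2 := by
  have hθ : ((1 + sqrtNeg l) / 2) ^ 2 = (1 + sqrtNeg l) / 2 - k := by
    have hkl : (l : ℂ) = 4 * k - 1 := mod_cast congrArg (Int.cast : ℤ → ℂ) hk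
    linear_combination sqrtNeg_sq l / 4 - hkl / 4
  have hmem : (1 + sqrtNeg l) / 2 ∈ ℚ⟮sqrtNeg l⟯ :=
    div_mem (add_mem (one_mem _) (mem_adjoin_simple_self ℚ _)) (ofNat_mem _ 2)
  have hint : IsIntegral ℤ (⟨_, hmem⟩ : ℚ⟮sqrtNeg l⟯) := by
    refine ⟨X ^ 2 - X + C k, by monicity!, Subtype.ext ?_⟩
    simp only [eval₂_add, eval₂_sub, eval₂_pow, eval₂_X, eval₂_C]
    simp [hθ]
  let φ : 𝓞 ℚ⟮sqrtNeg l⟯ →+* ℂ :=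
    (algebraMap ℚ⟮sqrtNeg l⟯ ℂ).comp (algebraMap (𝓞 ℚ⟮sqrtNeg l⟯) ℚ⟮sqrtNeg l⟯)
  have hφ : Function.Injective φ :=
    (algebraMap ℚ⟮sqrtNeg l⟯ ℂ).injective.comp RingOfIntegers.coe_injective
  obtain ⟨θ, hφθ⟩ : ∃ θ : 𝓞 ℚ⟮sqrtNeg l⟯, φ θ = (1 + sqrtNeg l) / 2 := ⟨⟨_, hint⟩, rfl⟩
  refine ⟨θ, φ, ⟨hk1, hφ ?_, fun x ↦ ?_⟩, hφθ⟩
  · rw [map_pow, map_sub, map_intCast, hφθ, hθ]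
  have hx : IsIntegral ℤ (φ x) := (RingOfIntegers.isIntegral x).map φ.toIntAlgHom
  obtain ⟨u, v, huv⟩ : ∃ u v : ℚ, φ x = u + v * sqrtNeg l :=
    exists_eq_add_mul_sqrtNeg_of_mem_adjoin (x : ℚ⟮sqrtNeg l⟯).2
  obtain ⟨a, b, hab⟩ :=
    exists_eq_add_mul_one_add_sqrtNeg_div_two hlp (by omega) (huv ▸ hx)
  refine ⟨a, b, hφ ?_⟩
  rw [map_add, map_mul, map_intCast, map_intCast, hφθ, ← hab, huv]

end RingOfIntegersSqrtNeg

/-! ### The prime above `p` and the comparison of valuations -/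

section PrimeAboveSplit

open NumberField Ideal

theorem exists_pow_classNumber_eq_span {K : Type*} [Field K] [NumberField K] {I : Ideal (𝓞 K)}
    (hI : I ≠ 0) : ∃ α : 𝓞 K, I ^ classNumber K = span {α} := by
  have hclass : ClassGroup.mk0 (⟨I, mem_nonZeroDivisors_of_ne_zero hI⟩ ^ classNumber K) = 1 := by
    rw [map_pow]
    exact pow_card_eq_one
  obtain ⟨α, hα⟩ := (ClassGroup.mk0_eq_one_iff _).mp hclass
  exact ⟨α, by simpa [submodule_span_eq] using hα⟩

namespace IsImagQuadraticGenerator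

variable {K : Type*} [Field K] [NumberField K] {θ : 𝓞 K} {k : ℤ} {p : ℕ}

theorem exists_pow_linearIdeal_eq_span (h : IsImagQuadraticGenerator θ k) (hp : p.Prime)
    (hpk : IsCoprime (p : ℤ) (1 - 4 * k)) {c : ℤ} (hc : (p : ℤ) ∣ c ^ 2 - c + k) :
    ∃ u w : ℤ, linearIdeal θ p c ^ classNumber K = span {(u : 𝓞 K) + w * θ} ∧
      u ^ 2 + u * w + k * w ^ 2 = p ^ classNumber K := by
  have hP := (h.absNorm_linearIdeal hp hpk hc).1
  obtain ⟨α, hα⟩ := exists_pow_classNumber_eq_span (prime_of_absNorm_eq_prime hp hP).ne_zero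
  obtain ⟨u, w, rfl⟩ := h.exists_eq α
  refine ⟨u, w, hα, ?_⟩
  have hnorm := congrArg absNorm hα
  rw [map_pow, hP, absNorm_span_singleton, h.norm_eq] at hnorm
  rw [← Int.natAbs_of_nonneg (h.normForm_nonneg u w), ← hnorm, Nat.cast_pow]

variable {L : Type*} [Field L] (A : ValuationSubring L) (φ : 𝓞 K →+* L)

omit [NumberField K] in
theorem valuation_map_le_one (x : 𝓞 K) : A.valuation (φ x) ≤ 1 :=
  valuation_le_one_of_isIntegral A ((RingOfIntegers.isIntegral x).map φ.toIntAlgHom)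

variable {A}

theorem exists_dvd_and_valuation_map_sub_lt_one (hθ : θ ^ 2 = θ - k)
    (hA : A.valuation (p : L) < 1) (hc : ∃ c : ℤ, (p : ℤ) ∣ c ^ 2 - c + k) :
    ∃ c : ℤ, (p : ℤ) ∣ c ^ 2 - c + k ∧ A.valuation (φ (θ - c)) < 1 := by
  obtain ⟨c, m, hm⟩ := hc
  have hmul : (θ - c) * (θ - (1 - c : ℤ)) = p * (-m : ℤ) := by
    have hm' : (c : 𝓞 K) ^ 2 - c + k = p * m := mod_cast congrArg (Int.cast : ℤ → 𝓞 K) hm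
    push_cast
    linear_combination hθ - hm'
  have hlt : A.valuation (φ (θ - c)) * A.valuation (φ (θ - (1 - c : ℤ))) < 1 := by
    rw [← map_mul, ← map_mul, hmul, map_mul, map_mul, map_natCast]
    exact mul_lt_one_of_lt_of_le hA (valuation_map_le_one A φ _)
  rcases (valuation_map_le_one A φ (θ - c)).lt_or_eq with h1 | h1
  · exact ⟨c, ⟨m, hm⟩, h1⟩
  · exact ⟨1 - c, ⟨m, by linear_combination hm⟩, by rwa [h1, one_mul] at hlt⟩

theorem valuation_map_conj_eq_one (h : IsImagQuadraticGenerator θ k) (hp : p.Prime)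
    (hpk : IsCoprime (p : ℤ) (1 - 4 * k)) {c : ℤ} (hc : (p : ℤ) ∣ c ^ 2 - c + k)
    (hA : A.valuation (p : L) < 1) (hcA : A.valuation (φ (θ - c)) < 1) {n : ℕ} {u w : ℤ}
    (hα : linearIdeal θ p c ^ n = span {(u : 𝓞 K) + w * θ}) :
    A.valuation (φ (u + w - w * θ)) = 1 := by
  by_contra hne
  have hlt : A.valuation ((u + w * (1 - c) : ℤ) : L) < 1 := by
    have hsum : ((u + w * (1 - c) : ℤ) : L) = φ (u + w - w * θ) + φ w * φ (θ - c) := by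
      simp only [map_sub, map_add, map_mul, map_intCast]
      push_cast
      ring
    rw [hsum]
    refine A.valuation.map_add_lt ((valuation_map_le_one A φ _).lt_of_ne hne) ?_
    rw [mul_comm, map_mul]
    exact mul_lt_one_of_lt_of_le hcA (valuation_map_le_one A φ _)
  obtain ⟨m, hm⟩ : (p : ℤ) ∣ u + w * (1 - c) := by
    by_contra hdvd
    exact hlt.ne (valuation_intCast_eq_one_of_not_dvd A hp hA hdvd)
  have hmem : (u : 𝓞 K) + w * θ ∈ linearIdeal θ p (1 - c) := by
    have hm' : (u : 𝓞 K) + w * (1 - c) = p * m := mod_cast congrArg (Int.cast : ℤ → 𝓞 K) hm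
    convert add_mem (mul_mem_left _ (m : 𝓞 K) (natCast_mem_linearIdeal θ p (1 - c)))
      (mul_mem_left _ (w : 𝓞 K) (sub_mem_linearIdeal θ p (1 - c))) using 1
    push_cast
    linear_combination hm'
  obtain ⟨-, hP'⟩ := h.absNorm_linearIdeal hp hpk hc
  have hdvd : linearIdeal θ p (1 - c) ∣ linearIdeal θ p c :=
    (prime_of_absNorm_eq_prime hp hP').dvd_of_dvd_pow
      (n := n) (by rwa [hα, dvd_span_singleton])
  have htop := linearIdeal_sup_eq_top (θ := θ) hpk hc
  rw [sup_eq_right.mpr (le_of_dvd hdvd)] at htop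
  exact hp.one_lt.ne (by rw [← hP', htop, absNorm_top])

theorem exists_normForm_eq_pow_classNumber (h : IsImagQuadraticGenerator θ k) (hp : p.Prime)
    (hpk : IsCoprime (p : ℤ) (1 - 4 * k)) (hc : ∃ c : ℤ, (p : ℤ) ∣ c ^ 2 - c + k)
    (hA : A.valuation (p : L) < 1) :
    ∃ u w : ℤ, u ^ 2 + u * w + k * w ^ 2 = p ^ classNumber K ∧
      A.valuation (φ (u + w - w * θ)) = 1 := by
  obtain ⟨c, hc, hcA⟩ := exists_dvd_and_valuation_map_sub_lt_one φ h.sq_eq hA hc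
  obtain ⟨u, w, hα, hnorm⟩ := h.exists_pow_linearIdeal_eq_span hp hpk hc
  exact ⟨u, w, hnorm, h.valuation_map_conj_eq_one φ hp hpk hc hA hcA hα⟩

end IsImagQuadraticGenerator

end PrimeAboveSplit

section HalfIntegralForm

variable {L : Type*} [Field L] [CharZero L] {s : L} {l : ℕ}

theorem exists_mul_eq_add_mul_div_two (hl : l % 4 = 3) (hs : s ^ 2 = -(l : L))
    {t w a b n m : ℤ} (htw : t ^ 2 + l * w ^ 2 = 4 * n) (hab : a ^ 2 + l * b ^ 2 = 4 * m) :
    ∃ T W : ℤ, T ^ 2 + l * W ^ 2 = 4 * (n * m) ∧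
      (t + w * s) / 2 * ((a + b * s) / 2) = (T + W * s) / 2 ∧
      (t - w * s) / 2 * ((a - b * s) / 2) = (T - W * s) / 2 := by
  obtain ⟨x, hx⟩ := even_iff_two_dvd.mp (even_sub_of_sq_add_mul_sq_eq hl htw)
  obtain ⟨y, hy⟩ := even_iff_two_dvd.mp (even_sub_of_sq_add_mul_sq_eq hl hab)
  obtain rfl : t = w + 2 * x := by linarith
  obtain rfl : a = b + 2 * y := by linarith
  obtain ⟨j, hj⟩ : ∃ j : ℤ, (l : ℤ) = 2 * j + 1 := ⟨l / 2, by omega⟩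
  have hjL : (l : L) = 2 * j + 1 := mod_cast congrArg (Int.cast : ℤ → L) hj
  rw [hjL] at hs
  rw [hj] at htw hab ⊢
  refine ⟨-w * b * j + w * y + x * b + 2 * x * y, w * b + x * b + y * w, ?_, ?_, ?_⟩
  · refine mul_left_cancel₀ (four_ne_zero : (4 : ℤ) ≠ 0) ?_
    linear_combination ((b + 2 * y) ^ 2 + (2 * j + 1) * b ^ 2) * htw + 4 * n * hab
  all_goals
    push_cast
    linear_combination (w * b : L) / 4 * hs

theorem exists_mul_sq_eq_add_mul_div_two (hl : l % 4 = 3) (hs : s ^ 2 = -(l : L))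
    {t w a b n m : ℤ} (htw : t ^ 2 + l * w ^ 2 = 4 * n) (hab : a ^ 2 + l * b ^ 2 = 4 * m) :
    ∃ T W : ℤ, T ^ 2 + l * W ^ 2 = 4 * (n * m ^ 2) ∧
      (t + w * s) / 2 * ((a + b * s) / 2) ^ 2 = (T + W * s) / 2 ∧
      (t - w * s) / 2 * ((a - b * s) / 2) ^ 2 = (T - W * s) / 2 := by
  obtain ⟨T₁, W₁, hT₁, h₁, h₁'⟩ := exists_mul_eq_add_mul_div_two hl hs htw hab
  obtain ⟨T, W, hT, h, h'⟩ := exists_mul_eq_add_mul_div_two hl hs hT₁ hab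
  exact ⟨T, W, by rw [hT, mul_assoc, sq], by rw [sq, ← mul_assoc, h₁, h],
    by rw [sq, ← mul_assoc, h₁', h']⟩

theorem eq_two_mul_unit_and_eq_zero {T W : ℤ} (hl : 4 < l) (h : T ^ 2 + l * W ^ 2 = 4) :
    (∃ ε : ℤˣ, T = 2 * ε) ∧ W = 0 := by
  have hW : W = 0 := by
    by_contra hne
    have : 0 < W ^ 2 := by positivity
    nlinarith [sq_nonneg T]
  subst hW
  refine ⟨?_, rfl⟩
  have hT : (T - 2) * (T + 2) = 0 := by linear_combination h
  rcases mul_eq_zero.mp hT with h | h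
  · exact ⟨1, by simpa using by linarith⟩
  · exact ⟨-1, by simpa using by linarith⟩

variable {p : ℕ} {A : ValuationSubring L}

/- Both valuations being at least `m v(p)` forces `p ^ m` to divide `(T + W s) / 2`, and the
quotient has norm one. -/
theorem exists_eq_unit_mul_pow_of_valuation_le (hp : p.Prime) (hl : 4 < l) (hpl : p.Coprime l)
    (hA : A.valuation (p : L) < 1) {T W : ℤ} {m : ℕ}
    (hTW : T ^ 2 + l * W ^ 2 = 4 * (p : ℤ) ^ (2 * m))
    (h : A.valuation ((T + W * s) / 2) ≤ A.valuation (p : L) ^ m)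
    (h' : A.valuation ((T - W * s) / 2) ≤ A.valuation (p : L) ^ m) :
    ∃ ε : ℤˣ, (T + W * s) / 2 = ((ε : ℤ) : L) * p ^ m := by
  obtain ⟨T, rfl⟩ : (p : ℤ) ^ m ∣ T := by
    refine pow_dvd_of_valuation_intCast_le A hp hA ?_
    convert A.valuation.map_add_le h h' using 2
    ring
  obtain ⟨W, rfl⟩ : (p : ℤ) ^ m ∣ W := by
    have hco : IsCoprime (((p : ℤ) ^ m) ^ 2) (l : ℤ) :=
      ((Nat.isCoprime_iff_coprime.mpr hpl).pow_left).pow_left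
    exact (Int.pow_dvd_pow_iff two_ne_zero).mp
      (hco.dvd_of_dvd_mul_left ⟨4 - T ^ 2, by linear_combination hTW⟩)
  have hpm : ((p : ℤ) ^ m) ^ 2 ≠ 0 := by simp [hp.ne_zero]
  have hTW' : T ^ 2 + l * W ^ 2 = 4 := mul_left_cancel₀ hpm (by linear_combination hTW)
  obtain ⟨⟨ε, rfl⟩, rfl⟩ := eq_two_mul_unit_and_eq_zero hl hTW'
  refine ⟨ε, ?_⟩
  push_cast
  ring

theorem mul_conj_eq_pow (hs : s ^ 2 = -(l : L)) {a b : ℤ} {h : ℕ}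
    (hab : a ^ 2 + l * b ^ 2 = 4 * (p : ℤ) ^ h) :
    (a + b * s) / 2 * ((a - b * s) / 2) = (p : L) ^ h := by
  have hab' : (a : L) ^ 2 + l * b ^ 2 = 4 * p ^ h := mod_cast congrArg (Int.cast : ℤ → L) hab
  linear_combination hab' / 4 - (b : L) ^ 2 / 4 * hs

theorem exists_mul_pow_eq_unit_mul_sq (hp : p.Prime) (hl : l % 4 = 3) (hl3 : 3 < l)
    (hpl : p.Coprime l) (hs : s ^ 2 = -(l : L)) (hA : A.valuation (p : L) < 1)
    {t w a b : ℤ} {g h : ℕ} (htw : t ^ 2 + l * w ^ 2 = 4 * (p : ℤ) ^ (2 * g))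
    (hab : a ^ 2 + l * b ^ 2 = 4 * (p : ℤ) ^ h)
    (hv : A.valuation ((t + w * s) / 2) * A.valuation ((a - b * s) / 2) ^ 2 ≤
      A.valuation (p : L) ^ (g + h))
    (hv' : A.valuation ((t - w * s) / 2) * A.valuation ((a + b * s) / 2) ^ 2 ≤
      A.valuation (p : L) ^ (g + h)) :
    ∃ ε : ℤˣ, (t + w * s) / 2 * p ^ h = ((ε : ℤ) : L) * p ^ g * ((a + b * s) / 2) ^ 2 := by
  obtain ⟨T, W, hTW, hz, hz'⟩ := exists_mul_sq_eq_add_mul_div_two hl hs htw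
    (a := a) (b := -b) (m := (p : ℤ) ^ h) (by rw [← hab]; ring)
  simp only [Int.cast_neg, neg_mul, ← sub_eq_add_neg, sub_neg_eq_add] at hz hz'
  obtain ⟨ε, hε⟩ := exists_eq_unit_mul_pow_of_valuation_le hp (by omega) hpl hA (m := g + h)
    (by rw [hTW]; ring) (by rwa [← hz, map_mul, map_pow]) (by rwa [← hz', map_mul, map_pow])
  have hp0 : (p : L) ^ h ≠ 0 := pow_ne_zero _ (Nat.cast_ne_zero.mpr hp.ne_zero)
  refine ⟨ε, mul_right_cancel₀ hp0 ?_⟩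
  calc (t + w * s) / 2 * p ^ h * p ^ h
      = (t + w * s) / 2 * ((a - b * s) / 2) ^ 2 * ((a + b * s) / 2) ^ 2 := by
        rw [← mul_conj_eq_pow hs hab]; ring
    _ = ((ε : ℤ) : L) * p ^ g * ((a + b * s) / 2) ^ 2 * p ^ h := by
        rw [hz, hε, pow_add]; ring

theorem exists_mul_pow_eq_unit_mul_sq_of_valuation_eq (hp : p.Prime) (hl : l % 4 = 3) (hl3 : 3 < l)
    (hpl : p.Coprime l) (hs : s ^ 2 = -(l : L)) (hA : A.valuation (p : L) < 1)
    {t w a b : ℤ} {e g h : ℕ} (htw : t ^ 2 + l * w ^ 2 = 4 * (p : ℤ) ^ (2 * g))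
    (hab : a ^ 2 + l * b ^ 2 = 4 * (p : ℤ) ^ h) (hb : A.valuation ((a - b * s) / 2) = 1)
    (hv : A.valuation ((t + w * s) / 2) = A.valuation (p : L) ^ e) (he : e = g + h ∨ e + h = g) :
    ∃ (b' : ℤ) (ε : ℤˣ), a ^ 2 + l * b' ^ 2 = 4 * (p : ℤ) ^ h ∧
      (t + w * s) / 2 * p ^ h = ((ε : ℤ) : L) * p ^ g * ((a + b' * s) / 2) ^ 2 := by
  have ha : A.valuation ((a + b * s) / 2) = A.valuation (p : L) ^ h := by
    rw [← map_pow, ← mul_conj_eq_pow hs hab, map_mul, hb, mul_one]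
  have hv' : A.valuation (p : L) ^ e * A.valuation ((t - w * s) / 2) =
      A.valuation (p : L) ^ (2 * g) := by
    rw [← map_pow _ _ (2 * g), ← mul_conj_eq_pow hs htw, map_mul, hv]
  have he0 : A.valuation (p : L) ^ e ≠ 0 :=
    pow_ne_zero _ (valuation_natCast_pos A hp.ne_zero).ne'
  rcases he with he | he
  · obtain ⟨ε, hε⟩ := exists_mul_pow_eq_unit_mul_sq hp hl hl3 hpl hs hA htw hab
      (by rw [hv, hb, he, one_pow, mul_one])
      (by
        refine (mul_left_cancel₀ he0 ?_).le
        rw [← mul_assoc, hv', ha, ← pow_mul, ← pow_add, ← pow_add]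
        congr 1
        omega)
    exact ⟨b, ε, hab, hε⟩
  · have hab' : a ^ 2 + l * (-b) ^ 2 = 4 * (p : ℤ) ^ h := by rwa [neg_sq]
    obtain ⟨ε, hε⟩ := exists_mul_pow_eq_unit_mul_sq hp hl hl3 hpl hs hA htw hab'
      (by
        rw [Int.cast_neg, neg_mul, sub_neg_eq_add, hv, ha, ← pow_mul, ← pow_add, ← he]
        exact (congrArg _ (by omega)).le)
      (by
        refine (mul_left_cancel₀ he0 ?_).le
        rw [Int.cast_neg, neg_mul, ← sub_eq_add_neg, hb, one_pow, mul_one, hv', ← pow_add]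
        congr 1
        omega)
    exact ⟨-b, ε, hab', hε⟩

theorem eq_one_of_valuation_sub_pow_lt_one (hl : l.Prime) (hl2 : l ≠ 2) (hpl : p.Coprime l)
    (hs : s ^ 2 = -(l : L)) (hA : A.valuation (l : L) < 1) {G : L} {ε : ℤˣ} {a b : ℤ} {g h : ℕ}
    (hab : a ^ 2 + l * b ^ 2 = 4 * (p : ℤ) ^ h)
    (hG : G * p ^ h = ((ε : ℤ) : L) * p ^ g * ((a + b * s) / 2) ^ 2)
    (hv : A.valuation (G - p ^ g) < 1) : ε = 1 := by
  refine (Int.units_eq_one_or ε).resolve_right ?_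
  rintro rfl
  have hs1 : A.valuation s < 1 := by
    rw [← pow_lt_one_iff (two_ne_zero), ← map_pow, hs, Valuation.map_neg]
    exact hA
  have hab' : (a : L) ^ 2 + l * b ^ 2 = 4 * p ^ h := mod_cast congrArg (Int.cast : ℤ → L) hab
  have hlt : A.valuation ((8 * (p : ℤ) ^ (g + h) : ℤ) : L) < 1 := by
    have hsplit : ((8 * (p : ℤ) ^ (g + h) : ℤ) : L) = (G - p ^ g) * ((-4 * p ^ h : ℤ) : L) +
        s * (((-2 * p ^ g * b * a : ℤ) : L) + ((-2 * p ^ g * b * b : ℤ) : L) * s) := by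
      push_cast at hG ⊢
      rw [pow_add]
      linear_combination 4 * hG - (p : L) ^ g * hab' + (b : L) ^ 2 * (p : L) ^ g * hs
    rw [hsplit]
    refine A.valuation.map_add_lt ?_ ?_ <;> rw [map_mul]
    · exact mul_lt_one_of_lt_of_le hv (valuation_intCast_le_one A _)
    · refine mul_lt_one_of_lt_of_le hs1 (A.valuation.map_add_le (valuation_intCast_le_one A _) ?_)
      rw [map_mul]
      exact mul_le_one' (valuation_intCast_le_one A _) hs1.le
  refine hlt.ne (valuation_intCast_eq_one_of_isCoprime A (m := l) (by exact_mod_cast hA) ?_)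
  have h8 : IsCoprime (l : ℤ) (2 ^ 3) := mod_cast Nat.isCoprime_iff_coprime.mpr
    (((Nat.coprime_primes hl Nat.prime_two).mpr hl2).pow_right 3)
  exact h8.mul_right (Nat.isCoprime_iff_coprime.mpr hpl.symm).pow_right

end HalfIntegralForm

section ComplexClassNumber

theorem classNumSqrtNeg_eq (m : ℕ) :
    classNumSqrtNeg m = NumberField.classNumber ℚ⟮sqrtNeg m⟯ := rfl

variable {l : ℕ}

theorem exists_four_mul_sub_one_eq (hl : l % 4 = 3) (hl3 : 3 < l) :
    ∃ k : ℤ, 1 < k ∧ (l : ℤ) = 4 * k - 1 :=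
  ⟨(l + 1) / 4, by omega, by omega⟩

variable [Fact l.Prime]

theorem abs_legendreMoment_eq_mul_classNumSqrtNeg (hl : l % 4 = 3) (hl3 : 3 < l) :
    |legendreMoment l| = l * (classNumSqrtNeg l : ℤ) := by
  obtain ⟨k, hk1, hk⟩ := exists_four_mul_sub_one_eq hl hl3
  obtain ⟨θ, -, h, -⟩ := exists_isImagQuadraticGenerator Fact.out hk1 hk
  rw [classNumSqrtNeg_eq, h.abs_legendreMoment_eq hk]

theorem exists_legendreMoment_eq_mul (hl : l % 4 = 3) (hl3 : 3 < l) :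
    ∃ η : ℤˣ, legendreMoment l = l * (η * (classNumSqrtNeg l : ℤ)) := by
  have habs := abs_legendreMoment_eq_mul_classNumSqrtNeg hl hl3
  rcases abs_choice (legendreMoment l) with h | h
  · exact ⟨1, by rw [← h, habs]; simp⟩
  · exact ⟨-1, by rw [← neg_neg (legendreMoment l), ← h, habs]; simp⟩

theorem odd_classNumSqrtNeg (hl : l % 4 = 3) (hl3 : 3 < l) : Odd (classNumSqrtNeg l) := by
  obtain ⟨η, hη⟩ := exists_legendreMoment_eq_mul hl hl3
  exact_mod_cast (Int.odd_mul.mp (odd_of_legendreMoment_eq_mul hl hη)).2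

theorem exists_valuation_eq_pow_classNumSqrtNeg (hl : l % 4 = 3) (hl3 : 3 < l) {p : ℕ}
    (hp : p.Prime) (hpl : p ≠ l) (h1 : legendreSym l p = 1) {A : ValuationSubring ℂ}
    (hA : A.valuation (p : ℂ) < 1) :
    ∃ a b : ℤ, a ^ 2 + l * b ^ 2 = 4 * (p : ℤ) ^ classNumSqrtNeg l ∧
      A.valuation ((a - b * sqrtNeg l) / 2) = 1 := by
  have := Fact.mk hp
  obtain ⟨k, hk1, hk⟩ := exists_four_mul_sub_one_eq hl hl3
  obtain ⟨θ, φ, h, hφ⟩ := exists_isImagQuadraticGenerator Fact.out hk1 hk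
  have hpk : IsCoprime (p : ℤ) (1 - 4 * k) := by
    rw [← neg_sub, ← hk, IsCoprime.neg_right_iff]
    exact Nat.isCoprime_iff_coprime.mpr ((Nat.coprime_primes hp Fact.out).mpr hpl)
  obtain ⟨u, w, hnorm, hv⟩ := h.exists_normForm_eq_pow_classNumber φ hp hpk
    ((legendreSym_eq_one_iff_exists_dvd hpl hk).mp h1) hA
  refine ⟨2 * u + w, w, ?_, ?_⟩
  · rw [hk, classNumSqrtNeg_eq]
    linear_combination 4 * hnorm
  · rw [← hv]
    congr 1
    simp only [map_add, map_sub, map_mul, map_intCast, hφ]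
    push_cast
    ring

theorem modEq_or_neg_modEq_of_sq_add_mul_sq_eq (hl : l ≠ 2) {p e h : ℕ} (h1 : legendreSym l p = 1)
    (he : 4 * e = l - 1 + 2 * h) {a b : ℤ} (hab : a ^ 2 + l * b ^ 2 = 4 * (p : ℤ) ^ h) :
    a ≡ -2 * (p : ℤ) ^ e [ZMOD l] ∨ -a ≡ -2 * (p : ℤ) ^ e [ZMOD l] := by
  have hodd := (Fact.out : l.Prime).eq_two_or_odd.resolve_left hl
  have heuler : (p : ZMod l) ^ (l / 2) = 1 := by
    have := legendreSym.eq_pow l p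
    rw [h1] at this
    exact_mod_cast this.symm
  have hsq : ((p : ZMod l) ^ e) ^ 2 = (p : ZMod l) ^ h := by
    rw [← pow_mul, show e * 2 = l / 2 + h by omega, pow_add, heuler, one_mul]
  have ha : (a : ZMod l) ^ 2 = 4 * (p : ZMod l) ^ h := by
    simpa using congrArg (Int.cast : ℤ → ZMod l) hab
  have hprod : ((a : ZMod l) + 2 * (p : ZMod l) ^ e) * (-a + 2 * (p : ZMod l) ^ e) = 0 := by
    linear_combination 4 * hsq - ha
  simp only [← ZMod.intCast_eq_intCast_iff]
  push_cast
  rcases mul_eq_zero.mp hprod with h | h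
  · exact .inl (by linear_combination h)
  · exact .inr (by linear_combination h)

end ComplexClassNumber

/-! ### Case B2 -/

section CaseB2

/-- The arithmetic hypotheses of Case B2: `N = l ^ r * q ^ s` with `l ≡ 3 (mod 4)` and `l > 3`, and
`p` has order `φ(l ^ r) / 2` modulo `l ^ r`, order `φ(q ^ s)` modulo `q ^ s` and order `φ(N) / 2`
modulo `N`. The last condition is written without division. -/
structure IsCaseB2 (p l q r s : ℕ) : Prop where
  prime_right : q.Prime
  left_ne_right : l ≠ q
  left_mod_four : l % 4 = 3
  three_lt_left : 3 < l
  right_ne_two : q ≠ 2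
  left_exponent_ne_zero : r ≠ 0
  right_exponent_ne_zero : s ≠ 0
  coprime : p.Coprime (l ^ r * q ^ s)
  orderOf_left : orderOf (p : ZMod (l ^ r)) = (l ^ r).totient / 2
  orderOf_right : orderOf (p : ZMod (q ^ s)) = (q ^ s).totient
  two_mul_orderOf : 2 * orderOf (p : ZMod (l ^ r * q ^ s)) = (l ^ r * q ^ s).totient

namespace IsCaseB2

variable {p l q r s : ℕ}

theorem left_ne_two (H : IsCaseB2 p l q r s) : l ≠ 2 := by
  rintro rfl
  exact absurd H.three_lt_left (by decide)

theorem dvd_modulus (H : IsCaseB2 p l q r s) : l ∣ l ^ r * q ^ s :=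
  (dvd_pow_self l H.left_exponent_ne_zero).mul_right _

theorem coprime_left (H : IsCaseB2 p l q r s) : p.Coprime l :=
  H.coprime.coprime_dvd_right H.dvd_modulus

variable [Fact l.Prime]

theorem two_lt_modulus (H : IsCaseB2 p l q r s) : 2 < l ^ r * q ^ s := by
  have hpos : 0 < l ^ r * q ^ s :=
    Nat.mul_pos (pow_pos (Fact.out : l.Prime).pos r) (pow_pos H.prime_right.pos s)
  have := Nat.le_of_dvd hpos H.dvd_modulus
  have := H.three_lt_left
  omega

theorem legendreSym_eq_one (H : IsCaseB2 p l q r s) : legendreSym l p = 1 :=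
  legendreSym_eq_one_of_orderOf_eq H.left_mod_four H.left_exponent_ne_zero H.orderOf_left

theorem legendreSym_right (H : IsCaseB2 p l q r s) :
    legendreSym l q = 1 ∨ legendreSym l q = -1 := by
  refine legendreSym.eq_one_or_neg_one l ?_
  rw [Int.cast_natCast, Ne, ZMod.natCast_eq_zero_iff, Nat.prime_dvd_prime_iff_eq Fact.out
    H.prime_right]
  exact H.left_ne_right

theorem exists_orderOf_eq_two_mul (H : IsCaseB2 p l q r s) :
    ∃ g, orderOf (p : ZMod (l ^ r * q ^ s)) = 2 * g ∧ q ^ s ∣ p ^ g + 1 := by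
  obtain ⟨g, hg, hdvd⟩ := exists_two_mul_eq_and_pow_dvd_pow_add_one H.prime_right H.left_ne_right
    H.left_mod_four H.right_ne_two H.left_exponent_ne_zero H.right_exponent_ne_zero H.orderOf_right
  have := H.two_mul_orderOf
  exact ⟨g, by omega, hdvd⟩

theorem exists_two_mul_sum_eq (H : IsCaseB2 p l q r s) {c g : ℕ} (hc : c.Coprime (l ^ r * q ^ s))
    (hg : orderOf (p : ZMod (l ^ r * q ^ s)) = 2 * g) :
    ∃ ε : ℤˣ, 2 * ∑ i ∈ Finset.range (2 * g), ((p ^ i * c % (l ^ r * q ^ s) : ℕ) : ℤ) =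
      (l ^ r * q ^ s : ℕ) * (2 * g + ε * (classNumSqrtNeg l * (1 - legendreSym l q))) := by
  have hl : l.Prime := Fact.out
  have hN := H.two_lt_modulus
  have : NeZero (l ^ r * q ^ s) := ⟨by omega⟩
  have hlc : ((c : ℤ) : ZMod l) ≠ 0 := by
    rw [Int.cast_natCast, Ne, ZMod.natCast_eq_zero_iff, ← hl.coprime_iff_not_dvd]
    exact (hc.coprime_dvd_right H.dvd_modulus).symm
  obtain ⟨δ, hδ⟩ : ∃ δ : ℤˣ, legendreSym l c = δ :=
    (legendreSym.eq_one_or_neg_one l hlc).elim (⟨1, ·⟩) (⟨-1, ·⟩)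
  obtain ⟨η, hη⟩ := exists_legendreMoment_eq_mul H.left_mod_four H.three_lt_left
  have hcoset := two_mul_sum_range_orderOf_pow_mul_mod H.left_mod_four H.dvd_modulus H.coprime
    H.two_mul_orderOf H.legendreSym_eq_one (by omega) hc
  have hmoment := mul_sum_filter_coprime_legendreSym_mul H.left_ne_two H.prime_right
    H.left_exponent_ne_zero H.right_exponent_ne_zero
  rw [hη] at hmoment
  rw [hg, hδ] at hcoset
  refine ⟨δ * η, mul_left_cancel₀ (Int.natCast_ne_zero.mpr hl.ne_zero : (l : ℤ) ≠ 0) ?_⟩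
  rw [hcoset]
  push_cast at hmoment ⊢
  linear_combination (δ : ℤ) * hmoment

variable [Fact p.Prime]

theorem coprime_sub_one (H : IsCaseB2 p l q r s) : (l ^ r * q ^ s).Coprime (p - 1) := by
  have hl : l.Prime := Fact.out
  have hp0 : p ≠ 0 := (Fact.out : p.Prime).ne_zero
  have hr := H.left_exponent_ne_zero
  have hs := H.right_exponent_ne_zero
  have hl4 := H.left_mod_four
  have hl3 := H.three_lt_left
  have hq2 := H.right_ne_two
  have hq := H.prime_right.two_le
  refine Nat.Coprime.mul_left
    (coprime_sub_one_of_orderOf_eq hl hp0 hr (c := (l - 1) / 2) (by omega) ?_)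
    (coprime_sub_one_of_orderOf_eq H.prime_right hp0 hs (c := q - 1) (by omega) ?_)
  · rw [H.orderOf_left, Nat.totient_prime_pow hl hr.bot_lt, Nat.mul_div_assoc _ (by omega)]
  · rw [H.orderOf_right, Nat.totient_prime_pow H.prime_right hs.bot_lt]

variable {F : Type*} [Field F] [Fintype F] [Algebra (ZMod p) F] {χ : MulChar F ℂ} {g : ℕ}
  {A : ValuationSubring ℂ}

theorem exists_valuation_gaussSum_eq_pow (H : IsCaseB2 p l q r s)
    (hg : orderOf (p : ZMod (l ^ r * q ^ s)) = 2 * g) (hcard : Fintype.card F = p ^ (2 * g))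
    (hχ : orderOf χ = l ^ r * q ^ s) (hA : A.valuation (p : ℂ) < 1) :
    ∃ e : ℕ, A.valuation (gaussSum χ (traceAddChar p F)) = A.valuation (p : ℂ) ^ e ∧
      2 * |(e : ℤ) - g| = classNumSqrtNeg l * (1 - legendreSym l q) := by
  have hN := H.two_lt_modulus
  obtain ⟨c, hc, hv⟩ := exists_coprime_valuation_gaussSum_pow_eq hA (hχ ▸ hN) hcard
  rw [hχ] at hc hv
  obtain ⟨ε, hsum⟩ := H.exists_two_mul_sum_eq hc hg
  obtain ⟨m, hm0, hm⟩ : ∃ m : ℤ, 0 ≤ m ∧ 1 - legendreSym l q = 2 * m :=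
    H.legendreSym_right.elim (fun h ↦ ⟨0, le_rfl, by rw [h]; rfl⟩)
      (fun h ↦ ⟨1, one_pos.le, by rw [h]; rfl⟩)
  set T := ∑ i ∈ Finset.range (2 * g), p ^ i * c % (l ^ r * q ^ s)
  have hT : (T : ℤ) = (l ^ r * q ^ s : ℕ) * (g + ε * (classNumSqrtNeg l * m)) := by
    rw [hm, ← Nat.cast_sum] at hsum
    linarith
  obtain ⟨e, he⟩ : ∃ e : ℕ, (e : ℤ) = g + ε * (classNumSqrtNeg l * m) :=
    CanLift.prf _ (nonneg_of_mul_nonneg_right (hT ▸ T.cast_nonneg) (by omega))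
  refine ⟨e, (pow_left_inj₀ zero_le zero_le (by omega : l ^ r * q ^ s ≠ 0)).mp ?_, ?_⟩
  · rw [hv, ← pow_mul]
    congr 1
    rw [← he] at hT
    exact_mod_cast hT.trans (mul_comm _ _)
  · rw [he, hm, add_sub_cancel_left, abs_mul, Int.isUnit_iff_abs_eq.mp ε.isUnit, one_mul,
      abs_of_nonneg (by positivity)]
    ring

theorem exists_gaussSum_mul_pow_eq (H : IsCaseB2 p l q r s)
    (hg : orderOf (p : ZMod (l ^ r * q ^ s)) = 2 * g) (hcard : Fintype.card F = p ^ (2 * g))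
    (hχ : orderOf χ = l ^ r * q ^ s) (hA : A.valuation (p : ℂ) < 1) {a b : ℤ} {e h : ℕ}
    (hab : a ^ 2 + l * b ^ 2 = 4 * (p : ℤ) ^ h)
    (hb : A.valuation ((a - b * sqrtNeg l) / 2) = 1)
    (hv : A.valuation (gaussSum χ (traceAddChar p F)) = A.valuation (p : ℂ) ^ e)
    (he : e = g + h ∨ e + h = g) :
    ∃ b' : ℤ, a ^ 2 + l * b' ^ 2 = 4 * (p : ℤ) ^ h ∧
      gaussSum χ (traceAddChar p F) * p ^ h = p ^ g * ((a + b' * sqrtNeg l) / 2) ^ 2 := by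
  have hl : l.Prime := Fact.out
  have hl4 := H.left_mod_four
  have hN := H.two_lt_modulus
  have : NeZero (l ^ r * q ^ s) := ⟨by omega⟩
  have hχp (x : ZMod p) (hx : x ≠ 0) : χ (algebraMap (ZMod p) F x) = 1 :=
    mulChar_algebraMap_eq_one (hχ ▸ pow_orderOf_eq_one χ) H.coprime_sub_one hx
  obtain ⟨t, w, hG, -, htw⟩ := exists_gaussSum_eq_add_mul_sqrtNeg_div_two hl4 H.dvd_modulus
    H.coprime H.two_mul_orderOf H.legendreSym_eq_one hcard hχ hχp
  obtain ⟨b', ε, hab', hε⟩ := exists_mul_pow_eq_unit_mul_sq_of_valuation_eq Fact.out hl4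
    H.three_lt_left H.coprime_left (sqrtNeg_sq l) hA htw hab hb (hG ▸ hv) he
  rw [← hG] at hε
  obtain ⟨A', hA'⟩ := exists_valuationSubring_natCast_lt_one (K := ℂ) hl.ne_one
  obtain ⟨g', hg', hdvd⟩ := H.exists_orderOf_eq_two_mul
  obtain rfl : g = g' := by omega
  have hsign := valuation_gaussSum_sub_pow_lt_one hl H.prime_right H.left_ne_right H.right_ne_two
    H.right_exponent_ne_zero hdvd hcard hχ hA'
  obtain rfl := eq_one_of_valuation_sub_pow_lt_one hl H.left_ne_two H.coprime_left (sqrtNeg_sq l)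
    hA' hab' hε hsign
  exact ⟨b', hab', by simpa using hε⟩

theorem gaussSum_eq_pow_of_legendreSym_eq_one (H : IsCaseB2 p l q r s)
    (hg : orderOf (p : ZMod (l ^ r * q ^ s)) = 2 * g) (hcard : Fintype.card F = p ^ (2 * g))
    (hχ : orderOf χ = l ^ r * q ^ s) (hq : legendreSym l q = 1) :
    gaussSum χ (traceAddChar p F) = p ^ g := by
  obtain ⟨A, hA⟩ := exists_valuationSubring_natCast_lt_one (K := ℂ) (Fact.out : p.Prime).ne_one
  obtain ⟨e, hv, he⟩ := H.exists_valuation_gaussSum_eq_pow hg hcard hχ hA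
  obtain rfl : e = g := by
    rw [hq, sub_self, mul_zero] at he
    rcases abs_choice ((e : ℤ) - g) with h | h <;> omega
  obtain ⟨b, hb, hG⟩ := H.exists_gaussSum_mul_pow_eq hg hcard hχ hA (a := 2) (b := 0) (h := 0)
    (by norm_num) (by simp) hv (.inl rfl)
  obtain ⟨-, rfl⟩ := eq_two_mul_unit_and_eq_zero
    (by have := H.left_mod_four; have := H.three_lt_left; omega) (hb.trans (by norm_num))
  simpa using hG

theorem exists_gaussSum_eq_of_legendreSym_eq_neg_one (H : IsCaseB2 p l q r s)
    (hg : orderOf (p : ZMod (l ^ r * q ^ s)) = 2 * g) (hcard : Fintype.card F = p ^ (2 * g))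
    (hχ : orderOf χ = l ^ r * q ^ s) (hq : legendreSym l q = -1) :
    ∃ a b : ℤ, a ^ 2 + l * b ^ 2 = 4 * (p : ℤ) ^ classNumSqrtNeg l ∧
      a ≡ -2 * (p : ℤ) ^ ((l - 1 + 2 * classNumSqrtNeg l) / 4) [ZMOD l] ∧
      gaussSum χ (traceAddChar p F) =
        (p : ℂ) ^ ((g : ℤ) - classNumSqrtNeg l) * ((a + b * sqrtNeg l) / 2) ^ 2 := by
  have hp : p.Prime := Fact.out
  have hl4 := H.left_mod_four
  have hl3 := H.three_lt_left
  have hp0 : (p : ℂ) ≠ 0 := Nat.cast_ne_zero.mpr hp.ne_zero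
  obtain ⟨A, hA⟩ := exists_valuationSubring_natCast_lt_one (K := ℂ) hp.ne_one
  obtain ⟨e, hv, he⟩ := H.exists_valuation_gaussSum_eq_pow hg hcard hχ hA
  obtain ⟨a, b, hab, hb⟩ := exists_valuation_eq_pow_classNumSqrtNeg hl4 hl3 hp
    ((Nat.coprime_primes hp Fact.out).mp H.coprime_left) H.legendreSym_eq_one hA
  obtain ⟨b', hab', hG⟩ := H.exists_gaussSum_mul_pow_eq hg hcard hχ hA hab hb hv (by
    rw [hq] at he
    rcases abs_choice ((e : ℤ) - g) with h | h <;> omega)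
  have hG' : gaussSum χ (traceAddChar p F) =
      (p : ℂ) ^ ((g : ℤ) - classNumSqrtNeg l) * ((a + b' * sqrtNeg l) / 2) ^ 2 := by
    rw [zpow_sub₀ hp0, zpow_natCast, zpow_natCast, div_mul_eq_mul_div, ← hG,
      mul_div_cancel_right₀ _ (pow_ne_zero _ hp0)]
  have h4 : 4 * ((l - 1 + 2 * classNumSqrtNeg l) / 4) = l - 1 + 2 * classNumSqrtNeg l := by
    have := odd_classNumSqrtNeg hl4 hl3
    rw [Nat.odd_iff] at this
    omega
  rcases modEq_or_neg_modEq_of_sq_add_mul_sq_eq H.left_ne_two H.legendreSym_eq_one h4 hab' with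
    h | h
  · exact ⟨a, b', hab', h, hG'⟩
  · refine ⟨-a, -b', by rwa [neg_sq, neg_sq], h, hG'.trans ?_⟩
    push_cast
    ring

end IsCaseB2

end CaseB2

theorem statement5 (p l1 l2 r1 r2 N f : ℕ) (hp : p.Prime)
    (hl1 : l1.Prime) (hl2 : l2.Prime) (hne : l1 ≠ l2)
    (hl1m : l1 % 4 = 3) (hl1gt : 3 < l1) (hl2odd : l2 % 2 = 1)
    (hr1 : 1 ≤ r1) (hr2 : 1 ≤ r2) (hN : N = l1 ^ r1 * l2 ^ r2) (hNp : Nat.gcd N p = 1)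
    (hord1 : orderOf (p : ZMod (l1 ^ r1)) = Nat.totient (l1 ^ r1) / 2)
    (hord2 : orderOf (p : ZMod (l2 ^ r2)) = Nat.totient (l2 ^ r2))
    (hf : orderOf (p : ZMod N) = f) (hind : f = Nat.totient N / 2)
    (F : Type) [Field F] [Fintype F] [Algebra (ZMod p) F]
    (hcard : Fintype.card F = p ^ f)
    (χ : MulChar F ℂ) (hχord : orderOf χ = N) :
    (@legendreSym l1 ⟨hl1⟩ (l2 : ℤ) = 1 →
      gaussSumN p χ 1 = (p : ℂ) ^ ((f : ℤ) / 2)) ∧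
    (@legendreSym l1 ⟨hl1⟩ (l2 : ℤ) = -1 →
      ∃ a b : ℤ,
        4 * (p : ℤ) ^ classNumSqrtNeg l1 = a ^ 2 + (l1 : ℤ) * b ^ 2 ∧
        a ≡ -2 * (p : ℤ) ^ ((l1 - 1 + 2 * classNumSqrtNeg l1) / 4) [ZMOD (l1 : ℤ)] ∧
        gaussSumN p χ 1 =
          (p : ℂ) ^ ((f : ℤ) / 2 - (classNumSqrtNeg l1 : ℤ)) *
            (((a : ℂ) + (b : ℂ) * sqrtNeg l1) / 2) ^ 2) := by
  have := Fact.mk hp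
  have := Fact.mk hl1
  subst hN
  have htot : Even (l1 ^ r1 * l2 ^ r2).totient := by
    rw [Nat.totient_mul (((Nat.coprime_primes hl1 hl2).mpr hne).pow r1 r2)]
    exact (Nat.totient_even (hl1gt.trans_le' (by omega) |>.trans_le
      (Nat.le_self_pow (by omega) l1))).mul_right _
  have H : IsCaseB2 p l1 l2 r1 r2 := ⟨hl2, hne, hl1m, hl1gt, by omega, by omega, by omega,
    (Nat.Coprime.symm hNp), hord1, hord2, by rw [hf, hind, Nat.two_mul_div_two_of_even htot]⟩
  obtain ⟨g, hg, -⟩ := H.exists_orderOf_eq_two_mul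
  obtain rfl : f = 2 * g := hf.symm.trans hg
  have hg2 : ((2 * g : ℕ) : ℤ) / 2 = g := by omega
  rw [gaussSumN_eq_gaussSum, pow_one, hg2, zpow_natCast]
  refine ⟨H.gaussSum_eq_pow_of_legendreSym_eq_one hg hcard hχord, fun h ↦ ?_⟩
  obtain ⟨a, b, hab, hmod, hG⟩ :=
    H.exists_gaussSum_eq_of_legendreSym_eq_neg_one hg hcard hχord h
  exact ⟨a, b, hab.symm, hmod, hG⟩
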